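/- Let q = p^f be a power of an odd prime p, let n ≥ 7, let Q be a nondegenerate quadratic form on V = F_q^n, and let GO(V,Q) be the group of similitudes of Q; suppose GO(V,Q) is not solvable. Let π be a set of primes with 2 ∈ π, 3 ∈ π and p ∉ π, and let H be a solvable Hall π-subgroup of GO(V,Q). Set G = H·(GO(V,Q) ∩ SL_n(F_q)). Then there exist x, y, z ∈ G such that H ∩ H^x ∩ H^y ∩ H^z is contained in the center of GO(V,Q), i.e. consists of scalar matrices. -/

import Mathlib

open Matrix Pointwise

/-- `H^x = x⁻¹ H x`. -/
def conjBy {G : Type*} [Group G] (H : Subgroup G) (x : G) : Subgroup G :=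
  Subgroup.map ((MulAut.conj x⁻¹).toMonoidHom) H

/-- Hall π-subgroup of the whole group. -/
def IsHallSubgroup {G : Type*} [Group G] (π : Set ℕ) (H : Subgroup G) : Prop :=
  (∀ r : ℕ, r.Prime → r ∣ Nat.card H → r ∈ π) ∧ ∀ r ∈ π, ¬ r ∣ H.index

/-- Hall π-subgroup of the subgroup `K`. -/
def IsHallSubgroupIn {G : Type*} [Group G] (π : Set ℕ) (K H : Subgroup G) : Prop :=
  H ≤ K ∧ (∀ r : ℕ, r.Prime → r ∣ Nat.card H → r ∈ π) ∧ ∀ r ∈ π, ¬ r ∣ H.relIndex K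

/-- The subgroup `SL_n` of `GL_n`. -/
def SLsub (n : ℕ) (F : Type*) [Field F] : Subgroup (GL (Fin n) F) where
  carrier := {g | Matrix.det (g : Matrix (Fin n) (Fin n) F) = 1}
  one_mem' := by simp
  mul_mem' := by
    intro a b ha hb
    simp only [Set.mem_setOf_eq, Units.val_mul, Matrix.det_mul] at *
    rw [ha, hb, one_mul]
  inv_mem' := by
    intro g hg
    simp only [Set.mem_setOf_eq] at *
    have h1 : ((g⁻¹ : GL (Fin n) F) : Matrix (Fin n) (Fin n) F) *
        (g : Matrix (Fin n) (Fin n) F) = 1 := g.inv_mul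
    have := congrArg Matrix.det h1
    rw [Matrix.det_mul, Matrix.det_one, hg, mul_one] at this
    exact this

/-- The group of similitudes of the bilinear form `B` (acting on row vectors). -/
def similitudeGroup {n : ℕ} {F : Type*} [Field F]
    (B : (Fin n → F) → (Fin n → F) → F) : Subgroup (GL (Fin n) F) where
  carrier := {g | ∃ c : Fˣ, ∀ u v : Fin n → F,
    B (Matrix.vecMul u (g : Matrix (Fin n) (Fin n) F))
      (Matrix.vecMul v (g : Matrix (Fin n) (Fin n) F)) = (c : F) * B u v}
  one_mem' := ⟨1, by simp⟩
  mul_mem' := by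
    rintro a b ⟨c, hc⟩ ⟨d, hd⟩
    refine ⟨c * d, fun u v => ?_⟩
    simp only [Units.val_mul, ← Matrix.vecMul_vecMul, hd, hc]
    ring
  inv_mem' := by
    rintro g ⟨c, hc⟩
    refine ⟨c⁻¹, fun u v => ?_⟩
    have h1 : ∀ w : Fin n → F, Matrix.vecMul
        (Matrix.vecMul w ((g⁻¹ : GL (Fin n) F) : Matrix (Fin n) (Fin n) F))
        (g : Matrix (Fin n) (Fin n) F) = w := by
      intro w
      rw [Matrix.vecMul_vecMul, g.inv_mul, Matrix.vecMul_one]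
    have h2 := hc (Matrix.vecMul u ((g⁻¹ : GL (Fin n) F) : Matrix (Fin n) (Fin n) F))
      (Matrix.vecMul v ((g⁻¹ : GL (Fin n) F) : Matrix (Fin n) (Fin n) F))
    rw [h1, h1] at h2
    rw [h2, Units.val_inv_eq_inv_val, inv_mul_cancel_left₀ (by exact_mod_cast c.ne_zero)]

/-- The isometry group of the bilinear form `B` (acting on row vectors). -/
def isometryGroup {n : ℕ} {F : Type*} [Field F]
    (B : (Fin n → F) → (Fin n → F) → F) : Subgroup (GL (Fin n) F) where
  carrier := {g | ∀ u v : Fin n → F,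
    B (Matrix.vecMul u (g : Matrix (Fin n) (Fin n) F))
      (Matrix.vecMul v (g : Matrix (Fin n) (Fin n) F)) = B u v}
  one_mem' := by simp
  mul_mem' := by
    intro a b ha hb u v
    simp only [Set.mem_setOf_eq] at ha hb
    simp only [Units.val_mul, ← Matrix.vecMul_vecMul]
    rw [hb, ha]
  inv_mem' := by
    intro g hg u v
    have h1 : ∀ w : Fin n → F, Matrix.vecMul
        (Matrix.vecMul w ((g⁻¹ : GL (Fin n) F) : Matrix (Fin n) (Fin n) F))
        (g : Matrix (Fin n) (Fin n) F) = w := by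
      intro w
      rw [Matrix.vecMul_vecMul, g.inv_mul, Matrix.vecMul_one]
    have h2 := hg (Matrix.vecMul u ((g⁻¹ : GL (Fin n) F) : Matrix (Fin n) (Fin n) F))
      (Matrix.vecMul v ((g⁻¹ : GL (Fin n) F) : Matrix (Fin n) (Fin n) F))
    rw [h1, h1] at h2
    exact h2.symm

/-- The group of similitudes of the quadratic form `Q` (acting on row vectors). -/
def qSimilitudeGroup {n : ℕ} {F : Type*} [Field F]
    (Q : (Fin n → F) → F) : Subgroup (GL (Fin n) F) where
  carrier := {g | ∃ c : Fˣ, ∀ v : Fin n → F,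
    Q (Matrix.vecMul v (g : Matrix (Fin n) (Fin n) F)) = (c : F) * Q v}
  one_mem' := ⟨1, by simp⟩
  mul_mem' := by
    rintro a b ⟨c, hc⟩ ⟨d, hd⟩
    refine ⟨c * d, fun v => ?_⟩
    simp only [Units.val_mul, ← Matrix.vecMul_vecMul, hd, hc]
    ring
  inv_mem' := by
    rintro g ⟨c, hc⟩
    refine ⟨c⁻¹, fun v => ?_⟩
    have h1 : ∀ w : Fin n → F, Matrix.vecMul
        (Matrix.vecMul w ((g⁻¹ : GL (Fin n) F) : Matrix (Fin n) (Fin n) F))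
        (g : Matrix (Fin n) (Fin n) F) = w := by
      intro w
      rw [Matrix.vecMul_vecMul, g.inv_mul, Matrix.vecMul_one]
    have h2 := hc (Matrix.vecMul v ((g⁻¹ : GL (Fin n) F) : Matrix (Fin n) (Fin n) F))
    rw [h1] at h2
    rw [h2, Units.val_inv_eq_inv_val, inv_mul_cancel_left₀ (by exact_mod_cast c.ne_zero)]

/-- The unitary group `GU_n` with respect to the field automorphism `φ`. -/
def GUgrp (n : ℕ) {K : Type*} [Field K] (φ : K →+* K) : Subgroup (GL (Fin n) K) where
  carrier := {g | ((g : Matrix (Fin n) (Fin n) K).map φ)ᵀ * (g : Matrix (Fin n) (Fin n) K) = 1}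
  one_mem' := by
    simp [Matrix.map_one φ φ.map_zero φ.map_one]
  mul_mem' := by
    intro a b ha hb
    simp only [Set.mem_setOf_eq, Units.val_mul, Matrix.map_mul, Matrix.transpose_mul] at *
    calc ((b : Matrix (Fin n) (Fin n) K).map φ)ᵀ * ((a : Matrix (Fin n) (Fin n) K).map φ)ᵀ *
          ((a : Matrix (Fin n) (Fin n) K) * (b : Matrix (Fin n) (Fin n) K))
        = ((b : Matrix (Fin n) (Fin n) K).map φ)ᵀ *
          (((a : Matrix (Fin n) (Fin n) K).map φ)ᵀ * (a : Matrix (Fin n) (Fin n) K)) *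
          (b : Matrix (Fin n) (Fin n) K) := by noncomm_ring
      _ = 1 := by rw [ha, mul_one, hb]
  inv_mem' := by
    intro g hg
    simp only [Set.mem_setOf_eq] at *
    have hcomm : (g : Matrix (Fin n) (Fin n) K) * ((g : Matrix (Fin n) (Fin n) K).map φ)ᵀ = 1 :=
      mul_eq_one_comm.mp hg
    have h1 : ((g : Matrix (Fin n) (Fin n) K) * ((g⁻¹ : GL (Fin n) K) : Matrix (Fin n) (Fin n) K)).map φ = 1 := by
      rw [g.mul_inv]
      exact Matrix.map_one φ φ.map_zero φ.map_one
    rw [Matrix.map_mul] at h1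
    have h2 := congrArg Matrix.transpose h1
    rw [Matrix.transpose_mul, Matrix.transpose_one] at h2
    calc (((g⁻¹ : GL (Fin n) K) : Matrix (Fin n) (Fin n) K).map φ)ᵀ *
          ((g⁻¹ : GL (Fin n) K) : Matrix (Fin n) (Fin n) K)
        = (((g⁻¹ : GL (Fin n) K) : Matrix (Fin n) (Fin n) K).map φ)ᵀ *
          (((g : Matrix (Fin n) (Fin n) K).map φ)ᵀ * (g : Matrix (Fin n) (Fin n) K)) *
          ((g⁻¹ : GL (Fin n) K) : Matrix (Fin n) (Fin n) K) := by rw [hg, mul_one]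
      _ = ((((g⁻¹ : GL (Fin n) K) : Matrix (Fin n) (Fin n) K).map φ)ᵀ *
          ((g : Matrix (Fin n) (Fin n) K).map φ)ᵀ) *
          ((g : Matrix (Fin n) (Fin n) K) * ((g⁻¹ : GL (Fin n) K) : Matrix (Fin n) (Fin n) K)) := by
            noncomm_ring
      _ = 1 := by rw [h2, g.mul_inv, mul_one]

/-!
Call an anisotropic vector a root of `H` if its reflection lies in `H`. For an orthogonal basis
whose members have at most two norms, the similitudes permuting the basis up to sign form a
`2`-group once the permutations are restricted to a pairing of basis vectors of equal norm. By
Sylow's theorem `H` contains a conjugate of this group, so some orthogonal basis consists of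
roots, and the sums of paired basis vectors are roots as well.

The roots split `V` into irreducible orthogonal blocks, which `H` permutes. Every block has
dimension at most `4`: in larger dimension, solvability of the group generated by the reflections
produces two roots whose reflections have a product commuting with its conjugates, hence an orbit
of at least five pairwise orthogonal lines on which the reflections act as the full symmetric
group. Merging small blocks leaves blocks of dimension `2` to `4` and at most one more of
dimension `1`.

To separate the blocks, choose an anisotropic vector in each of them, group the blocks into
clusters, and let `x` be the product of the reflections in the sums of the chosen vectors over the
clusters. If `g` and `x g x⁻¹` both lie in `H`, they permute the blocks, and comparing components
shows that `g` respects the clusters and multiplies the vectors chosen in a cluster by a common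
factor. Two groupings whose clusters overlap like the links of a chain, together with the single
cluster of all blocks, force `g` to fix every block, and the three vectors chosen in a block are
rigid enough to make `g` a scalar. The involutions `x` have determinant `±1`, which is
corrected by a reflection in `H`.
-/

namespace SimilitudeBase

open Module

section Reflection

variable {F : Type*} [Field F] {V : Type*} [AddCommGroup V] [Module F V]
variable {B : LinearMap.BilinForm F V} {u v x : V}

variable (B) in
/-- The reflection `x ↦ x - (2 B(u, x) / B(u, u)) u` in the hyperplane orthogonal to `u`. Because
`2 / 0 = 0`, it is the identity when `u` is isotropic. -/
noncomputable def reflection (u : V) : V ≃ₗ[F] V :=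
  LinearEquiv.ofInvolutive (preReflection u ((2 / B u u) • B u)) <| by
    by_cases hu : B u u = 0
    · intro x
      simp [preReflection_apply, hu]
    · exact involutive_preReflection (by simp [hu])

theorem reflection_apply (u x : V) : reflection B u x = x - (2 / B u u * B u x) • u := rfl

theorem reflection_apply_reflection_apply (u x : V) :
    reflection B u (reflection B u x) = x :=
  (reflection B u).symm_apply_apply x

theorem reflection_inv (u : V) : (reflection B u)⁻¹ = reflection B u := rfl

theorem reflection_mul_self (u : V) : reflection B u * reflection B u = 1 :=
  mul_inv_cancel (reflection B u)

theorem reflection_apply_of_apply_eq_zero (h : B u x = 0) : reflection B u x = x := by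
  simp [reflection_apply, h]

theorem reflection_apply_self (hu : B u u ≠ 0) : reflection B u u = -u := by
  rw [reflection_apply, div_mul_cancel₀ _ hu, two_smul]
  abel

theorem reflection_isometry (hB : B.IsSymm) (u x y : V) :
    B (reflection B u x) (reflection B u y) = B x y := by
  by_cases hu : B u u = 0
  · simp [reflection_apply, hu]
  · simp only [reflection_apply, map_sub, LinearMap.sub_apply, map_smul, LinearMap.smul_apply,
      smul_eq_mul]
    rw [hB.eq x u]
    field_simp
    ring

theorem conj_reflection {g : V ≃ₗ[F] V} {μ : F} (hμ : μ ≠ 0)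
    (hg : ∀ x y, B (g x) (g y) = μ * B x y) (u : V) :
    g * reflection B u * g⁻¹ = reflection B (g u) := by
  ext x
  obtain ⟨y, rfl⟩ := g.surjective x
  have hy : (g⁻¹ : V ≃ₗ[F] V) (g y) = y := g.symm_apply_apply y
  rw [LinearEquiv.mul_apply, LinearEquiv.mul_apply, hy, reflection_apply, reflection_apply, hg, hg,
    map_sub, map_smul]
  congr 2
  field_simp

theorem reflection_smul {a : F} (ha : a ≠ 0) (u : V) : reflection B (a • u) = reflection B u := by
  ext x
  simp only [reflection_apply, map_smul, LinearMap.smul_apply, smul_eq_mul, smul_smul]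
  congr 2
  field_simp

theorem reflection_neg (u : V) : reflection B (-u) = reflection B u := by
  rw [← neg_one_smul F u, reflection_smul (neg_ne_zero.mpr one_ne_zero)]

theorem mem_of_reflection_apply_mem [NeZero (2 : F)] {X : Submodule F V} (hu : B u u ≠ 0)
    (hx : x ∈ X) (hrx : reflection B u x ∈ X) (hux : B u x ≠ 0) : u ∈ X := by
  have hdiff := X.sub_mem hx hrx
  rw [reflection_apply, sub_sub_cancel] at hdiff
  exact (X.smul_mem_iff (mul_ne_zero (div_ne_zero two_ne_zero hu) hux)).mp hdiff

theorem exists_smul_eq_of_reflection_eq [NeZero (2 : F)] (hu : B u u ≠ 0)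
    (h : reflection B u = reflection B v) : ∃ a : F, u = a • v := by
  have hneg : u - (2 / B v v * B v u) • v = -u := by
    rw [← reflection_apply, ← h, reflection_apply_self hu]
  refine ⟨2⁻¹ * (2 / B v v * B v u), ?_⟩
  rw [mul_smul, ← sub_sub_cancel u ((2 / B v v * B v u) • v), hneg, sub_neg_eq_add, ← two_smul F u,
    inv_smul_smul₀ two_ne_zero]

section DegeneratePair

variable {e : V}

theorem reflection_add_isotropic_apply (hB : B.IsSymm) (hee : B e e = 0) (hue : B u e = 0)
    (x : V) : reflection B (u + e) x = x - (2 / B u u * (B u x + B e x)) • (u + e) := by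
  have hnorm : B (u + e) (u + e) = B u u := by simp [hee, hue, hB.eq e u]
  rw [reflection_apply, hnorm, map_add, LinearMap.add_apply]

/-- The product of the two reflections differs from `1` by an endomorphism whose cube vanishes. -/
theorem reflection_mul_reflection_add_isotropic_pow_char (p : ℕ) [Fact p.Prime] [CharP F p]
    (hp : p ≠ 2) (hB : B.IsSymm) (hu : B u u ≠ 0) (hee : B e e = 0) (hue : B u e = 0) :
    (reflection B u * reflection B (u + e)) ^ p = 1 := by
  set c := reflection B u * reflection B (u + e) with hc
  have heu : B e u = 0 := by rw [hB.eq, hue]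
  let N : End F V := (c : V →ₗ[F] V) - 1
  have hN (x : V) : N x = (2 / B u u * B e x) • u - (2 / B u u * (B u x + B e x)) • e := by
    have hcx : c x = x + (2 / B u u * B e x) • u - (2 / B u u * (B u x + B e x)) • e := by
      rw [hc, LinearEquiv.mul_apply, reflection_add_isotropic_apply hB hee hue, map_sub, map_smul,
        map_add, reflection_apply_self hu, reflection_apply_of_apply_eq_zero hue, reflection_apply]
      module
    simp only [N, LinearMap.sub_apply, LinearEquiv.coe_coe, End.one_apply, hcx]
    abel
  have hNe : N e = 0 := by simp [hN, hee, hue]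
  have hNu : N u = (-2 : F) • e := by
    rw [hN, heu, mul_zero, zero_smul, add_zero, zero_sub, div_mul_cancel₀ _ hu, neg_smul]
  have hN3 : N ^ 3 = 0 := by
    ext x
    rw [pow_succ, pow_succ, pow_one, End.mul_apply, End.mul_apply, hN x]
    simp only [map_sub, map_smul, hNe, hNu, smul_zero, sub_zero, LinearMap.zero_apply]
  have hNp : N ^ p = 0 := by
    have : 3 ≤ p := by have := (Fact.out : p.Prime).two_le; omega
    exact pow_eq_zero_of_le this hN3
  have : Nontrivial V := ⟨u, 0, by rintro rfl; simp at hu⟩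
  have : CharP (End F V) p := charP_of_injective_algebraMap (algebraMap F (End F V)).injective p
  have hpow : (N + 1) ^ p = 1 := by
    rw [add_pow_char_of_commute p (Commute.one_right N), hNp, one_pow, zero_add]
  have hcN : LinearEquiv.automorphismGroup.toLinearMapMonoidHom c = N + 1 :=
    (sub_add_cancel (c : V →ₗ[F] V) 1).symm
  rw [← hcN, ← map_pow] at hpow
  exact LinearEquiv.toLinearMap_injective hpow

theorem eq_zero_of_reflection_mul_reflection_add_isotropic_eq_one [NeZero (2 : F)] (hB : B.IsSymm)
    (hu : B u u ≠ 0) (hee : B e e = 0) (hue : B u e = 0)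
    (h : reflection B u * reflection B (u + e) = 1) : e = 0 := by
  have heq : reflection B (u + e) = reflection B u := (eq_inv_of_mul_eq_one_right h).trans rfl
  have hue' := DFunLike.congr_fun heq u
  rw [reflection_add_isotropic_apply hB hee hue, reflection_apply, hB.eq e u, hue, add_zero,
    smul_add, div_mul_cancel₀ _ hu, sub_right_inj, add_eq_left] at hue'
  exact (smul_eq_zero.mp hue').resolve_left two_ne_zero

theorem eq_zero_of_reflection_add_isotropic_mem (p : ℕ) [Fact p.Prime] [CharP F p] (hp : p ≠ 2)
    [NeZero (2 : F)] (hB : B.IsSymm) {H : Subgroup (V ≃ₗ[F] V)} (hH : ∀ g ∈ H, g ^ p = 1 → g = 1)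
    (hu : B u u ≠ 0) (hee : B e e = 0) (hue : B u e = 0) (hmem : reflection B u ∈ H)
    (hmem' : reflection B (u + e) ∈ H) : e = 0 :=
  eq_zero_of_reflection_mul_reflection_add_isotropic_eq_one hB hu hee hue <|
    hH _ (H.mul_mem hmem hmem')
      (reflection_mul_reflection_add_isotropic_pow_char p hp hB hu hee hue)

end DegeneratePair

end Reflection

section SolvableReflectionGroup

open scoped commutatorElement

theorem exists_normal_not_le_center_commutator_le_center (G : Type*) [Group G]
    [Group.IsSolvable G] (h : Subgroup.center G ≠ ⊤) :
    ∃ N : Subgroup G, N.Normal ∧ ¬N ≤ Subgroup.center G ∧ ⁅N, N⁆ ≤ Subgroup.center G := by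
  classical
  obtain ⟨k, hk⟩ := (Group.isSolvable_def G).mp inferInstance
  have hex : ∃ k, derivedSeries G k ≤ Subgroup.center G := ⟨k, hk ▸ bot_le⟩
  have hspec := Nat.find_spec hex
  rcases hm : Nat.find hex with _ | m
  · rw [hm] at hspec
    exact absurd (top_le_iff.mp hspec) h
  · rw [hm, derivedSeries_succ] at hspec
    exact ⟨derivedSeries G m, inferInstance, Nat.find_min hex (by omega), hspec⟩

variable {F : Type*} [Field F] {V : Type*} [AddCommGroup V] [Module F V]
variable {B : LinearMap.BilinForm F V} {Φ : Set V} {u v w x y : V} {g : V ≃ₗ[F] V}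

theorem eq_zero_of_eq_neg [NeZero (2 : F)] (h : x = -x) : x = 0 := by
  rw [← sub_eq_zero, sub_neg_eq_add, ← two_smul F] at h
  exact (smul_eq_zero.mp h).resolve_left two_ne_zero

theorem exists_mem_ne_zero_forall_apply_eq_zero [FiniteDimensional F V] {X : Submodule F V} {k : ℕ}
    (hk : k < finrank F X) (f : Fin k → Dual F V) : ∃ e ∈ X, e ≠ 0 ∧ ∀ i, f i e = 0 := by
  have hker : LinearMap.ker ((LinearMap.pi f).domRestrict X) ≠ ⊥ :=
    LinearMap.ker_ne_bot_of_finrank_lt (by simpa using hk)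
  obtain ⟨e, he, he0⟩ := Submodule.exists_mem_ne_zero_of_ne_bot hker
  exact ⟨e, e.2, by simpa using he0, fun i => congrFun (LinearMap.mem_ker.mp he) i⟩

theorem reflection_mul_reflection_apply_eq_self_iff [NeZero (2 : F)] (hu : B u u ≠ 0)
    (hv : B v v ≠ 0) (huv : reflection B u ≠ reflection B v) :
    (reflection B u * reflection B v) x = x ↔ B u x = 0 ∧ B v x = 0 := by
  refine ⟨fun h => ?_, fun ⟨h1, h2⟩ => ?_⟩
  · have hvx : reflection B v x = reflection B u x := by
      rw [← reflection_apply_reflection_apply (B := B) u (reflection B v x)]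
      exact congrArg _ h
    have hv0 : v ≠ 0 := by rintro rfl; simp at hv
    have hu0 : u ≠ 0 := by rintro rfl; simp at hu
    have hcoef : ∀ {w}, B w w ≠ 0 → B w x ≠ 0 → 2 / B w w * B w x ≠ 0 := fun hw hwx =>
      mul_ne_zero (div_ne_zero two_ne_zero hw) hwx
    rw [reflection_apply, reflection_apply, sub_right_inj] at hvx
    by_cases hux : B u x = 0
    · rw [hux, mul_zero, zero_smul, smul_eq_zero, or_iff_left hv0] at hvx
      exact ⟨hux, not_not.mp fun hvx' => hcoef hv hvx' hvx⟩
    · set a := 2 / B u u * B u x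
      set b := 2 / B v v * B v x
      have ha : a ≠ 0 := hcoef hu hux
      have huv' : u = (a⁻¹ * b) • v := by rw [mul_smul, hvx, inv_smul_smul₀ ha]
      have hab : a⁻¹ * b ≠ 0 := by
        intro h0
        rw [h0, zero_smul] at huv'
        exact hu0 huv'
      exact absurd (huv' ▸ reflection_smul hab v) huv
  · rw [LinearEquiv.mul_apply, reflection_apply_of_apply_eq_zero h2,
      reflection_apply_of_apply_eq_zero h1]

variable (B Φ) in
/-- The group generated by the reflections in the vectors of `Φ`. -/
def reflectionGroup : Subgroup (V ≃ₗ[F] V) := Subgroup.closure (reflection B '' Φ)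

theorem reflection_mem_reflectionGroup (hv : v ∈ Φ) : reflection B v ∈ reflectionGroup B Φ :=
  Subgroup.subset_closure (Set.mem_image_of_mem _ hv)

theorem reflectionGroup_induction {P : (V ≃ₗ[F] V) → Prop}
    (reflection : ∀ v ∈ Φ, P (reflection B v)) (one : P 1) (mul : ∀ a b, P a → P b → P (a * b))
    (inv : ∀ a, P a → P a⁻¹) (hg : g ∈ reflectionGroup B Φ) : P g := by
  induction hg using Subgroup.closure_induction with
  | mem a ha =>
    obtain ⟨v, hv, rfl⟩ := ha
    exact reflection v hv
  | one => exact one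
  | mul a b _ _ ha hb => exact mul a b ha hb
  | inv a _ ha => exact inv a ha

theorem sub_mem_span_of_mem_reflectionGroup (hg : g ∈ reflectionGroup B Φ) :
    ∀ x, g x - x ∈ Submodule.span F Φ := by
  refine reflectionGroup_induction (P := fun g => ∀ x, g x - x ∈ Submodule.span F Φ)
    ?_ ?_ ?_ ?_ hg
  · intro v hv x
    rw [reflection_apply, sub_sub_cancel_left, neg_mem_iff]
    exact Submodule.smul_mem _ _ (Submodule.subset_span hv)
  · simp
  · intro a b ha hb x
    simpa using add_mem (ha (b x)) (hb x)
  · intro a ha x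
    have hx := ha (a⁻¹ x)
    rwa [show a (a⁻¹ x) = x from a.apply_symm_apply x, ← neg_mem_iff, neg_sub] at hx

theorem apply_mem_span_of_mem_reflectionGroup (hg : g ∈ reflectionGroup B Φ)
    (hx : x ∈ Submodule.span F Φ) : g x ∈ Submodule.span F Φ :=
  (Submodule.sub_mem_iff_left _ hx).mp (sub_mem_span_of_mem_reflectionGroup hg x)

theorem reflectionGroup_isometry (hB : B.IsSymm) (hg : g ∈ reflectionGroup B Φ) :
    ∀ x y, B (g x) (g y) = B x y := by
  refine reflectionGroup_induction (P := fun g => ∀ x y, B (g x) (g y) = B x y) ?_ ?_ ?_ ?_ hg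
  · exact fun v _ => reflection_isometry hB v
  · exact fun _ _ => rfl
  · exact fun a b ha hb x y => (ha _ _).trans (hb _ _)
  · intro a ha x y
    rw [← ha]
    exact congrArg₂ (B · ·) (a.apply_symm_apply x) (a.apply_symm_apply y)

theorem commute_reflection_of_mem_center {z : reflectionGroup B Φ}
    (hz : z ∈ Subgroup.center (reflectionGroup B Φ)) (hv : v ∈ Φ) :
    Commute z.1 (reflection B v) :=
  (congrArg Subtype.val (Subgroup.mem_center_iff.mp hz
    ⟨reflection B v, reflection_mem_reflectionGroup hv⟩)).symm

theorem exists_not_commute_reflection {z : reflectionGroup B Φ}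
    (hz : z ∉ Subgroup.center (reflectionGroup B Φ)) :
    ∃ v ∈ Φ, ¬Commute z.1 (reflection B v) := by
  by_contra! hcomm
  have hle : reflectionGroup B Φ ≤ Subgroup.centralizer {z.1} := by
    refine (Subgroup.closure_le _).mpr ?_
    rintro _ ⟨v, hv, rfl⟩
    exact Subgroup.mem_centralizer_singleton_iff.mpr (hcomm v hv).symm.eq
  exact hz (Subgroup.mem_center_iff.mpr fun g => Subtype.ext
    (Subgroup.mem_centralizer_singleton_iff.mp (hle g.2)))

theorem mul_reflection_apply_eq_self (h : ∀ w ∈ ({u, v} : Set V), B w x = 0) :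
    (reflection B u * reflection B v) x = x := by
  rw [LinearEquiv.mul_apply, reflection_apply_of_apply_eq_zero (h v (by simp)),
    reflection_apply_of_apply_eq_zero (h u (by simp))]

variable (B Φ) in
/-- A set of anisotropic vectors which is stable under its own reflections, is not the union of two
proper orthogonal parts, and spans a nondegenerate subspace. The last axiom forbids two members of
`Φ` spanning a degenerate plane. -/
structure IsIrreducibleRootSet : Prop where
  isSymm : B.IsSymm
  apply_self_ne_zero : ∀ u ∈ Φ, B u u ≠ 0
  reflection_mem : ∀ u ∈ Φ, ∀ v ∈ Φ, reflection B u v ∈ Φ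
  connected : ∀ Ψ ⊆ Φ, Ψ.Nonempty → (∀ u ∈ Ψ, ∀ v ∈ Φ \ Ψ, B u v = 0) → Ψ = Φ
  nondegenerate : ∀ x ∈ Submodule.span F Φ, (∀ v ∈ Φ, B v x = 0) → x = 0
  eq_zero_of_add_mem : ∀ u ∈ Φ, ∀ e, B e e = 0 → B u e = 0 → u + e ∈ Φ → e = 0

variable (B Φ u v) in
/-- Two roots of equal norm whose reflections have a nontrivial product that commutes with all its
conjugates under the reflection group. -/
structure IsCommutingPair : Prop where
  left_mem : u ∈ Φ
  right_mem : v ∈ Φ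
  apply_self_eq : B u u = B v v
  reflection_ne : reflection B u ≠ reflection B v
  commute_conj : ∀ g ∈ reflectionGroup B Φ,
    Commute (g * (reflection B u * reflection B v) * g⁻¹) (reflection B u * reflection B v)

namespace IsIrreducibleRootSet

theorem isometry (h : IsIrreducibleRootSet B Φ) (hg : g ∈ reflectionGroup B Φ) (x y : V) :
    B (g x) (g y) = B x y :=
  reflectionGroup_isometry h.isSymm hg x y

theorem apply_mem (h : IsIrreducibleRootSet B Φ) (hg : g ∈ reflectionGroup B Φ) (hv : v ∈ Φ) :
    g v ∈ Φ := by
  suffices ∀ v, g v ∈ Φ ↔ v ∈ Φ from (this v).mpr hv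
  refine reflectionGroup_induction (P := fun g => ∀ v, g v ∈ Φ ↔ v ∈ Φ) ?_ ?_ ?_ ?_ hg
  · intro u hu v
    refine ⟨fun hv => ?_, h.reflection_mem u hu v⟩
    rw [← reflection_apply_reflection_apply (B := B) u v]
    exact h.reflection_mem u hu _ hv
  · exact fun _ => Iff.rfl
  · exact fun a b ha hb v => (ha (b v)).trans (hb v)
  · intro a ha v
    rw [← ha, show a (a⁻¹ v) = v from a.apply_symm_apply v]

theorem neg_mem (h : IsIrreducibleRootSet B Φ) (hv : v ∈ Φ) : -v ∈ Φ := by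
  rw [← reflection_apply_self (h.apply_self_ne_zero v hv)]
  exact h.reflection_mem v hv v hv

theorem conj_reflection (h : IsIrreducibleRootSet B Φ) (hg : g ∈ reflectionGroup B Φ) (u : V) :
    g * reflection B u * g⁻¹ = reflection B (g u) :=
  SimilitudeBase.conj_reflection one_ne_zero (fun x y => by rw [h.isometry hg, one_mul]) u

theorem eq_one_of_forall_mem_span (h : IsIrreducibleRootSet B Φ) (hg : g ∈ reflectionGroup B Φ)
    (hfix : ∀ x ∈ Submodule.span F Φ, g x = x) : g = 1 := by
  ext x
  refine sub_eq_zero.mp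
    (h.nondegenerate _ (sub_mem_span_of_mem_reflectionGroup hg x) fun v hv => ?_)
  have hgv := h.isometry hg v x
  rw [hfix v (Submodule.subset_span hv)] at hgv
  exact (map_sub (B v) _ _).trans (sub_eq_zero.mpr hgv)

theorem span_le (h : IsIrreducibleRootSet B Φ) {X : Submodule F V} (hX : X ≤ Submodule.span F Φ)
    (hxX : x ∈ X) (hx : x ≠ 0) (hdich : ∀ v ∈ Φ, v ∈ X ∨ ∀ y ∈ X, B v y = 0) :
    Submodule.span F Φ ≤ X := by
  have hne : (Φ ∩ X).Nonempty := by
    by_contra hempty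
    refine hx (h.nondegenerate x (hX hxX) fun v hv => ?_)
    exact (hdich v hv).resolve_left (fun hvX => hempty ⟨v, hv, hvX⟩) x hxX
  have heq : Φ ∩ X = Φ := by
    refine h.connected _ Set.inter_subset_left hne fun u hu v hv => ?_
    rw [h.isSymm.eq]
    exact (hdich v hv.1).resolve_left (fun hvX => hv.2 ⟨hv.1, hvX⟩) u hu.2
  exact Submodule.span_le.mpr (Set.inter_eq_left.mp heq)

variable [NeZero (2 : F)]

theorem apply_eq_or_eq_neg_of_commute (h : IsIrreducibleRootSet B Φ)
    (hg : g ∈ reflectionGroup B Φ) (hv : v ∈ Φ) (hc : Commute g (reflection B v)) :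
    g v = v ∨ g v = -v := by
  have hv0 := h.apply_self_ne_zero v hv
  have hgv : B (g v) (g v) = B v v := h.isometry hg v v
  have hr : reflection B (g v) = reflection B v := by
    rw [← h.conj_reflection hg, hc.eq, mul_inv_cancel_right]
  obtain ⟨a, ha⟩ := exists_smul_eq_of_reflection_eq (hgv ▸ hv0) hr
  have ha2 : a * a = 1 := by
    rw [ha] at hgv
    simp only [map_smul, LinearMap.smul_apply, smul_eq_mul, ← mul_assoc] at hgv
    exact (mul_eq_right₀ hv0).mp hgv
  rcases mul_self_eq_one_iff.mp ha2 with rfl | rfl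
  · exact .inl (by rw [ha, one_smul])
  · exact .inr (by rw [ha, neg_one_smul])

theorem eq_or_eq_neg_on_span (h : IsIrreducibleRootSet B Φ) (hg : g ∈ reflectionGroup B Φ)
    (hc : ∀ v ∈ Φ, Commute g (reflection B v)) :
    (∀ x ∈ Submodule.span F Φ, g x = x) ∨ ∀ x ∈ Submodule.span F Φ, g x = -x := by
  have hsign : ∀ v ∈ Φ, g v = v ∨ g v = -v := fun v hv =>
    h.apply_eq_or_eq_neg_of_commute hg hv (hc v hv)
  by_cases hΨ : {v ∈ Φ | g v = v}.Nonempty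
  · have hall : {v ∈ Φ | g v = v} = Φ := by
      refine h.connected _ (Set.sep_subset _ _) hΨ fun u hu v hv => ?_
      have hgv : g v = -v := (hsign v hv.1).resolve_left fun hgv => hv.2 ⟨hv.1, hgv⟩
      have huv := h.isometry hg u v
      rw [hu.2, hgv, map_neg] at huv
      exact eq_zero_of_eq_neg (F := F) huv.symm
    exact .inl fun x hx => LinearMap.eqOn_span (f := (g : V →ₗ[F] V)) (g := LinearMap.id)
      (fun v hv => (hall.ge hv).2) hx
  · exact .inr fun x hx => LinearMap.eqOn_span (f := (g : V →ₗ[F] V)) (g := -LinearMap.id)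
      (fun v hv => (hsign v hv).resolve_left fun hgv => hΨ ⟨v, hv, hgv⟩) hx

theorem center_reflectionGroup_ne_top [FiniteDimensional F V] (h : IsIrreducibleRootSet B Φ)
    (hd : 2 ≤ finrank F (Submodule.span F Φ)) :
    Subgroup.center (reflectionGroup B Φ) ≠ ⊤ := by
  intro htop
  obtain ⟨v, hv⟩ : Φ.Nonempty := by
    rw [Set.nonempty_iff_ne_empty]
    rintro rfl
    rw [Submodule.span_empty, finrank_bot] at hd
    omega
  have hvR := reflection_mem_reflectionGroup (B := B) hv
  have hcomm : ∀ w ∈ Φ, Commute (reflection B v) (reflection B w) := fun w hw =>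
    commute_reflection_of_mem_center (z := ⟨_, hvR⟩) (htop ▸ Subgroup.mem_top _) hw
  obtain ⟨e, he, he0, hve⟩ :=
    exists_mem_ne_zero_forall_apply_eq_zero (k := 1) (show 1 < finrank F _ from hd) fun _ => B v
  have hv0 : v ≠ 0 := by
    rintro rfl
    simpa using h.apply_self_ne_zero _ hv
  rcases h.eq_or_eq_neg_on_span hvR hcomm with hpos | hneg
  · refine hv0 (eq_zero_of_eq_neg (F := F) ?_)
    rw [← reflection_apply_self (h.apply_self_ne_zero v hv), hpos v (Submodule.subset_span hv)]
  · refine he0 (eq_zero_of_eq_neg (F := F) ?_)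
    rw [← hneg e he, reflection_apply_of_apply_eq_zero (hve 0)]

theorem eq_one_of_mem_center (h : IsIrreducibleRootSet B Φ) {z : reflectionGroup B Φ}
    (hz : z ∈ Subgroup.center (reflectionGroup B Φ)) (hx : x ∈ Submodule.span F Φ) (hx0 : x ≠ 0)
    (hzx : z.1 x = x) : z = 1 := by
  rcases h.eq_or_eq_neg_on_span z.2 fun v => commute_reflection_of_mem_center hz with hpos | hneg
  · exact Subtype.ext (h.eq_one_of_forall_mem_span z.2 hpos)
  · exact absurd (eq_zero_of_eq_neg (F := F) (hzx.symm.trans (hneg x hx))) hx0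

/-- If a member `z` of a normal subgroup `N` with central commutator subgroup does not commute with
the reflection in `v`, take the roots `z v` and `v`: the product of their reflections lies in `N`,
so its commutator with a conjugate is central, and it fixes any vector orthogonal to the four roots
involved; a central element fixing a nonzero vector of `span F Φ` is trivial. -/
theorem exists_isCommutingPair [FiniteDimensional F V] (h : IsIrreducibleRootSet B Φ)
    [Group.IsSolvable (reflectionGroup B Φ)] (hd : 5 ≤ finrank F (Submodule.span F Φ)) :
    ∃ u v, IsCommutingPair B Φ u v := by
  obtain ⟨N, hN, hNcenter, hNcomm⟩ := exists_normal_not_le_center_commutator_le_center _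
    (h.center_reflectionGroup_ne_top (by omega))
  obtain ⟨z, hzN, hz⟩ := SetLike.not_le_iff_exists.mp hNcenter
  obtain ⟨v, hv, hzv⟩ := exists_not_commute_reflection hz
  have hconj : z.1 * reflection B v * z.1⁻¹ = reflection B (z.1 v) := h.conj_reflection z.2 v
  refine ⟨z.1 v, v, h.apply_mem z.2 hv, hv, h.isometry z.2 v v, fun heq => hzv ?_, fun g hg => ?_⟩
  · exact mul_inv_eq_iff_eq_mul.mp (hconj.trans heq)
  set r : reflectionGroup B Φ := ⟨reflection B v, reflection_mem_reflectionGroup hv⟩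
  set c : reflectionGroup B Φ := z * r * z⁻¹ * r⁻¹
  have hcN : c ∈ N := by
    rw [show c = z * (r * z⁻¹ * r⁻¹) by simp only [c, mul_assoc]]
    exact N.mul_mem hzN (hN.conj_mem _ (N.inv_mem hzN) r)
  have hc : c.1 = reflection B (z.1 v) * reflection B v := by
    rw [← hconj]
    rfl
  set g' : reflectionGroup B Φ := ⟨g, hg⟩
  obtain ⟨e, he, he0, hfix⟩ := exists_mem_ne_zero_forall_apply_eq_zero (k := 4) hd
    ![B (z.1 v), B v, B (g (z.1 v)), B (g v)]
  have hce : c.1 e = e := by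
    rw [hc]
    exact mul_reflection_apply_eq_self (by simpa using ⟨hfix 0, hfix 1⟩)
  have hge : (g * c.1 * g⁻¹) e = e := by
    have : g * c.1 * g⁻¹ = reflection B (g (z.1 v)) * reflection B (g v) := by
      rw [← h.conj_reflection hg, ← h.conj_reflection hg, hc]
      group
    rw [this]
    exact mul_reflection_apply_eq_self (by simpa using ⟨hfix 2, hfix 3⟩)
  have hcomm : ⁅g' * c * g'⁻¹, c⁆ = 1 := by
    refine h.eq_one_of_mem_center (hNcomm (Subgroup.commutator_mem_commutator
      (hN.conj_mem _ hcN g') hcN)) he he0 ?_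
    have hstab {a b : V ≃ₗ[F] V} (ha : a ∈ MulAction.stabilizer _ e)
        (hb : b ∈ MulAction.stabilizer _ e) : ⁅a, b⁆ ∈ MulAction.stabilizer _ e :=
      mul_mem (mul_mem (mul_mem ha hb) (inv_mem ha)) (inv_mem hb)
    exact hstab hge hce
  rw [← hc]
  exact congrArg Subtype.val (commutatorElement_eq_one_iff_commute.mp hcomm)

end IsIrreducibleRootSet

namespace IsCommutingPair

theorem mul_mem (hp : IsCommutingPair B Φ u v) :
    reflection B u * reflection B v ∈ reflectionGroup B Φ :=
  Subgroup.mul_mem _ (reflection_mem_reflectionGroup hp.left_mem)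
    (reflection_mem_reflectionGroup hp.right_mem)

/-- Otherwise `v ∓ u` would be an isotropic vector orthogonal to `u`. -/
theorem gram_ne_zero (h : IsIrreducibleRootSet B Φ) (hp : IsCommutingPair B Φ u v) :
    (B u u - B u v) * (B u u + B u v) ≠ 0 := by
  have hvu : B v u = B u v := h.isSymm.eq v u
  have hvv := hp.apply_self_eq.symm
  refine mul_ne_zero (fun h0 => hp.reflection_ne ?_) (fun h0 => hp.reflection_ne ?_)
  · have hzero : v - u = 0 := by
      refine h.eq_zero_of_add_mem u hp.left_mem _ ?_ ?_ (by simpa using hp.right_mem) <;>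
        simp only [map_sub, LinearMap.sub_apply, hvu, hvv]
      · linear_combination 2 * h0
      · linear_combination -h0
    rw [sub_eq_zero.mp hzero]
  · have hzero : -v - u = 0 := by
      refine h.eq_zero_of_add_mem u hp.left_mem _ ?_ ?_ (by simpa using h.neg_mem hp.right_mem) <;>
        simp only [map_sub, map_neg, LinearMap.neg_apply, LinearMap.sub_apply, hvu, hvv]
      · linear_combination 2 * h0
      · linear_combination -h0
    rw [← sub_eq_zero.mp hzero, reflection_neg]

theorem eq_zero_of_mem_span (h : IsIrreducibleRootSet B Φ) (hp : IsCommutingPair B Φ u v)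
    (hx : x ∈ Submodule.span F {u, v}) (hux : B u x = 0) (hvx : B v x = 0) : x = 0 := by
  obtain ⟨a, b, rfl⟩ := Submodule.mem_span_pair.mp hx
  have hgram := hp.gram_ne_zero h
  simp only [map_add, map_smul, smul_eq_mul, h.isSymm.eq v u, ← hp.apply_self_eq] at hux hvx
  have ha : a = 0 := (mul_eq_zero.mp (by linear_combination B u u * hux - B u v * hvx :
    a * ((B u u - B u v) * (B u u + B u v)) = 0)).resolve_right hgram
  have hb : b = 0 := (mul_eq_zero.mp (by linear_combination B u u * hvx - B u v * hux :
    b * ((B u u - B u v) * (B u u + B u v)) = 0)).resolve_right hgram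
  rw [ha, hb, zero_smul, zero_smul, add_zero]

theorem apply_sub_mem (u v x : V) :
    (reflection B u * reflection B v) x - x ∈ Submodule.span F {u, v} :=
  sub_mem_span_of_mem_reflectionGroup (Subgroup.mul_mem _
    (reflection_mem_reflectionGroup (by simp)) (reflection_mem_reflectionGroup (by simp))) x

variable [NeZero (2 : F)]

theorem apply_eq_self_iff (h : IsIrreducibleRootSet B Φ) (hp : IsCommutingPair B Φ u v) :
    (reflection B u * reflection B v) x = x ↔ B u x = 0 ∧ B v x = 0 :=
  reflection_mul_reflection_apply_eq_self_iff (h.apply_self_ne_zero u hp.left_mem)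
    (h.apply_self_ne_zero v hp.right_mem) hp.reflection_ne

theorem exists_apply_sub_eq [FiniteDimensional F V] (h : IsIrreducibleRootSet B Φ)
    (hp : IsCommutingPair B Φ u v) (hx : x ∈ Submodule.span F {u, v}) :
    ∃ y, (reflection B u * reflection B v) y - y = x := by
  let f : End F (Submodule.span F {u, v}) :=
    ((reflection B u * reflection B v : V ≃ₗ[F] V) - 1 : End F V).restrict
      fun y _ => apply_sub_mem u v y
  have hf : Function.Injective f := by
    refine (injective_iff_map_eq_zero f).mpr fun y hy => ?_
    obtain ⟨huy, hvy⟩ := (hp.apply_eq_self_iff h).mp (sub_eq_zero.mp (congrArg Subtype.val hy))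
    exact Subtype.ext (hp.eq_zero_of_mem_span h y.2 huy hvy)
  obtain ⟨y, hy⟩ := LinearMap.injective_iff_surjective.mp hf ⟨x, hx⟩
  exact ⟨y, congrArg Subtype.val hy⟩

theorem mem_span_of_apply_eq_neg (hx : (reflection B u * reflection B v) x = -x) :
    x ∈ Submodule.span F {u, v} := by
  have hmem := apply_sub_mem (B := B) u v x
  rw [hx, ← neg_add', ← two_smul F, ← neg_smul] at hmem
  exact (Submodule.smul_mem_iff _ (neg_ne_zero.mpr two_ne_zero)).mp hmem

theorem conj_apply_mem [FiniteDimensional F V] (h : IsIrreducibleRootSet B Φ)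
    (hp : IsCommutingPair B Φ u v) (hg : g ∈ reflectionGroup B Φ)
    (hx : x ∈ Submodule.span F {u, v}) :
    (g * (reflection B u * reflection B v) * g⁻¹) x ∈ Submodule.span F {u, v} := by
  obtain ⟨y, rfl⟩ := hp.exists_apply_sub_eq h hx
  have hcomm := DFunLike.congr_fun (hp.commute_conj g hg).eq y
  rw [LinearEquiv.mul_apply, LinearEquiv.mul_apply _ (g * _ * _)] at hcomm
  rw [map_sub, hcomm]
  exact apply_sub_mem u v _

theorem exists_reflection_apply_notMem [FiniteDimensional F V] (h : IsIrreducibleRootSet B Φ)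
    (hp : IsCommutingPair B Φ u v) (hd : 3 ≤ finrank F (Submodule.span F Φ)) :
    ∃ t ∈ Φ, ∃ w ∈ Submodule.span F {u, v}, reflection B t w ∉ Submodule.span F {u, v} := by
  by_contra! hstable
  have hu : u ∈ Submodule.span F {u, v} := Submodule.subset_span (by simp)
  have hu0 : u ≠ 0 := by
    rintro rfl
    simpa using h.apply_self_ne_zero _ hp.left_mem
  have hle : Submodule.span F Φ ≤ Submodule.span F {u, v} := by
    refine h.span_le (Submodule.span_mono (Set.pair_subset hp.left_mem hp.right_mem)) hu hu0 ?_
    refine fun t ht => or_iff_not_imp_right.mpr fun hne => ?_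
    obtain ⟨w, hw, htw⟩ := by simpa using hne
    exact mem_of_reflection_apply_mem (h.apply_self_ne_zero t ht) hw (hstable t ht w hw) htw
  obtain ⟨e, he, he0, horth⟩ := exists_mem_ne_zero_forall_apply_eq_zero (k := 2) hd ![B u, B v]
  exact he0 (hp.eq_zero_of_mem_span h (hle he) (horth 0) (horth 1))

end IsCommutingPair

variable {t e : V}

variable (B Φ u v t e) in
/-- The vector `e` spans the intersection of the plane `span {u, v}` with its image under the
reflection in the root `t`, and is fixed by that reflection. -/
structure IsAxis : Prop where
  root_mem : t ∈ Φ
  mem : e ∈ Submodule.span F {u, v}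
  ne_zero : e ≠ 0
  reflection_apply : reflection B t e = e
  exists_smul_eq : ∀ x ∈ Submodule.span F {u, v}, reflection B t x ∈ Submodule.span F {u, v} →
    ∃ a : F, x = a • e

namespace IsCommutingPair

variable [NeZero (2 : F)]

theorem exists_isAxis [FiniteDimensional F V] (h : IsIrreducibleRootSet B Φ)
    (hp : IsCommutingPair B Φ u v) (hd : 3 ≤ finrank F (Submodule.span F Φ)) :
    ∃ t e, IsAxis B Φ u v t e := by
  obtain ⟨t, ht, w, hw, htw⟩ := hp.exists_reflection_apply_notMem h hd
  have hte : B t (B t v • u - B t u • v) = 0 := by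
    simp only [map_sub, map_smul, smul_eq_mul]
    ring
  have hwt : B t w ≠ 0 := fun h0 => htw (by rwa [reflection_apply_of_apply_eq_zero h0])
  have htU : t ∉ Submodule.span F {u, v} := fun htU => htw <| by
    rw [SimilitudeBase.reflection_apply]
    exact sub_mem hw (Submodule.smul_mem _ _ htU)
  have hcoef : B t u ≠ 0 ∨ B t v ≠ 0 := by
    obtain ⟨a, b, rfl⟩ := Submodule.mem_span_pair.mp hw
    contrapose! hwt
    simp [hwt.1, hwt.2]
  refine ⟨t, B t v • u - B t u • v, ht, ?_, fun he0 => ?_,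
    reflection_apply_of_apply_eq_zero hte, fun x hx htx => ?_⟩
  · exact Submodule.mem_span_pair.mpr ⟨B t v, -B t u, by rw [neg_smul, sub_eq_add_neg]⟩
  · have hgram := hp.gram_ne_zero h
    have hue := congrArg (B u) he0
    have hve := congrArg (B v) he0
    simp only [map_sub, map_smul, smul_eq_mul, map_zero, h.isSymm.eq v u,
      ← hp.apply_self_eq] at hue hve
    rcases hcoef with hu | hv
    · exact mul_ne_zero hu hgram (by linear_combination B u v * hue - B u u * hve)
    · exact mul_ne_zero hv hgram (by linear_combination B u u * hue - B u v * hve)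
  · have htx0 : B t x = 0 := not_not.mp fun h0 =>
      htU (mem_of_reflection_apply_mem (h.apply_self_ne_zero t ht) hx htx h0)
    obtain ⟨a, b, rfl⟩ := Submodule.mem_span_pair.mp hx
    simp only [map_add, map_smul, smul_eq_mul] at htx0
    rcases hcoef with hu | hv
    · refine ⟨-b / B t u, ?_⟩
      have ha : a = -b / B t u * B t v := by field_simp; linear_combination htx0
      rw [smul_sub, smul_smul, smul_smul, ← ha, div_mul_cancel₀ _ hu, neg_smul, sub_neg_eq_add]
    · refine ⟨a / B t v, ?_⟩
      have hb : b = -(a / B t v * B t u) := by field_simp; linear_combination htx0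
      rw [smul_sub, smul_smul, smul_smul, div_mul_cancel₀ _ hv, hb, neg_smul, sub_eq_add_neg]

end IsCommutingPair

namespace IsAxis

variable [NeZero (2 : F)]

theorem apply_ne_self (h : IsIrreducibleRootSet B Φ) (hp : IsCommutingPair B Φ u v)
    (he : IsAxis B Φ u v t e) : (reflection B u * reflection B v) e ≠ e := fun hfix =>
  have ⟨hue, hve⟩ := (hp.apply_eq_self_iff h).mp hfix
  he.ne_zero (hp.eq_zero_of_mem_span h he.mem hue hve)

variable [FiniteDimensional F V]

theorem exists_conj_apply_eq_smul (h : IsIrreducibleRootSet B Φ) (hp : IsCommutingPair B Φ u v)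
    (he : IsAxis B Φ u v t e) (hg : g ∈ reflectionGroup B Φ) :
    ∃ a : F, (g * (reflection B u * reflection B v) * g⁻¹) e = a • e := by
  refine he.exists_smul_eq _ (hp.conj_apply_mem h hg he.mem) ?_
  have hrefl := hp.conj_apply_mem h
    (Subgroup.mul_mem _ (reflection_mem_reflectionGroup he.root_mem) hg) he.mem
  rw [_root_.mul_inv_rev, reflection_inv] at hrefl
  simpa only [LinearEquiv.mul_apply, he.reflection_apply] using hrefl

/-- If `e` were isotropic, compare `B y e` with its image under the isometry `c = r_u r_v`, where
`y` lies in the reflected plane and is not orthogonal to `e`: since `c y - y` is a multiple of `e`,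
the eigenvalue of `c` on `e` would be `1`. -/
theorem apply_self_ne_zero (h : IsIrreducibleRootSet B Φ) (hp : IsCommutingPair B Φ u v)
    (he : IsAxis B Φ u v t e) : B e e ≠ 0 := by
  intro hee
  set c := reflection B u * reflection B v
  have htR := reflection_mem_reflectionGroup (B := B) he.root_mem
  obtain ⟨x, hx, hxe⟩ : ∃ x ∈ Submodule.span F {u, v}, B x e ≠ 0 := by
    by_contra! hall
    exact he.ne_zero (hp.eq_zero_of_mem_span h he.mem (hall u (Submodule.subset_span (by simp)))
      (hall v (Submodule.subset_span (by simp))))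
  set y := reflection B t x with hy
  have hye : B y e ≠ 0 := by
    rwa [← he.reflection_apply, reflection_isometry h.isSymm]
  obtain ⟨b, hb⟩ : ∃ b : F, c y - y = b • e := by
    refine he.exists_smul_eq _ (IsCommutingPair.apply_sub_mem u v y) ?_
    rw [map_sub, hy, reflection_apply_reflection_apply]
    exact sub_mem (hp.conj_apply_mem h htR hx) hx
  obtain ⟨a, ha⟩ := he.exists_conj_apply_eq_smul h hp (one_mem _)
  rw [one_mul, inv_one, mul_one] at ha
  have hiso := h.isometry hp.mul_mem y e
  rw [sub_eq_iff_eq_add.mp hb, ha] at hiso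
  simp only [map_add, map_smul, LinearMap.add_apply, LinearMap.smul_apply, hee, smul_eq_mul,
    mul_zero, zero_add] at hiso
  rw [(mul_eq_right₀ hye).mp hiso, one_smul] at ha
  exact he.apply_ne_self h hp ha

theorem conj_apply_eq_or_eq_neg (h : IsIrreducibleRootSet B Φ) (hp : IsCommutingPair B Φ u v)
    (he : IsAxis B Φ u v t e) (hg : g ∈ reflectionGroup B Φ) :
    (reflection B u * reflection B v) (g e) = g e ∨
      (reflection B u * reflection B v) (g e) = -g e := by
  set c := reflection B u * reflection B v
  have hg' := inv_mem hg
  obtain ⟨a, ha⟩ := he.exists_conj_apply_eq_smul h hp hg'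
  have hga : c (g e) = a • g e := by
    rw [← map_smul, ← ha, inv_inv]
    exact (g.apply_symm_apply _).symm
  have hiso := h.isometry hp.mul_mem (g e) (g e)
  rw [hga] at hiso
  simp only [map_smul, LinearMap.smul_apply, smul_eq_mul, ← mul_assoc] at hiso
  have haa : a * a = 1 :=
    (mul_eq_right₀ ((h.isometry hg e e).symm ▸ he.apply_self_ne_zero h hp)).mp hiso
  rcases mul_self_eq_one_iff.mp haa with rfl | rfl
  · exact .inl (by rw [hga, one_smul])
  · exact .inr (by rw [hga, neg_one_smul])

theorem exists_smul_eq_or_apply_eq_zero (h : IsIrreducibleRootSet B Φ)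
    (hp : IsCommutingPair B Φ u v) (he : IsAxis B Φ u v t e) (hg : g ∈ reflectionGroup B Φ) :
    (∃ a : F, g e = a • e) ∨ B (g e) e = 0 := by
  have horth {x : V} (hx : (reflection B u * reflection B v) x = x) : B x e = 0 := by
    obtain ⟨hux, hvx⟩ := (hp.apply_eq_self_iff h).mp hx
    obtain ⟨a, b, rfl⟩ := Submodule.mem_span_pair.mp he.mem
    simp [h.isSymm.eq x u, h.isSymm.eq x v, hux, hvx]
  have htg := Subgroup.mul_mem _ (reflection_mem_reflectionGroup he.root_mem) hg
  rcases he.conj_apply_eq_or_eq_neg h hp hg with hpos | hneg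
  · exact .inr (horth hpos)
  rcases he.conj_apply_eq_or_eq_neg h hp htg with hpos' | hneg'
  · refine .inr ?_
    rw [← reflection_isometry h.isSymm t, he.reflection_apply]
    exact horth hpos'
  · exact .inl (he.exists_smul_eq _ (IsCommutingPair.mem_span_of_apply_eq_neg hneg)
      (IsCommutingPair.mem_span_of_apply_eq_neg hneg'))

end IsAxis

namespace IsIrreducibleRootSet

theorem smul_mk_eq_or_apply_eq_zero (h : IsIrreducibleRootSet B Φ) (he0 : e ≠ 0)
    (he : ∀ g ∈ reflectionGroup B Φ, (∃ a : F, g e = a • e) ∨ B (g e) e = 0)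
    (g k : reflectionGroup B Φ) :
    g • Projectivization.mk F e he0 = k • Projectivization.mk F e he0 ∨
      B (g.1 e) (k.1 e) = 0 := by
  have hk (x : V) : k.1 ((k⁻¹ * g).1 x) = g.1 x := k.1.apply_symm_apply _
  rcases he (k⁻¹ * g).1 (k⁻¹ * g).2 with ⟨a, ha⟩ | h0
  · refine .inl ((Projectivization.mk_eq_mk_iff' F (g.1 e) (k.1 e) _ _).mpr ⟨a, ?_⟩)
    rw [← hk, ha, map_smul]
  · exact .inr (by rw [← hk, h.isometry k.2, h0])

theorem smul_mk_eq_self_of_apply_eq_zero (he0 : e ≠ 0) (ht : t ∈ Φ) (g : reflectionGroup B Φ)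
    (hte : B t (g.1 e) = 0) :
    (⟨reflection B t, reflection_mem_reflectionGroup ht⟩ : reflectionGroup B Φ) •
      g • Projectivization.mk F e he0 = g • Projectivization.mk F e he0 := by
  refine (Projectivization.mk_eq_mk_iff' F (reflection B t (g.1 e)) (g.1 e) _ _).mpr ⟨1, ?_⟩
  rw [one_smul, reflection_apply_of_apply_eq_zero hte]

variable [NeZero (2 : F)]

open scoped Classical in
/-- A line orthogonal to both the line moved by the reflection in `t` and its image is orthogonal to
their difference, which spans the line of `t`, and so it is fixed. -/
theorem toPermHom_reflection_eq_one_or_isSwap (h : IsIrreducibleRootSet B Φ) (he0 : e ≠ 0)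
    (he : ∀ g ∈ reflectionGroup B Φ, (∃ a : F, g e = a • e) ∨ B (g e) e = 0) (ht : t ∈ Φ) :
    MulAction.toPermHom (reflectionGroup B Φ)
        (MulAction.orbit (reflectionGroup B Φ) (Projectivization.mk F e he0))
        ⟨reflection B t, reflection_mem_reflectionGroup ht⟩ = 1 ∨
      (MulAction.toPermHom (reflectionGroup B Φ)
        (MulAction.orbit (reflectionGroup B Φ) (Projectivization.mk F e he0))
        ⟨reflection B t, reflection_mem_reflectionGroup ht⟩).IsSwap := by
  set r : reflectionGroup B Φ := ⟨reflection B t, reflection_mem_reflectionGroup ht⟩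
  by_cases hall : ∀ l : MulAction.orbit (reflectionGroup B Φ) (Projectivization.mk F e he0),
      r • l = l
  · exact .inl (Equiv.ext hall)
  obtain ⟨l, hl⟩ := not_forall.mp hall
  refine .inr ⟨l, r • l, Ne.symm hl, Equiv.ext fun m => ?_⟩
  rw [MulAction.toPermHom_apply, MulAction.toPerm_apply, Equiv.swap_apply_def]
  split_ifs with hml hmrl
  · rw [hml]
  · rw [hmrl, smul_smul, show r * r = 1 from Subtype.ext (reflection_mul_self t), one_smul]
  obtain ⟨_, g, rfl⟩ := l
  obtain ⟨_, k, rfl⟩ := m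
  have htg : B t (g.1 e) ≠ 0 := fun h0 =>
    hl (Subtype.ext (smul_mk_eq_self_of_apply_eq_zero he0 ht g h0))
  have hkg : B (k.1 e) (g.1 e) = 0 :=
    (h.smul_mk_eq_or_apply_eq_zero he0 he k g).resolve_left fun heq => hml (Subtype.ext heq)
  have hkrg : B (k.1 e) (reflection B t (g.1 e)) = 0 :=
    (h.smul_mk_eq_or_apply_eq_zero he0 he k (r * g)).resolve_left fun heq =>
      hmrl (Subtype.ext (heq.trans (mul_smul r g _)))
  rw [SimilitudeBase.reflection_apply, map_sub, hkg, map_smul, zero_sub, neg_eq_zero, smul_eq_mul,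
    mul_eq_zero,
    or_iff_right (mul_ne_zero (div_ne_zero two_ne_zero (h.apply_self_ne_zero t ht)) htg),
    h.isSymm.eq] at hkrg
  exact Subtype.ext (smul_mk_eq_self_of_apply_eq_zero he0 ht k hkrg)

theorem finrank_span_le_card_orbit [FiniteDimensional F V] (h : IsIrreducibleRootSet B Φ)
    (he0 : e ≠ 0) (heΦ : e ∈ Submodule.span F Φ)
    [Fintype (MulAction.orbit (reflectionGroup B Φ) (Projectivization.mk F e he0))] :
    finrank F (Submodule.span F Φ) ≤
      Fintype.card (MulAction.orbit (reflectionGroup B Φ) (Projectivization.mk F e he0)) := by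
  set Y := Submodule.span F (Set.range fun g : reflectionGroup B Φ => g.1 e)
  have hgY (g : reflectionGroup B Φ) : g.1 e ∈ Y := Submodule.subset_span ⟨g, rfl⟩
  have hYΦ : Y ≤ Submodule.span F Φ := by
    refine Submodule.span_le.mpr ?_
    rintro _ ⟨g, rfl⟩
    exact apply_mem_span_of_mem_reflectionGroup g.2 heΦ
  have hΦY : Submodule.span F Φ ≤ Y := by
    refine h.span_le hYΦ (hgY 1) he0 fun t ht => or_iff_not_imp_left.mpr fun htY x hx => ?_
    refine (Submodule.span_le (p := LinearMap.ker (B t))).mpr ?_ hx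
    rintro _ ⟨g, rfl⟩
    by_contra h0
    exact htY (mem_of_reflection_apply_mem (h.apply_self_ne_zero t ht) (hgY g)
      (hgY ((⟨reflection B t, reflection_mem_reflectionGroup ht⟩ : reflectionGroup B Φ) * g)) h0)
  have hYrep : Y ≤ Submodule.span F (Set.range fun l : MulAction.orbit (reflectionGroup B Φ)
      (Projectivization.mk F e he0) => l.1.rep) := by
    refine Submodule.span_le.mpr ?_
    rintro _ ⟨g, rfl⟩
    have hge : g.1 e ≠ 0 := (map_ne_zero_iff g.1 g.1.injective).mpr he0
    obtain ⟨a, ha⟩ := Projectivization.exists_smul_eq_mk_rep F (g.1 e) hge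
    refine (Submodule.smul_mem_iff _ a.ne_zero).mp (Submodule.subset_span ?_)
    exact ⟨⟨Projectivization.mk F (g.1 e) hge, g, Projectivization.smul_mk g he0⟩, ha.symm⟩
  exact (Submodule.finrank_mono (hΦY.trans hYrep)).trans (finrank_range_le_card _)

/-- In rank at least `5`, the group would permute an orbit of at least five lines as the full
symmetric group. -/
theorem finrank_span_le_four [FiniteDimensional F V] [Finite F] (h : IsIrreducibleRootSet B Φ)
    [Group.IsSolvable (reflectionGroup B Φ)] : finrank F (Submodule.span F Φ) ≤ 4 := by
  classical
  by_contra! hd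
  obtain ⟨u, v, hp⟩ := h.exists_isCommutingPair hd
  obtain ⟨t, e, he⟩ := hp.exists_isAxis h (by omega)
  have hline : ∀ g ∈ reflectionGroup B Φ, (∃ a : F, g e = a • e) ∨ B (g e) e = 0 :=
    fun g hg => he.exists_smul_eq_or_apply_eq_zero h hp hg
  have heΦ : e ∈ Submodule.span F Φ :=
    Submodule.span_mono (Set.pair_subset hp.left_mem hp.right_mem) he.mem
  have : Finite V := finite_of_finite F
  let Λ := MulAction.orbit (reflectionGroup B Φ) (Projectivization.mk F e he.ne_zero)
  have := Fintype.ofFinite Λ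
  have hsurj : Function.Surjective (MulAction.toPermHom (reflectionGroup B Φ) Λ) := by
    refine surjective_of_isSwap_of_isPretransitive'
      (((↑) : reflectionGroup B Φ → V ≃ₗ[F] V) ⁻¹' (reflection B '' Φ)) ?_
      Subgroup.closure_closure_coe_preimage
    rintro ⟨_, _⟩ ⟨t, ht, rfl⟩
    exact h.toPermHom_reflection_eq_one_or_isSwap he.ne_zero hline ht
  refine Equiv.Perm.not_isSolvable Λ ?_ (Group.isSolvable_of_surjective hsurj)
  rw [Cardinal.mk_fintype]
  exact_mod_cast hd.trans_le (h.finrank_span_le_card_orbit he.ne_zero heΦ)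

end IsIrreducibleRootSet

end SolvableReflectionGroup

section Blocks

variable {F : Type*} [Field F] {V : Type*} [AddCommGroup V] [Module F V]
variable {B : LinearMap.BilinForm F V} {H : Subgroup (V ≃ₗ[F] V)} {g : V ≃ₗ[F] V} {u v w : V}
variable {ι I : Type*} {b : Basis ι F V} {L : ι → I} {i i' : I}

variable (B H) in
/-- A root of `H` is an anisotropic vector whose reflection lies in `H`. -/
def IsRoot (v : V) : Prop := B v v ≠ 0 ∧ reflection B v ∈ H

theorem IsRoot.ne_zero (hv : IsRoot B H v) : v ≠ 0 := by
  rintro rfl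
  exact hv.1 (by simp)

variable (B H b) in
/-- An orthogonal basis of roots for a group `H` of similitudes. The last axiom says that no two
distinct roots span a degenerate plane; it holds as soon as `H` has no element of order `p`. -/
structure IsRootBasis : Prop where
  isSymm : B.IsSymm
  isRoot : ∀ j, IsRoot B H (b j)
  orthogonal : ∀ j j', j ≠ j' → B (b j) (b j') = 0
  similitude : ∀ g ∈ H, ∃ μ : F, μ ≠ 0 ∧ ∀ x y, B (g x) (g y) = μ * B x y
  eq_zero_of_isRoot_add : ∀ u e, B e e = 0 → B u e = 0 → IsRoot B H u → IsRoot B H (u + e) → e = 0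

variable (b) in
/-- The span of the basis vectors carrying the label `i`. -/
def block (L : ι → I) (i : I) : Submodule F V := Submodule.span F (b '' (L ⁻¹' {i}))

variable (b) in
/-- `g` maps the block of each label `i` into the block of the label `σ i`. -/
def PermutesBlocks (L : ι → I) (σ : Equiv.Perm I) (g : V ≃ₗ[F] V) : Prop :=
  ∀ i, ∀ v ∈ block b L i, g v ∈ block b L (σ i)

theorem basis_mem_block {j : ι} (hj : L j = i) : b j ∈ block b L i :=
  Submodule.subset_span ⟨j, hj, rfl⟩

theorem block_le {X : Submodule F V} (h : ∀ j, L j = i → b j ∈ X) : block b L i ≤ X := by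
  rw [block, Submodule.span_le]
  rintro _ ⟨j, hj, rfl⟩
  exact h j hj

theorem block_comp_equiv {J : Type*} (f : I ≃ J) (L : ι → I) (i : I) :
    block b (f ∘ L) (f i) = block b L i := by
  have hfib : f ∘ L ⁻¹' {f i} = L ⁻¹' {i} := by
    ext j
    simp only [Set.mem_preimage, Set.mem_singleton_iff, Function.comp_apply, f.apply_eq_iff_eq]
  rw [block, block, hfib]

theorem PermutesBlocks.comp_equiv {J : Type*} (f : I ≃ J) {σ : Equiv.Perm I}
    (h : PermutesBlocks b L σ g) : PermutesBlocks b (f ∘ L) (f.permCongr σ) g := by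
  intro j v hv
  obtain ⟨i, rfl⟩ := f.surjective j
  rw [block_comp_equiv] at hv
  rw [Equiv.permCongr_apply, f.symm_apply_apply, block_comp_equiv]
  exact h i v hv

namespace IsRootBasis

theorem apply_self_ne_zero (h : IsRootBasis B H b) (j : ι) : B (b j) (b j) ≠ 0 := (h.isRoot j).1

theorem apply_basis (h : IsRootBasis B H b) (v : V) (j : ι) :
    B v (b j) = b.repr v j * B (b j) (b j) := by
  have hlin : B.flip (b j) = B (b j) (b j) • b.coord j := by
    refine b.ext fun j' => ?_
    by_cases hj : j' = j
    · simp [hj]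
    · simp [h.orthogonal j' j hj, hj]
  simpa [mul_comm] using LinearMap.congr_fun hlin v

theorem eq_zero_of_forall_apply_basis (h : IsRootBasis B H b) (hv : ∀ j, B v (b j) = 0) :
    v = 0 := by
  refine b.ext_elem fun j => ?_
  have hj := hv j
  rw [h.apply_basis, mul_eq_zero, or_iff_left (h.apply_self_ne_zero j)] at hj
  simpa using hj

theorem exists_apply_basis_ne_zero (h : IsRootBasis B H b) (hv : v ≠ 0) :
    ∃ j, B v (b j) ≠ 0 := by
  contrapose! hv
  exact h.eq_zero_of_forall_apply_basis hv

theorem isRoot_apply (h : IsRootBasis B H b) (hg : g ∈ H) (hv : IsRoot B H v) :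
    IsRoot B H (g v) := by
  obtain ⟨μ, hμ, hgμ⟩ := h.similitude g hg
  refine ⟨by rw [hgμ]; exact mul_ne_zero hμ hv.1, ?_⟩
  rw [← conj_reflection hμ hgμ]
  exact H.mul_mem (H.mul_mem hg hv.2) (H.inv_mem hg)

theorem mem_block_iff (h : IsRootBasis B H b) :
    v ∈ block b L i ↔ ∀ j, L j ≠ i → B v (b j) = 0 := by
  rw [block, Basis.mem_span_image]
  refine forall_congr' fun j => ?_
  rw [Finset.mem_coe, Finsupp.mem_support_iff, h.apply_basis, mul_eq_zero,
    or_iff_left (h.apply_self_ne_zero j), not_imp_comm]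
  rfl

theorem apply_eq_zero_of_mem_block (h : IsRootBasis B H b) (hi : i ≠ i') (hv : v ∈ block b L i)
    (hw : w ∈ block b L i') : B v w = 0 := by
  have hle : block b L i ≤ LinearMap.ker (B w) := by
    refine block_le fun j hj => ?_
    rw [LinearMap.mem_ker]
    exact h.mem_block_iff.mp hw j (hj ▸ hi)
  rw [h.isSymm.eq]
  exact hle hv

theorem eq_of_mem_block (h : IsRootBasis B H b) (hv0 : v ≠ 0) (hv : v ∈ block b L i)
    (hv' : v ∈ block b L i') : i = i' := by
  by_contra hi
  obtain ⟨j, hj⟩ := h.exists_apply_basis_ne_zero hv0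
  by_cases hji : L j = i
  · exact hj (h.mem_block_iff.mp hv' j (hji ▸ hi))
  · exact hj (h.mem_block_iff.mp hv j hji)

end IsRootBasis

end Blocks

section RootClasses

variable {F : Type*} [Field F] {V : Type*} [AddCommGroup V] [Module F V]
variable {B : LinearMap.BilinForm F V} {H : Subgroup (V ≃ₗ[F] V)} {g : V ≃ₗ[F] V} {u v : V}
variable {ι : Type*} {b : Basis ι F V} {j j' : ι}

variable (B H b) in
/-- Two members of the basis are linked if some root is orthogonal to neither of them. -/
def IsLinked (j j' : ι) : Prop := ∃ v, IsRoot B H v ∧ B v (b j) ≠ 0 ∧ B v (b j') ≠ 0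

variable (B H b) in
/-- The classes of the equivalence relation on the basis generated by `IsLinked`. -/
def RootClass : Type _ := Quot (IsLinked B H b)

variable (B H b) in
/-- The labelling of the basis by its classes; its blocks are the spans of the irreducible
components of the set of all roots. -/
def rootClass (j : ι) : RootClass B H b := Quot.mk _ j

variable (B H b) in
/-- The roots lying in the block of the class `κ`. -/
def classRoots (κ : RootClass B H b) : Set V :=
  {v | IsRoot B H v ∧ v ∈ block b (rootClass B H b) κ}

theorem iff_of_rootClass_eq {P : ι → Prop} (hP : ∀ j j', IsLinked B H b j j' → (P j ↔ P j'))
    (hj : rootClass B H b j = rootClass B H b j') : P j ↔ P j' :=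
  Quot.eqvGen_exact hj |>.rec hP (fun _ => Iff.rfl) (fun _ _ _ => Iff.symm)
    fun _ _ _ _ _ => Iff.trans

namespace IsRootBasis

variable {κ κ' : RootClass B H b}

theorem mem_block_rootClass (h : IsRootBasis B H b) (hv : IsRoot B H v) (hj : B v (b j) ≠ 0) :
    v ∈ block b (rootClass B H b) (rootClass B H b j) := by
  rw [h.mem_block_iff]
  intro j' hj'
  by_contra hvj'
  exact hj' (Quot.sound ⟨v, hv, hvj', hj⟩)

theorem exists_mem_block_rootClass (h : IsRootBasis B H b) (hv : IsRoot B H v) :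
    ∃ κ, v ∈ block b (rootClass B H b) κ := by
  obtain ⟨j, hj⟩ := h.exists_apply_basis_ne_zero hv.ne_zero
  exact ⟨_, h.mem_block_rootClass hv hj⟩

theorem basis_mem_classRoots (h : IsRootBasis B H b) (hj : rootClass B H b j = κ) :
    b j ∈ classRoots B H b κ := ⟨h.isRoot j, basis_mem_block hj⟩

theorem rootClass_eq_of_apply_ne_zero (h : IsRootBasis B H b) (hv : v ∈ classRoots B H b κ)
    (hj : B v (b j) ≠ 0) : rootClass B H b j = κ := by
  by_contra hne
  exact hj (h.mem_block_iff.mp hv.2 j hne)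

theorem basis_mem_of_classRoots_split (h : IsRootBasis B H b) {Ψ : Set V}
    (hΨ : Ψ ⊆ classRoots B H b κ) (hne : Ψ.Nonempty)
    (hsplit : ∀ u ∈ Ψ, ∀ v ∈ classRoots B H b κ \ Ψ, B u v = 0) (hj : rootClass B H b j = κ) :
    b j ∈ Ψ := by
  have hiff : ∀ {u v}, u ∈ classRoots B H b κ → v ∈ classRoots B H b κ → B u v ≠ 0 →
      (u ∈ Ψ ↔ v ∈ Ψ) := by
    refine fun {u v} hu hv huv => ⟨fun h' => ?_, fun h' => ?_⟩ <;> by_contra hn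
    · exact huv (hsplit u h' v ⟨hv, hn⟩)
    · exact huv ((h.isSymm.eq v u).symm.trans (hsplit v h' u ⟨hu, hn⟩))
  obtain ⟨u, hu⟩ := hne
  obtain ⟨i, hi⟩ := h.exists_apply_basis_ne_zero (hΨ hu).1.ne_zero
  have hiκ := h.rootClass_eq_of_apply_ne_zero (hΨ hu) hi
  have hiΨ : b i ∈ Ψ := (hiff (hΨ hu) (h.basis_mem_classRoots hiκ) hi).mp hu
  refine (iff_of_rootClass_eq (P := fun l => rootClass B H b l = κ → b l ∈ Ψ) ?_
    (hiκ.trans hj.symm)).mp (fun _ => hiΨ) hj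
  rintro l l' ⟨v, hv, hl, hl'⟩
  rw [show rootClass B H b l = rootClass B H b l' from Quot.sound ⟨v, hv, hl, hl'⟩]
  refine imp_congr_right fun hl'κ => ?_
  have hvκ : v ∈ classRoots B H b κ := ⟨hv, hl'κ ▸ h.mem_block_rootClass hv hl'⟩
  rw [← hiff hvκ (h.basis_mem_classRoots (h.rootClass_eq_of_apply_ne_zero hvκ hl)) hl,
    hiff hvκ (h.basis_mem_classRoots hl'κ) hl']

theorem isIrreducibleRootSet_classRoots (h : IsRootBasis B H b) (κ : RootClass B H b) :
    IsIrreducibleRootSet B (classRoots B H b κ) where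
  isSymm := h.isSymm
  apply_self_ne_zero u hu := hu.1.1
  reflection_mem u hu v hv := by
    refine ⟨h.isRoot_apply hu.1.2 hv.1, ?_⟩
    rw [reflection_apply]
    exact Submodule.sub_mem _ hv.2 (Submodule.smul_mem _ _ hu.2)
  connected Ψ hΨ hne hsplit := by
    refine hΨ.antisymm fun v hv => ?_
    by_contra hvΨ
    obtain ⟨j, hj⟩ := h.exists_apply_basis_ne_zero hv.1.ne_zero
    refine hj ?_
    rw [← h.isSymm.eq]
    exact hsplit _ (h.basis_mem_of_classRoots_split hΨ hne hsplit
      (h.rootClass_eq_of_apply_ne_zero hv hj)) v ⟨hv, hvΨ⟩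
  nondegenerate x hx hperp := by
    have hxκ : x ∈ block b (rootClass B H b) κ := Submodule.span_le.mpr (fun v hv => hv.2) hx
    refine h.eq_zero_of_forall_apply_basis fun j => ?_
    by_cases hj : rootClass B H b j = κ
    · rw [← h.isSymm.eq]
      exact hperp _ (h.basis_mem_classRoots hj)
    · exact h.mem_block_iff.mp hxκ j hj
  eq_zero_of_add_mem u hu e hee hue hmem := h.eq_zero_of_isRoot_add u e hee hue hu.1 hmem.1

theorem ncard_rootClass_le_four [NeZero (2 : F)] [Finite F] [Finite ι] [Group.IsSolvable H]
    (h : IsRootBasis B H b) (κ : RootClass B H b) : (rootClass B H b ⁻¹' {κ}).ncard ≤ 4 := by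
  have : FiniteDimensional F V := Module.Finite.of_basis b
  have := Fintype.ofFinite (rootClass B H b ⁻¹' {κ})
  have hle : reflectionGroup B (classRoots B H b κ) ≤ H := by
    rw [reflectionGroup, Subgroup.closure_le]
    rintro _ ⟨v, hv, rfl⟩
    exact hv.1.2
  have : Group.IsSolvable (reflectionGroup B (classRoots B H b κ)) :=
    Group.isSolvable_of_isSolvable_injective (Subgroup.inclusion_injective hle)
  refine le_trans ?_ (h.isIrreducibleRootSet_classRoots κ).finrank_span_le_four
  have hli : LinearIndependent F fun j : rootClass B H b ⁻¹' {κ} => b j :=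
    b.linearIndependent.comp _ Subtype.val_injective
  rw [← Nat.card_coe_set_eq, Nat.card_eq_fintype_card, ← finrank_span_eq_card hli]
  refine Submodule.finrank_mono (Submodule.span_mono ?_)
  rintro _ ⟨j, rfl⟩
  exact h.basis_mem_classRoots j.2

theorem exists_mapsTo_block_rootClass (h : IsRootBasis B H b) (hg : g ∈ H) :
    ∃ f : RootClass B H b → RootClass B H b,
      ∀ κ, ∀ v ∈ block b (rootClass B H b) κ, g v ∈ block b (rootClass B H b) (f κ) := by
  choose c hc using fun (v : V) (hv : IsRoot B H v) =>
    h.exists_mem_block_rootClass (h.isRoot_apply hg hv)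
  obtain ⟨μ, hμ, hgμ⟩ := h.similitude g hg
  have hadj : ∀ {u v} (hu : IsRoot B H u) (hv : IsRoot B H v), B u v ≠ 0 → c u hu = c v hv := by
    intro u v hu hv huv
    by_contra hne
    refine mul_ne_zero hμ huv ?_
    rw [← hgμ, h.apply_eq_zero_of_mem_block hne (hc u hu) (hc v hv)]
  refine ⟨Quot.lift (fun j => c (b j) (h.isRoot j)) ?_, fun κ => ?_⟩
  · rintro j j' ⟨v, hv, hj, hj'⟩
    rw [← hadj hv (h.isRoot j) hj, ← hadj hv (h.isRoot j') hj']
  · change block b _ κ ≤ (block b _ _).comap (g : V →ₗ[F] V)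
    refine block_le ?_
    rintro j rfl
    exact hc _ (h.isRoot j)

theorem exists_permutesBlocks_rootClass (h : IsRootBasis B H b) (hg : g ∈ H) :
    ∃ σ, PermutesBlocks b (rootClass B H b) σ g := by
  obtain ⟨f, hf⟩ := h.exists_mapsTo_block_rootClass hg
  obtain ⟨f', hf'⟩ := h.exists_mapsTo_block_rootClass (H.inv_mem hg)
  refine ⟨⟨f, f', Quot.ind fun j => ?_, Quot.ind fun j => ?_⟩, hf⟩
  · have hj := hf' _ _ (hf _ (b j) (basis_mem_block rfl))
    rw [show g⁻¹ (g (b j)) = b j from g.symm_apply_apply _] at hj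
    exact h.eq_of_mem_block (b.ne_zero j) hj (basis_mem_block rfl)
  · have hj := hf _ _ (hf' _ (b j) (basis_mem_block rfl))
    rw [show g (g⁻¹ (b j)) = b j from g.apply_symm_apply _] at hj
    exact h.eq_of_mem_block (b.ne_zero j) hj (basis_mem_block rfl)

end IsRootBasis

end RootClasses

section MergeSingletons

variable {F : Type*} [Field F] {V : Type*} [AddCommGroup V] [Module F V]
variable {B : LinearMap.BilinForm F V} {H : Subgroup (V ≃ₗ[F] V)} {g : V ≃ₗ[F] V}
variable {ι I : Type*} {b : Basis ι F V} {L : ι → I} {σ : Equiv.Perm I} {i : I} {j : ι}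

open Classical in
/-- The coarser labelling in which all labels that occur at most once are replaced by `none`. -/
noncomputable def mergeSingletons (L : ι → I) (j : ι) : Option {i // (L ⁻¹' {i}).Nontrivial} :=
  if hj : (L ⁻¹' {L j}).Nontrivial then some ⟨L j, hj⟩ else none

theorem mergeSingletons_eq_some_iff {i : {i // (L ⁻¹' {i}).Nontrivial}} :
    mergeSingletons L j = some i ↔ L j = i := by
  unfold mergeSingletons
  split_ifs with hj
  · rw [Option.some_inj, Subtype.ext_iff]
  · exact iff_of_false nofun fun hji => hj (hji ▸ i.2)

theorem mergeSingletons_eq_none_iff :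
    mergeSingletons L j = none ↔ (L ⁻¹' {L j}).Subsingleton := by
  unfold mergeSingletons
  split_ifs with hj
  · exact iff_of_false nofun (Set.not_subsingleton_iff.mpr hj)
  · exact iff_of_true rfl (Set.not_nontrivial_iff.mp hj)

theorem mergeSingletons_preimage_some (i : {i // (L ⁻¹' {i}).Nontrivial}) :
    mergeSingletons L ⁻¹' {some i} = L ⁻¹' {↑i} :=
  Set.ext fun _ => mergeSingletons_eq_some_iff

theorem mergeSingletons_mergeSingletons_none_subsingleton (L : ι → I) :
    (mergeSingletons (mergeSingletons L) ⁻¹' {none}).Subsingleton := by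
  have hnone : ∀ j, mergeSingletons (mergeSingletons L) j = none → mergeSingletons L j = none := by
    intro j hj
    by_contra hne
    obtain ⟨i, hi⟩ := Option.ne_none_iff_exists'.mp hne
    have hsub := mergeSingletons_eq_none_iff.mp hj
    rw [hi, mergeSingletons_preimage_some] at hsub
    exact Set.not_subsingleton_iff.mpr i.2 hsub
  intro j hj j' hj'
  exact mergeSingletons_eq_none_iff.mp hj rfl ((hnone j' hj').trans (hnone j hj).symm)

theorem finite_nontrivial_preimage [Finite ι] (L : ι → I) :
    Finite {i // (L ⁻¹' {i}).Nontrivial} := by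
  choose f hf using fun i : {i // (L ⁻¹' {i}).Nontrivial} => i.2.nonempty
  exact Finite.of_injective f fun i i' hii' =>
    Subtype.ext ((hf i).symm.trans ((congrArg L hii').trans (hf i')))

namespace IsRootBasis

theorem nontrivial_preimage_iff (h : IsRootBasis B H b) :
    (L ⁻¹' {i}).Nontrivial ↔
      ∃ u ∈ block b L i, ∃ v ∈ block b L i, B u u ≠ 0 ∧ B v v ≠ 0 ∧ B u v = 0 := by
  constructor
  · rintro ⟨j, hj, j', hj', hne⟩
    exact ⟨b j, basis_mem_block hj, b j', basis_mem_block hj', h.apply_self_ne_zero j,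
      h.apply_self_ne_zero j', h.orthogonal j j' hne⟩
  · rintro ⟨u, hu, v, hv, huu, hvv, huv⟩
    by_contra hi
    obtain hi | ⟨j, hj⟩ := (Set.not_nontrivial_iff.mp hi).eq_empty_or_singleton
    · rw [block, hi, Set.image_empty, Submodule.span_empty, Submodule.mem_bot] at hu
      exact huu (by simp [hu])
    · rw [block, hj, Set.image_singleton, Submodule.mem_span_singleton] at hu hv
      obtain ⟨x, rfl⟩ := hu
      obtain ⟨y, rfl⟩ := hv
      simp_all [h.apply_self_ne_zero j]

theorem mem_block_iff_forall_apply_eq_zero (h : IsRootBasis B H b) {v : V} :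
    v ∈ block b L i ↔ ∀ i', i' ≠ i → ∀ w ∈ block b L i', B v w = 0 := by
  refine ⟨fun hv i' hi' w hw => h.apply_eq_zero_of_mem_block hi'.symm hv hw, fun hv => ?_⟩
  exact h.mem_block_iff.mpr fun j hj => hv _ hj _ (basis_mem_block rfl)

theorem permutesBlocks_inv (h : IsRootBasis B H b) (hg : g ∈ H) (hσ : PermutesBlocks b L σ g) :
    PermutesBlocks b L σ⁻¹ g⁻¹ := by
  obtain ⟨μ, hμ, hgμ⟩ := h.similitude g hg
  intro i v hv
  rw [h.mem_block_iff_forall_apply_eq_zero]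
  intro i' hi' w hw
  refine (mul_eq_zero.mp ?_).resolve_left hμ
  rw [← hgμ, show g (g⁻¹ v) = v from g.apply_symm_apply v]
  exact h.apply_eq_zero_of_mem_block (fun hi => hi' (by simp [hi])) hv (hσ i' w hw)

theorem nontrivial_preimage_of_permutesBlocks (h : IsRootBasis B H b) (hg : g ∈ H)
    (hσ : PermutesBlocks b L σ g) (hi : (L ⁻¹' {i}).Nontrivial) : (L ⁻¹' {σ i}).Nontrivial := by
  obtain ⟨μ, hμ, hgμ⟩ := h.similitude g hg
  obtain ⟨u, hu, v, hv, huu, hvv, huv⟩ := h.nontrivial_preimage_iff.mp hi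
  refine h.nontrivial_preimage_iff.mpr ⟨g u, hσ i u hu, g v, hσ i v hv, ?_, ?_, ?_⟩
  · exact hgμ u u ▸ mul_ne_zero hμ huu
  · exact hgμ v v ▸ mul_ne_zero hμ hvv
  · rw [hgμ, huv, mul_zero]

theorem mem_block_mergeSingletons_none_iff (h : IsRootBasis B H b) {v : V} :
    v ∈ block b (mergeSingletons L) none ↔
      ∀ i, (L ⁻¹' {i}).Nontrivial → ∀ w ∈ block b L i, B v w = 0 := by
  rw [h.mem_block_iff_forall_apply_eq_zero, Option.forall]
  simp only [ne_eq, not_true_eq_false, false_implies, reduceCtorEq, not_false_eq_true, true_implies,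
    true_and, Subtype.forall, block, mergeSingletons_preimage_some]

theorem exists_permutesBlocks_mergeSingletons [Finite ι] (h : IsRootBasis B H b) (hg : g ∈ H)
    (hσ : PermutesBlocks b L σ g) :
    ∃ τ : Equiv.Perm {i // (L ⁻¹' {i}).Nontrivial},
      PermutesBlocks b (mergeSingletons L) τ.optionCongr g := by
  have := finite_nontrivial_preimage L
  refine ⟨σ.subtypePermOfFintype fun _ => h.nontrivial_preimage_of_permutesBlocks hg hσ, ?_⟩
  rintro (_ | i) v hv
  · change g v ∈ block b _ none
    rw [h.mem_block_mergeSingletons_none_iff] at hv ⊢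
    obtain ⟨μ, -, hgμ⟩ := h.similitude g hg
    intro i hi w hw
    have hσ' := h.permutesBlocks_inv hg hσ
    rw [← show g (g⁻¹ w) = w from g.apply_symm_apply w, hgμ,
      hv _ (h.nontrivial_preimage_of_permutesBlocks (H.inv_mem hg) hσ' hi) _ (hσ' i w hw),
      mul_zero]
  · rw [block, mergeSingletons_preimage_some] at hv
    change g v ∈ block b _ (some _)
    rw [block, mergeSingletons_preimage_some]
    exact hσ i v hv

theorem mergeSingletons_rootClass_none_ncard_le [Finite ι] (h : IsRootBasis B H b) (m : ι → ι)
    (hm : ∀ j, IsRoot B H (b j + b (m j))) :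
    (mergeSingletons (rootClass B H b) ⁻¹' {none}).ncard ≤ {j | m j = j}.ncard := by
  refine Set.ncard_le_ncard fun j hj => ?_
  by_contra hne
  have hlink : IsLinked B H b j (m j) := by
    refine ⟨_, hm j, ?_, ?_⟩
    · simpa [h.orthogonal _ _ hne] using h.apply_self_ne_zero j
    · simpa [h.orthogonal _ _ (Ne.symm hne)] using h.apply_self_ne_zero (m j)
  exact hne (mergeSingletons_eq_none_iff.mp hj (Quot.sound hlink).symm rfl)

/-- The first merge puts at most two vectors, fixed points of `m`, into the block `none`. The second
one turns this block into a proper one if it has two members. -/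
theorem exists_labelling [NeZero (2 : F)] [Finite F] [Finite ι] [Group.IsSolvable H]
    (h : IsRootBasis B H b) (m : ι → ι) (hfix : {j | m j = j}.ncard ≤ 2)
    (hm : ∀ j, IsRoot B H (b j + b (m j))) :
    ∃ (k : ℕ) (L : ι → Option (Fin k)),
      (∀ i, (L ⁻¹' {some i}).Nontrivial) ∧ (∀ i, (L ⁻¹' {some i}).ncard ≤ 4) ∧
      (L ⁻¹' {none}).Subsingleton ∧
      ∀ g ∈ H, ∃ τ : Equiv.Perm (Fin k), PermutesBlocks b L τ.optionCongr g := by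
  let L₁ := mergeSingletons (rootClass B H b)
  have hle₁ : ∀ o, (L₁ ⁻¹' {o}).ncard ≤ 4 := by
    rintro (_ | κ)
    · exact (h.mergeSingletons_rootClass_none_ncard_le m hm).trans (hfix.trans (by norm_num))
    · exact (congrArg Set.ncard (mergeSingletons_preimage_some κ)).trans_le
        (h.ncard_rootClass_le_four κ)
  have := finite_nontrivial_preimage L₁
  obtain ⟨k, ⟨e⟩⟩ := Finite.exists_equiv_fin {o // (L₁ ⁻¹' {o}).Nontrivial}
  have hfib : ∀ o, e.optionCongr ∘ mergeSingletons L₁ ⁻¹' {e.optionCongr o} =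
      mergeSingletons L₁ ⁻¹' {o} := fun o => by
    rw [Set.preimage_comp, ← Set.image_singleton, e.optionCongr.injective.preimage_image]
  refine ⟨k, e.optionCongr ∘ mergeSingletons L₁, e.surjective.forall.mpr fun o => ?_,
    e.surjective.forall.mpr fun o => ?_, ?_, fun g hg => ?_⟩
  · exact (congrArg Set.Nontrivial
      ((hfib (some o)).trans (mergeSingletons_preimage_some o))).mpr o.2
  · exact (congrArg Set.ncard ((hfib (some o)).trans (mergeSingletons_preimage_some o))).trans_le
      (hle₁ o)
  · exact (congrArg Set.Subsingleton (hfib none)).mpr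
      (mergeSingletons_mergeSingletons_none_subsingleton _)
  · obtain ⟨σ, hσ⟩ := h.exists_permutesBlocks_rootClass hg
    obtain ⟨τ₁, hτ₁⟩ := h.exists_permutesBlocks_mergeSingletons hg hσ
    obtain ⟨τ, hτ⟩ := h.exists_permutesBlocks_mergeSingletons hg hτ₁
    have hcongr : (e.permCongr τ).optionCongr = e.optionCongr.permCongr τ.optionCongr :=
      Equiv.ext fun o => by rcases o with _ | i <;> rfl
    exact ⟨e.permCongr τ, hcongr ▸ hτ.comp_equiv e.optionCongr⟩

end IsRootBasis

end MergeSingletons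

section Clusters

variable {F : Type*} [Field F] {V : Type*} [AddCommGroup V] [Module F V]
variable {B : LinearMap.BilinForm F V} {H : Subgroup (V ≃ₗ[F] V)}
variable {ι I κ : Type*} [Fintype I] [DecidableEq κ] {b : Basis ι F V} {L : ι → I}
variable {J : I → κ} {u : I → V} {i i' : I} {v w : V}

/-- The sum of the vectors `u i` whose index belongs to the cluster `c`. -/
def clusterVector (J : I → κ) (u : I → V) (c : κ) : V := ∑ i with J i = c, u i

variable (B) in
/-- The value `∑ B(u i, u i)` over a cluster; for an orthogonal family `u` it is the value of the
form at the cluster vector. -/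
def clusterNorm (J : I → κ) (u : I → V) (c : κ) : F := ∑ i with J i = c, B (u i) (u i)

variable (B) in
/-- The product of the commuting reflections in the cluster vectors of an orthogonal family `u`. As
`u i` and the cluster vector of `i` have the same product with every vector of the block of `i`, the
coefficients can be read off from the `u i`. -/
noncomputable def clusterMap (J : I → κ) (u : I → V) : V →ₗ[F] V :=
  LinearMap.id -
    ∑ i, ((2 / clusterNorm B J u (J i)) • B.flip (u i)).smulRight (clusterVector J u (J i))

theorem clusterMap_apply (J : I → κ) (u : I → V) (v : V) :
    clusterMap B J u v =
      v - ∑ i, (2 / clusterNorm B J u (J i) * B v (u i)) • clusterVector J u (J i) := by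
  simp [clusterMap, LinearMap.sum_apply]

theorem apply_clusterMap_left (hB : B.IsSymm) (J : I → κ) (u : I → V)
    (v w : V) : B (clusterMap B J u v) w = B v (clusterMap B J u w) := by
  rw [clusterMap_apply, clusterMap_apply, map_sub, LinearMap.sub_apply, map_sub, map_sum, map_sum,
    LinearMap.sum_apply]
  simp only [map_smul, LinearMap.smul_apply, smul_eq_mul, clusterVector, map_sum,
    LinearMap.sum_apply, Finset.mul_sum, Finset.sum_filter]
  rw [Finset.sum_comm]
  congr 1
  refine Finset.sum_congr rfl fun i _ => Finset.sum_congr rfl fun i' _ => ?_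
  by_cases hJ : J i = J i'
  · rw [if_pos hJ, if_pos hJ.symm, hJ, hB.eq w (u i)]
    ring
  · rw [if_neg hJ, if_neg (Ne.symm hJ)]
    simp

variable (B b) in
/-- A family of vectors, one in each block and each zero or anisotropic, grouped into clusters by
`J`. The last axiom is the non-degeneracy of a cluster which forces a similitude that is compatible
with the involution `clusterMap` to respect `u`. -/
structure IsClusterFamily (L : ι → I) (J : I → κ) (u : I → V) : Prop where
  mem_block : ∀ i, u i ∈ block b L i
  apply_self_ne_zero : ∀ i, u i ≠ 0 → B (u i) (u i) ≠ 0
  clusterNorm_ne_zero : ∀ i, u i ≠ 0 → clusterNorm B J u (J i) ≠ 0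
  exists_ne : ∀ i, u i ≠ 0 → ∃ i₁, i₁ ≠ i ∧ J i₁ = J i ∧ u i₁ ≠ 0 ∧
    (2 * B (u i) (u i) ≠ clusterNorm B J u (J i) ∨
      ∃ i₂, i₂ ≠ i ∧ i₂ ≠ i₁ ∧ J i₂ = J i ∧ u i₂ ≠ 0)

namespace IsClusterFamily

theorem clusterVector_apply (hc : IsClusterFamily B b L J u) (h : IsRootBasis B H b) (c : κ)
    (hw : w ∈ block b L i) :
    B (clusterVector J u c) w = if J i = c then B (u i) w else 0 := by
  rw [clusterVector, map_sum, LinearMap.sum_apply, Finset.sum_filter, Finset.sum_eq_single i]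
  · intro i' _ hne
    rw [h.apply_eq_zero_of_mem_block hne (hc.mem_block i') hw, ite_self]
  · exact fun hi => absurd (Finset.mem_univ i) hi

theorem clusterMap_apply_of_mem_block (hc : IsClusterFamily B b L J u) (h : IsRootBasis B H b)
    (hv : v ∈ block b L i) : clusterMap B J u v =
      v - (2 / clusterNorm B J u (J i) * B v (u i)) • clusterVector J u (J i) := by
  rw [clusterMap_apply, Finset.sum_eq_single i]
  · intro i' _ hne
    rw [h.apply_eq_zero_of_mem_block hne.symm hv (hc.mem_block i'), mul_zero, zero_smul]
  · exact fun hi => absurd (Finset.mem_univ i) hi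

theorem clusterMap_clusterVector (hc : IsClusterFamily B b L J u) (h : IsRootBasis B H b)
    (hi : u i ≠ 0) :
    clusterMap B J u (clusterVector J u (J i)) = -clusterVector J u (J i) := by
  have hsum : ∑ i', (2 / clusterNorm B J u (J i') * B (clusterVector J u (J i)) (u i')) •
      clusterVector J u (J i') =
        (2 / clusterNorm B J u (J i) * clusterNorm B J u (J i)) • clusterVector J u (J i) := by
    conv_rhs => rw [clusterNorm.eq_1 B J u (J i), Finset.mul_sum, Finset.sum_smul,
      Finset.sum_filter, ← clusterNorm]
    refine Finset.sum_congr rfl fun i' _ => ?_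
    rw [hc.clusterVector_apply h _ (hc.mem_block i')]
    split_ifs with hJ
    · rw [hJ]
    · rw [mul_zero, zero_smul]
  rw [clusterMap_apply, hsum, div_mul_cancel₀ _ (hc.clusterNorm_ne_zero i hi), two_smul]
  abel

theorem clusterMap_involutive (hc : IsClusterFamily B b L J u) (h : IsRootBasis B H b) :
    Function.Involutive (clusterMap B J u) := by
  intro v
  have hneg : clusterMap B J u
      (∑ i, (2 / clusterNorm B J u (J i) * B v (u i)) • clusterVector J u (J i)) =
        -∑ i, (2 / clusterNorm B J u (J i) * B v (u i)) • clusterVector J u (J i) := by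
    rw [map_sum, ← Finset.sum_neg_distrib]
    refine Finset.sum_congr rfl fun i _ => ?_
    by_cases hi : u i = 0
    · simp [hi]
    · rw [map_smul, hc.clusterMap_clusterVector h hi, smul_neg]
  nth_rewrite 2 [clusterMap_apply]
  rw [map_sub, hneg, clusterMap_apply]
  abel

theorem clusterMap_isometry (hc : IsClusterFamily B b L J u) (h : IsRootBasis B H b) (v w : V) :
    B (clusterMap B J u v) (clusterMap B J u w) = B v w := by
  rw [apply_clusterMap_left h.isSymm, hc.clusterMap_involutive h]

/-- The involutive isometry `clusterMap B J u` of a cluster family as an automorphism of `V`. -/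
noncomputable def clusterEquiv (hc : IsClusterFamily B b L J u) (h : IsRootBasis B H b) :
    V ≃ₗ[F] V :=
  LinearEquiv.ofInvolutive (clusterMap B J u) (hc.clusterMap_involutive h)

theorem clusterEquiv_mul_self (hc : IsClusterFamily B b L J u) (h : IsRootBasis B H b) :
    hc.clusterEquiv h * hc.clusterEquiv h = 1 :=
  LinearEquiv.ext (hc.clusterMap_involutive h)

theorem clusterEquiv_isometry (hc : IsClusterFamily B b L J u) (h : IsRootBasis B H b) (v w : V) :
    B (hc.clusterEquiv h v) (hc.clusterEquiv h w) = B v w :=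
  hc.clusterMap_isometry h v w

end IsClusterFamily

end Clusters

section Compatible

variable {F : Type*} [Field F] {V : Type*} [AddCommGroup V] [Module F V]
variable {B : LinearMap.BilinForm F V} {H : Subgroup (V ≃ₗ[F] V)}
variable {ι I κ : Type*} [Fintype I] [DecidableEq κ] {b : Basis ι F V} {L : ι → I}
variable {J : I → κ} {u : I → V} {i i' i'' : I} {v w : V}
variable {g g' : V ≃ₗ[F] V} {τ τ' : Equiv.Perm I} {μ α α' β : F}

variable (B b) in
/-- A similitude `g` and its conjugate `g'` by the involution `clusterMap B J u`, both permuting the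
blocks and preserving the support of `u`. By the last axiom `g` and `g'` move the block of `i` in
the same way if that block is the line of `u i`; for larger blocks this is a consequence. -/
structure IsConjugatePair (L : ι → I) (J : I → κ) (u : I → V) (g g' : V ≃ₗ[F] V)
    (τ τ' : Equiv.Perm I) (μ : F) : Prop where
  factor_ne_zero : μ ≠ 0
  similitude : ∀ x y, B (g x) (g y) = μ * B x y
  comm : ∀ v, clusterMap B J u (g v) = g' (clusterMap B J u v)
  permutesBlocks : PermutesBlocks b L τ g
  permutesBlocks' : PermutesBlocks b L τ' g'
  support : ∀ i, u i ≠ 0 → u (τ i) ≠ 0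
  support' : ∀ i, u i ≠ 0 → u (τ' i) ≠ 0
  eq_or_exists_orthogonal : ∀ i, u i ≠ 0 →
    τ i = τ' i ∨ ∃ v ∈ block b L i, v ≠ 0 ∧ B v (u i) = 0

namespace IsConjugatePair

theorem symm (a : IsConjugatePair B b L J u g g' τ τ' μ) (hc : IsClusterFamily B b L J u)
    (h : IsRootBasis B H b) : IsConjugatePair B b L J u g' g τ' τ μ := by
  have hg' : ∀ v, g' v = clusterMap B J u (g (clusterMap B J u v)) := by
    intro v
    rw [a.comm, hc.clusterMap_involutive h]
  refine ⟨a.factor_ne_zero, fun x y => ?_, fun v => ?_, a.permutesBlocks', a.permutesBlocks,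
    a.support', a.support, fun i hi => (a.eq_or_exists_orthogonal i hi).imp_left Eq.symm⟩
  · rw [hg', hg', hc.clusterMap_isometry h, a.similitude, hc.clusterMap_isometry h]
  · rw [hg', hc.clusterMap_involutive h]

theorem comm_apply (a : IsConjugatePair B b L J u g g' τ τ' μ) (hc : IsClusterFamily B b L J u)
    (h : IsRootBasis B H b) (hv : v ∈ block b L i) (w : V) :
    B (g v) w - 2 / clusterNorm B J u (J (τ i)) * B (g v) (u (τ i)) *
        B (clusterVector J u (J (τ i))) w =
      B (g' v) w - 2 / clusterNorm B J u (J i) * B v (u i) *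
        B (g' (clusterVector J u (J i))) w := by
  have hcomm := congrArg (B · w) (a.comm v)
  simpa only [hc.clusterMap_apply_of_mem_block h (a.permutesBlocks i v hv),
    hc.clusterMap_apply_of_mem_block h hv, map_sub, map_smul, LinearMap.sub_apply,
    LinearMap.smul_apply, smul_eq_mul] using hcomm

theorem apply_eq_zero_of_apply_eq_zero [NeZero (2 : F)]
    (a : IsConjugatePair B b L J u g g' τ τ' μ) (hc : IsClusterFamily B b L J u)
    (h : IsRootBasis B H b) (hi : u i ≠ 0) (hv : v ∈ block b L i) (hvu : B v (u i) = 0) :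
    B (g v) (u (τ i)) = 0 := by
  by_contra hne
  have hN := hc.clusterNorm_ne_zero _ (a.support i hi)
  have hβ : 2 / clusterNorm B J u (J (τ i)) * B (g v) (u (τ i)) ≠ 0 :=
    mul_ne_zero (div_ne_zero two_ne_zero hN) hne
  -- `clusterMap (g v) = g' v` has a nonzero component in every block of the cluster of `τ i`.
  have heq : ∀ w, B (g v) w - 2 / clusterNorm B J u (J (τ i)) * B (g v) (u (τ i)) *
      B (clusterVector J u (J (τ i))) w = B (g' v) w := by
    intro w
    rw [a.comm_apply hc h hv, hvu, mul_zero, zero_mul, sub_zero]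
  have hτ' : ∀ i₁, i₁ ≠ τ i → J i₁ = J (τ i) → u i₁ ≠ 0 → τ' i = i₁ := by
    intro i₁ hi₁ hJ₁ hu₁
    by_contra hcon
    have h₁ := heq (u i₁)
    rw [h.apply_eq_zero_of_mem_block hi₁.symm (a.permutesBlocks i v hv) (hc.mem_block i₁),
      h.apply_eq_zero_of_mem_block hcon (a.permutesBlocks' i v hv) (hc.mem_block i₁),
      hc.clusterVector_apply h _ (hc.mem_block i₁), if_pos hJ₁, zero_sub, neg_eq_zero] at h₁
    exact mul_ne_zero hβ (hc.apply_self_ne_zero _ hu₁) h₁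
  obtain ⟨i₁, hi₁, hJ₁, hu₁, hdouble | ⟨i₂, hi₂, hi₂₁, hJ₂, hu₂⟩⟩ :=
    hc.exists_ne _ (a.support i hi)
  · have h₁ := heq (u (τ i))
    rw [h.apply_eq_zero_of_mem_block (i := τ' i) (by rwa [hτ' i₁ hi₁ hJ₁ hu₁])
      (a.permutesBlocks' i v hv) (hc.mem_block (τ i)),
      hc.clusterVector_apply h _ (hc.mem_block (τ i)), if_pos rfl] at h₁
    field_simp at h₁
    have hzero : B (g v) (u (τ i)) *
        (clusterNorm B J u (J (τ i)) - 2 * B (u (τ i)) (u (τ i))) = 0 := by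
      linear_combination h₁
    exact hdouble (sub_eq_zero.mp ((mul_eq_zero.mp hzero).resolve_left hne)).symm
  · exact hi₂₁ ((hτ' i₂ hi₂ hJ₂ hu₂).symm.trans (hτ' i₁ hi₁ hJ₁ hu₁))

theorem perm_apply_eq [NeZero (2 : F)] (a : IsConjugatePair B b L J u g g' τ τ' μ)
    (hc : IsClusterFamily B b L J u) (h : IsRootBasis B H b) (hi : u i ≠ 0) : τ i = τ' i := by
  obtain heq | ⟨v, hv, hv0, hvu⟩ := a.eq_or_exists_orthogonal i hi
  · exact heq
  · have hgv : g v = g' v := by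
      have hcomm := a.comm v
      rwa [hc.clusterMap_apply_of_mem_block h (a.permutesBlocks i v hv),
        hc.clusterMap_apply_of_mem_block h hv, a.apply_eq_zero_of_apply_eq_zero hc h hi hv hvu, hvu,
        mul_zero, mul_zero, zero_smul, zero_smul, sub_zero, sub_zero] at hcomm
    exact h.eq_of_mem_block (g.map_ne_zero_iff.mpr hv0) (a.permutesBlocks i v hv)
      (hgv ▸ a.permutesBlocks' i v hv)

theorem exists_apply_eq_mul [NeZero (2 : F)] (a : IsConjugatePair B b L J u g g' τ τ' μ)
    (hc : IsClusterFamily B b L J u) (h : IsRootBasis B H b) (hi : u i ≠ 0) :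
    ∃ d, ∀ v, B (g v) (u (τ i)) = d * B v (u i) := by
  have hQ := hc.apply_self_ne_zero i hi
  have hlin : B.flip (u (τ i)) ∘ₗ (g : V →ₗ[F] V) =
      (B (g (u i)) (u (τ i)) / B (u i) (u i)) • B.flip (u i) := by
    refine b.ext fun j => ?_
    simp only [LinearMap.comp_apply, LinearEquiv.coe_coe, LinearMap.BilinForm.flip_apply,
      LinearMap.smul_apply, smul_eq_mul]
    by_cases hj : L j = i
    · have hmem : b j - (B (b j) (u i) / B (u i) (u i)) • u i ∈ block b L i :=
        Submodule.sub_mem _ (basis_mem_block hj) (Submodule.smul_mem _ _ (hc.mem_block i))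
      have hzero := a.apply_eq_zero_of_apply_eq_zero hc h hi hmem (by simp [hQ])
      rw [map_sub, map_smul, map_sub, LinearMap.sub_apply, map_smul, LinearMap.smul_apply,
        smul_eq_mul] at hzero
      linear_combination hzero
    · have hbj := basis_mem_block (b := b) (rfl : L j = L j)
      rw [h.apply_eq_zero_of_mem_block (fun hcon => hj (τ.injective hcon))
        (a.permutesBlocks _ _ hbj) (hc.mem_block (τ i)),
        h.apply_eq_zero_of_mem_block hj hbj (hc.mem_block i), mul_zero]
  exact ⟨_, fun v => LinearMap.congr_fun hlin v⟩

theorem exists_apply_eq_smul [NeZero (2 : F)] (a : IsConjugatePair B b L J u g g' τ τ' μ)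
    (hc : IsClusterFamily B b L J u) (h : IsRootBasis B H b) (hi : u i ≠ 0) :
    ∃ α : F, α ≠ 0 ∧ g (u i) = α • u (τ i) := by
  obtain ⟨d, hd⟩ := a.exists_apply_eq_mul hc h hi
  have heq : u (τ i) - (d / μ) • g (u i) = 0 := by
    refine h.eq_zero_of_forall_apply_basis fun j => ?_
    obtain ⟨w, hw⟩ := g.surjective (b j)
    rw [← hw, map_sub, map_smul, LinearMap.sub_apply, LinearMap.smul_apply, smul_eq_mul,
      a.similitude, h.isSymm.eq, hd, h.isSymm.eq w, ← mul_assoc,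
      div_mul_cancel₀ _ a.factor_ne_zero, sub_self]
  rw [sub_eq_zero] at heq
  have hd0 : d / μ ≠ 0 := by
    intro hzero
    rw [hzero, zero_smul] at heq
    exact a.support i hi heq
  exact ⟨(d / μ)⁻¹, inv_ne_zero hd0, by rw [heq, smul_smul, inv_mul_cancel₀ hd0, one_smul]⟩

theorem factor_mul_apply_self (a : IsConjugatePair B b L J u g g' τ τ' μ)
    (hα : g (u i) = α • u (τ i)) :
    μ * B (u i) (u i) = α ^ 2 * B (u (τ i)) (u (τ i)) := by
  rw [← a.similitude, hα, map_smul, map_smul, LinearMap.smul_apply, smul_eq_mul, smul_eq_mul]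
  ring

theorem apply_apply_eq_zero [NeZero (2 : F)] (a : IsConjugatePair B b L J u g g' τ τ' μ)
    (hc : IsClusterFamily B b L J u) (h : IsRootBasis B H b) (hi' : u i' ≠ 0) (hne : i ≠ i')
    (hv : v ∈ block b L i) : B (g' v) (u (τ i')) = 0 := by
  refine h.apply_eq_zero_of_mem_block ?_ (a.permutesBlocks' i v hv) (hc.mem_block _)
  rw [a.perm_apply_eq hc h hi']
  exact fun hcon => hne (τ'.injective hcon)

theorem apply_clusterVector [NeZero (2 : F)] (a : IsConjugatePair B b L J u g g' τ τ' μ)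
    (hc : IsClusterFamily B b L J u) (h : IsRootBasis B H b) (hi' : u i' ≠ 0) (hJ : J i' = J i)
    (hα' : g' (u i') = α' • u (τ i')) :
    B (g' (clusterVector J u (J i))) (u (τ i')) = α' * B (u (τ i')) (u (τ i')) := by
  rw [clusterVector, map_sum, map_sum, LinearMap.sum_apply, Finset.sum_eq_single i']
  · rw [hα', map_smul, LinearMap.smul_apply, smul_eq_mul]
  · exact fun j _ hj => a.apply_apply_eq_zero hc h hi' hj (hc.mem_block j)
  · exact fun hi => absurd hJ (by simpa using hi)

/-- The component of `clusterMap (g (u i)) = g' (clusterMap (u i))` in the block of `τ i'`. -/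
theorem comm_apply_self [NeZero (2 : F)] (a : IsConjugatePair B b L J u g g' τ τ' μ)
    (hc : IsClusterFamily B b L J u) (h : IsRootBasis B H b) (hi' : u i' ≠ 0) (hne : i' ≠ i)
    (hJ : J i' = J i) (hα : g (u i) = α • u (τ i)) (hα' : g' (u i') = α' • u (τ i')) :
    2 / clusterNorm B J u (J (τ i)) * (α * B (u (τ i)) (u (τ i))) *
        (if J (τ i') = J (τ i) then B (u (τ i')) (u (τ i')) else 0) =
      2 / clusterNorm B J u (J i) * B (u i) (u i) * (α' * B (u (τ i')) (u (τ i'))) := by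
  have heq := a.comm_apply hc h (hc.mem_block i) (u (τ i'))
  have hzero : B (u (τ i)) (u (τ i')) = 0 :=
    h.apply_eq_zero_of_mem_block (fun hcon => hne (τ.injective hcon).symm)
      (hc.mem_block _) (hc.mem_block _)
  rw [a.apply_clusterVector hc h hi' hJ hα', a.apply_apply_eq_zero hc h hi' hne.symm
    (hc.mem_block i), hc.clusterVector_apply h _ (hc.mem_block _), hα, map_smul,
    LinearMap.smul_apply, LinearMap.smul_apply, smul_eq_mul, smul_eq_mul, hzero] at heq
  linear_combination -heq

theorem cluster_perm_eq [NeZero (2 : F)] (a : IsConjugatePair B b L J u g g' τ τ' μ)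
    (hc : IsClusterFamily B b L J u) (h : IsRootBasis B H b) (hi : u i ≠ 0) (hi' : u i' ≠ 0)
    (hJ : J i' = J i) : J (τ i') = J (τ i) := by
  by_cases hne : i' = i
  · rw [hne]
  obtain ⟨α, -, hα⟩ := a.exists_apply_eq_smul hc h hi
  obtain ⟨α', hα'0, hα'⟩ := (a.symm hc h).exists_apply_eq_smul hc h hi'
  rw [← a.perm_apply_eq hc h hi'] at hα'
  by_contra hJτ
  have heq := a.comm_apply_self hc h hi' hne hJ hα hα'
  rw [if_neg hJτ, mul_zero] at heq
  exact mul_ne_zero (mul_ne_zero (div_ne_zero two_ne_zero (hc.clusterNorm_ne_zero i hi))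
    (hc.apply_self_ne_zero i hi)) (mul_ne_zero hα'0 (hc.apply_self_ne_zero _ (a.support i' hi')))
    heq.symm

theorem mul_clusterNorm_eq [NeZero (2 : F)] (a : IsConjugatePair B b L J u g g' τ τ' μ)
    (hc : IsClusterFamily B b L J u) (h : IsRootBasis B H b) (hi : u i ≠ 0) (hi' : u i' ≠ 0)
    (hne : i' ≠ i) (hJ : J i' = J i) (hα : g (u i) = α • u (τ i))
    (hα' : g' (u i') = α' • u (τ i')) :
    α * α' * clusterNorm B J u (J (τ i)) = μ * clusterNorm B J u (J i) := by
  have heq := a.comm_apply_self hc h hi' hne hJ hα hα'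
  rw [if_pos (a.cluster_perm_eq hc h hi hi' hJ)] at heq
  have hsq := a.factor_mul_apply_self hα
  have hN := hc.clusterNorm_ne_zero _ hi
  have hN' := hc.clusterNorm_ne_zero _ (a.support i hi)
  have hQ' := hc.apply_self_ne_zero _ (a.support i' hi')
  have h2 := two_ne_zero (α := F)
  have hcancel : α * B (u (τ i)) (u (τ i)) * clusterNorm B J u (J i) =
      α' * B (u i) (u i) * clusterNorm B J u (J (τ i)) := by
    field_simp at heq
    linear_combination heq
  apply mul_left_cancel₀ (hc.apply_self_ne_zero i hi)
  linear_combination (-α) * hcancel - clusterNorm B J u (J i) * hsq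

theorem scalar_eq_of_exists_third [NeZero (2 : F)] (a : IsConjugatePair B b L J u g g' τ τ' μ)
    (hc : IsClusterFamily B b L J u) (h : IsRootBasis B H b) (hi : u i ≠ 0) (hi' : u i' ≠ 0)
    (hi'' : u i'' ≠ 0) (hne : i'' ≠ i) (hne' : i'' ≠ i') (hJ : J i'' = J i) (hJ' : J i'' = J i')
    (hα : g (u i) = α • u (τ i)) (hα' : g (u i') = α' • u (τ i')) : α = α' := by
  obtain ⟨β, hβ0, hβ⟩ := (a.symm hc h).exists_apply_eq_smul hc h hi''
  rw [← a.perm_apply_eq hc h hi''] at hβ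
  have heq := a.mul_clusterNorm_eq hc h hi hi'' hne hJ hα hβ
  have heq' := a.mul_clusterNorm_eq hc h hi' hi'' hne' hJ' hα' hβ
  have hJi : J i = J i' := hJ.symm.trans hJ'
  rw [hJi, a.cluster_perm_eq hc h hi' hi hJi] at heq
  apply mul_right_cancel₀ (mul_ne_zero hβ0 (hc.clusterNorm_ne_zero _ (a.support i' hi')))
  linear_combination heq - heq'

/-- A cluster with only two nonzero members is handled by its diagonal component, where
`2 B(u i, u i)` differs from the norm of the cluster. -/
theorem scalar_eq_of_two_mul_ne [NeZero (2 : F)] (a : IsConjugatePair B b L J u g g' τ τ' μ)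
    (hc : IsClusterFamily B b L J u) (h : IsRootBasis B H b) (hi : u i ≠ 0) (hi' : u i' ≠ 0)
    (hne : i' ≠ i) (hJ : J i' = J i) (hτ : τ i = i) (hτ' : τ i' = i') (hα : g (u i) = α • u i)
    (hα' : g (u i') = α' • u i') (hα'0 : α' ≠ 0)
    (hdouble : 2 * B (u i) (u i) ≠ clusterNorm B J u (J i)) : α = α' := by
  obtain ⟨β, -, hβ⟩ := (a.symm hc h).exists_apply_eq_smul hc h hi
  rw [← a.perm_apply_eq hc h hi] at hβ
  have hN := hc.clusterNorm_ne_zero i hi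
  have hα'τ : g (u i') = α' • u (τ i') := by rw [hτ', hα']
  have hβα' : β = α' := by
    have hprod : α' * β = μ := by
      have heq := a.mul_clusterNorm_eq hc h hi' hi hne.symm hJ.symm hα'τ hβ
      rw [hτ', hJ] at heq
      exact mul_right_cancel₀ hN heq
    have hsq : μ = α' ^ 2 := by
      have heq := a.factor_mul_apply_self hα'τ
      rw [hτ'] at heq
      exact mul_right_cancel₀ (hc.apply_self_ne_zero _ hi') heq
    exact mul_left_cancel₀ hα'0 (by rw [hprod, hsq, sq])
  have heq := a.comm_apply hc h (hc.mem_block i) (u (τ i))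
  rw [a.apply_clusterVector hc h hi rfl hβ, hβ, hτ, hα, hc.clusterVector_apply h _ (hc.mem_block i),
    if_pos rfl, hβα', map_smul, map_smul, LinearMap.smul_apply, LinearMap.smul_apply, smul_eq_mul,
    smul_eq_mul] at heq
  have hQ := hc.apply_self_ne_zero i hi
  field_simp at heq
  apply mul_left_cancel₀ (sub_ne_zero.mpr hdouble)
  linear_combination -heq

theorem scalar_eq [NeZero (2 : F)] (a : IsConjugatePair B b L J u g g' τ τ' μ)
    (hc : IsClusterFamily B b L J u) (h : IsRootBasis B H b) (hi : u i ≠ 0) (hi' : u i' ≠ 0)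
    (hJ : J i' = J i) (hτ : τ i = i) (hτ' : τ i' = i') (hα : g (u i) = α • u i)
    (hα' : g (u i') = α' • u i') (hα'0 : α' ≠ 0) : α = α' := by
  by_cases hne : i' = i
  · rw [hne, hα] at hα'
    exact smul_left_injective F hi hα'
  by_cases hthird : ∃ i₂, i₂ ≠ i ∧ i₂ ≠ i' ∧ J i₂ = J i ∧ u i₂ ≠ 0
  · obtain ⟨i₂, hi₂, hi₂', hJ₂, hu₂⟩ := hthird
    exact a.scalar_eq_of_exists_third hc h hi hi' hu₂ hi₂ hi₂' hJ₂ (hJ₂.trans hJ.symm)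
      (by rw [hτ, hα]) (by rw [hτ', hα'])
  obtain ⟨i₁, hi₁, hJ₁, hu₁, hdouble | ⟨i₂, hi₂, hi₂₁, hJ₂, hu₂⟩⟩ := hc.exists_ne _ hi
  · exact a.scalar_eq_of_two_mul_ne hc h hi hi' hne hJ hτ hτ' hα hα' hα'0 hdouble
  · refine absurd ?_ hthird
    by_cases hi₁' : i₁ = i'
    · exact ⟨i₂, hi₂, hi₁' ▸ hi₂₁, hJ₂, hu₂⟩
    · exact ⟨i₁, hi₁, hi₁', hJ₁, hu₁⟩

end IsConjugatePair

end Compatible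

section AdaptedTriples

variable {F : Type*} [Field F] {V : Type*} [AddCommGroup V] [Module F V]
variable {B : LinearMap.BilinForm F V} {e f k w u v : V} {α β x y z : F} {p : Prop}

theorem exists_mul_sq_add_mul_sq_eq [Finite F] [NeZero (2 : F)] (hα : α ≠ 0) (hβ : β ≠ 0) (z : F) :
    ∃ a c : F, α * a ^ 2 + β * c ^ 2 = z := by
  have := Fintype.ofFinite F
  have hchar : ringChar F ≠ 2 := by
    intro hchar
    have htwo := ringChar.spec F 2
    rw [hchar] at htwo
    exact two_ne_zero (α := F) (mod_cast htwo.mpr dvd_rfl)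
  obtain ⟨a, c, hac⟩ := FiniteField.exists_root_sum_quadratic
    (f := .C α * .X ^ 2 + .C 0 * .X + .C (-z)) (g := .C β * .X ^ 2 + .C 0 * .X + .C 0)
    (Polynomial.degree_quadratic hα) (Polynomial.degree_quadratic hβ)
    (FiniteField.odd_card_of_char_ne_two hchar)
  refine ⟨a, c, ?_⟩
  simp only [Polynomial.eval_add, Polynomial.eval_mul, Polynomial.eval_C, Polynomial.eval_pow,
    Polynomial.eval_X] at hac
  linear_combination hac

theorem exists_mul_sq_add_mul_sq_eq_of_ne_zero [Finite F] [NeZero (2 : F)] [NeZero (3 : F)]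
    (hα : α ≠ 0) (hβ : β ≠ 0) (hz : z ≠ 0) :
    ∃ a c : F, α * a ^ 2 + β * c ^ 2 = z ∧ c ≠ 0 := by
  obtain ⟨a, c, hac⟩ := exists_mul_sq_add_mul_sq_eq hα hβ z
  obtain hc | rfl := ne_or_eq c 0
  · exact ⟨a, c, hac, hc⟩
  have ha : a ≠ 0 := by
    rintro rfl
    exact hz (by linear_combination -hac)
  obtain ⟨m, hm, hd⟩ : ∃ m : F, m ≠ 0 ∧ α * m ^ 2 + β ≠ 0 := by
    by_cases hαβ : α + β = 0
    · refine ⟨2, two_ne_zero, fun hzero => mul_ne_zero hα (NeZero.ne (3 : F)) ?_⟩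
      linear_combination hzero - hαβ
    · exact ⟨1, one_ne_zero, by rwa [one_pow, mul_one]⟩
  -- the second point of the conic on the line of direction `(m, 1)` through `(a, 0)`
  refine ⟨a + m * (-(2 * α * a * m) / (α * m ^ 2 + β)), -(2 * α * a * m) / (α * m ^ 2 + β), ?_,
    div_ne_zero (neg_ne_zero.mpr (mul_ne_zero (mul_ne_zero (mul_ne_zero two_ne_zero hα) ha) hm)) hd⟩
  subst hac
  field_simp
  ring

theorem span_pair_eq_span_pair {a c a' c' : F} (hdet : a * c' - a' * c ≠ 0) :
    Submodule.span F {a • e + c • f, a' • e + c' • f} = Submodule.span F {e, f} := by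
  apply le_antisymm <;> rw [Submodule.span_le, Set.pair_subset_iff] <;>
    simp only [SetLike.mem_coe, Submodule.mem_span_pair]
  · exact ⟨⟨a, c, rfl⟩, ⟨a', c', rfl⟩⟩
  · obtain ⟨d, hd⟩ : ∃ d, d = a * c' - a' * c := ⟨_, rfl⟩
    rw [← hd] at hdet
    constructor
    · refine ⟨c' / d, -(c / d), ?_⟩
      match_scalars
      · field_simp
        linear_combination -hd
      · ring
    · refine ⟨-(a' / d), a / d, ?_⟩
      match_scalars
      · ring
      · field_simp
        linear_combination -hd

theorem exists_orthogonal_span_eq [Finite F] [NeZero (2 : F)] (hB : B.IsSymm) (hef : B e f = 0)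
    (he : B e e ≠ 0) (hf : B f f ≠ 0) (hz : z ≠ 0) :
    ∃ w w' : V, B w w = z ∧ B w w' = 0 ∧ B w' w' ≠ 0 ∧
      Submodule.span F {w, w'} = Submodule.span F {e, f} := by
  obtain ⟨a, c, hac⟩ := exists_mul_sq_add_mul_sq_eq he hf z
  have hfe : B f e = 0 := by rw [hB.eq, hef]
  have happly : ∀ s t s' t' : F,
      B (s • e + t • f) (s' • e + t' • f) = B e e * (s * s') + B f f * (t * t') := by
    intro s t s' t'
    simp only [map_add, map_smul, LinearMap.add_apply, LinearMap.smul_apply, smul_eq_mul, hef, hfe]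
    ring
  refine ⟨a • e + c • f, (-(B f f * c)) • e + (B e e * a) • f, ?_, ?_, ?_,
    span_pair_eq_span_pair ?_⟩
  · rw [happly]
    linear_combination hac
  · rw [happly]
    ring
  · rw [happly]
    intro hzero
    apply mul_ne_zero (mul_ne_zero he hf) hz
    linear_combination hzero - B e e * B f f * hac
  · intro hzero
    exact hz (by linear_combination hzero - hac)

theorem exists_apply_self_eq_span_eq [Finite F] [NeZero (2 : F)] [NeZero (3 : F)] (hB : B.IsSymm)
    (hef : B e f = 0) (he : B e e ≠ 0) (hf : B f f ≠ 0) (hx : x ≠ 0) (hy : y ≠ 0) :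
    ∃ u v : V, B u u = x ∧ B v v = y ∧ Submodule.span F {u, v} = Submodule.span F {e, f} := by
  obtain ⟨u, u', hu, huu', hu', hspan⟩ := exists_orthogonal_span_eq hB hef he hf hx
  obtain ⟨a, c, hac, hc⟩ := exists_mul_sq_add_mul_sq_eq_of_ne_zero hx hu' hy
  refine ⟨u, a • u + c • u', hu, ?_, ?_⟩
  · have hu'u : B u' u = 0 := by rw [hB.eq, huu']
    simp only [map_add, map_smul, LinearMap.add_apply, LinearMap.smul_apply, smul_eq_mul, hu, huu',
      hu'u]
    linear_combination hac
  · have hpair := span_pair_eq_span_pair (e := u) (f := u') (a := 1) (c := 0) (a' := a) (c' := c)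
      (by simpa using hc)
    rw [one_smul, zero_smul, add_zero] at hpair
    rw [hpair, hspan]

variable (B) in
/-- Vectors `w`, `u`, `v` with prescribed values `z`, `x`, `y` of the form, such that `v` is not
orthogonal to `w`, and `u` is orthogonal to `w` exactly if the condition `p` holds. -/
structure IsAdaptedTriple (z x y : F) (p : Prop) (w u v : V) : Prop where
  apply_fst : B w w = z
  apply_snd : B u u = x
  apply_trd : B v v = y
  apply_snd_fst : B u w = 0 ↔ p
  apply_trd_fst : B v w ≠ 0

theorem exists_isAdaptedTriple_span_pair [Finite F] [NeZero (2 : F)] [NeZero (3 : F)]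
    (hB : B.IsSymm) (hef : B e f = 0) (he : B e e ≠ 0) (hf : B f f ≠ 0) (hx : x ≠ 0) (hy : y ≠ 0)
    (hz : z ≠ 0) {ν : F} (hν : ∀ c, c ^ 2 ≠ ν) (hxy : x = ν * z ∨ y = ν * z) :
    ∃ w u v : V, IsAdaptedTriple B z x y False w u v ∧
      Submodule.span F {w, u, v} = Submodule.span F {e, f} := by
  obtain ⟨w, w', hw, hww', hw', hspan⟩ := exists_orthogonal_span_eq hB hef he hf hz
  have hw'w : B w' w = 0 := by rw [hB.eq, hww']
  obtain ⟨c, a, hac, ha⟩ := exists_mul_sq_add_mul_sq_eq_of_ne_zero hw' hz hx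
  obtain ⟨c', a', hac', ha'⟩ := exists_mul_sq_add_mul_sq_eq_of_ne_zero hw' hz hy
  refine ⟨w, a • w + c • w', a' • w + c' • w', ⟨hw, ?_, ?_, ?_, ?_⟩, ?_⟩
  · simp only [map_add, map_smul, LinearMap.add_apply, LinearMap.smul_apply, smul_eq_mul, hw, hww',
      hw'w]
    linear_combination hac
  · simp only [map_add, map_smul, LinearMap.add_apply, LinearMap.smul_apply, smul_eq_mul, hw, hww',
      hw'w]
    linear_combination hac'
  · simp [hw, hw'w, ha, hz]
  · simp [hw, hw'w, ha', hz]
  -- a multiple of `w` does not have the value `ν z`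
  have hc : c ≠ 0 ∨ c' ≠ 0 := by
    by_contra! hcon
    obtain rfl | rfl := hxy
    · exact hν a (mul_right_cancel₀ hz (by rw [← hac, hcon.1]; ring))
    · exact hν a' (mul_right_cancel₀ hz (by rw [← hac', hcon.2]; ring))
  rw [← hspan]
  apply le_antisymm <;> rw [Submodule.span_le]
  · rintro _ (rfl | rfl | rfl)
    exacts [Submodule.mem_span_pair.mpr ⟨1, 0, by simp⟩, Submodule.mem_span_pair.mpr ⟨a, c, rfl⟩,
      Submodule.mem_span_pair.mpr ⟨a', c', rfl⟩]
  · refine Set.pair_subset (Submodule.mem_span_triple.mpr ⟨1, 0, 0, by simp⟩)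
      (Submodule.mem_span_triple.mpr ?_)
    obtain hc | hc := hc
    · exact ⟨-(a / c), c⁻¹, 0, by match_scalars <;> field_simp <;> ring⟩
    · exact ⟨-(a' / c'), 0, c'⁻¹, by match_scalars <;> field_simp <;> ring⟩

theorem exists_sub_sq_mul_ne_zero [NeZero (2 : F)] [NeZero (3 : F)] (hz : z ≠ 0) (x : F) :
    ∃ s : F, s ≠ 0 ∧ x - s ^ 2 * z ≠ 0 := by
  by_cases hxz : x - z = 0
  · refine ⟨2, two_ne_zero, fun hzero => mul_ne_zero hz (NeZero.ne (3 : F)) ?_⟩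
    linear_combination hxz - hzero
  · exact ⟨1, one_ne_zero, by rwa [one_pow, one_mul]⟩

theorem span_triple_smul_add (s t : F) :
    Submodule.span F {w, s • w + u, t • w + v} = Submodule.span F {w, u, v} := by
  apply le_antisymm <;> rw [Submodule.span_le]
  · rintro _ (rfl | rfl | rfl) <;> rw [SetLike.mem_coe, Submodule.mem_span_triple]
    exacts [⟨1, 0, 0, by simp⟩, ⟨s, 1, 0, by simp⟩, ⟨t, 0, 1, by simp⟩]
  · rintro _ (rfl | rfl | rfl) <;> rw [SetLike.mem_coe, Submodule.mem_span_triple]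
    exacts [⟨1, 0, 0, by simp⟩, ⟨-s, 1, 0, by simp⟩, ⟨-t, 0, 1, by simp⟩]

theorem exists_isAdaptedTriple_span_triple [Finite F] [NeZero (2 : F)] [NeZero (3 : F)]
    (hB : B.IsSymm) (hef : B e f = 0) (hek : B e k = 0) (hfk : B f k = 0) (he : B e e ≠ 0)
    (hf : B f f ≠ 0) (hk : B k k ≠ 0) (hx : x ≠ 0) (hz : z ≠ 0) (p : Prop) :
    ∃ w u v : V, IsAdaptedTriple B z x y p w u v ∧
      Submodule.span F {w, u, v} = Submodule.span F {e, f, k} := by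
  obtain ⟨w, w', hw, hww', hw', hspan⟩ := exists_orthogonal_span_eq hB hef he hf hz
  have hker : Submodule.span F {w, w'} ≤ LinearMap.ker (B k) := by
    rw [hspan, Submodule.span_le, Set.pair_subset_iff]
    exact ⟨by simpa using (hB.eq k e).trans hek, by simpa using (hB.eq k f).trans hfk⟩
  have hkw : B k w = 0 := hker (Submodule.subset_span (Set.mem_insert w _))
  have hw'k : B w' k = 0 := by
    rw [hB.eq]
    exact hker (Submodule.subset_span (Set.mem_insert_of_mem w rfl))
  obtain ⟨s, hs, hxs⟩ : ∃ s : F, (s = 0 ↔ p) ∧ x - s ^ 2 * z ≠ 0 := by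
    by_cases hp : p
    · exact ⟨0, by simpa using hp, by simpa using hx⟩
    · obtain ⟨s, hs, hxs⟩ := exists_sub_sq_mul_ne_zero hz x
      exact ⟨s, iff_of_false hs hp, hxs⟩
  obtain ⟨t, ht, hyt⟩ := exists_sub_sq_mul_ne_zero hz y
  obtain ⟨u, v, hu, hv, huv⟩ := exists_apply_self_eq_span_eq hB hw'k hw' hk hxs hyt
  have hperp : ∀ a ∈ Submodule.span F {u, v}, B a w = 0 := by
    have hle : Submodule.span F {w', k} ≤ LinearMap.ker (B.flip w) := by
      rw [Submodule.span_le, Set.pair_subset_iff]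
      exact ⟨by simpa using (hB.eq w' w).trans hww', by simpa using hkw⟩
    rw [huv]
    exact fun a ha => by simpa using hle ha
  have huw := hperp u (Submodule.subset_span (Set.mem_insert u _))
  have hvw := hperp v (Submodule.subset_span (Set.mem_insert_of_mem u rfl))
  have hwu : B w u = 0 := by rw [hB.eq, huw]
  have hwv : B w v = 0 := by rw [hB.eq, hvw]
  refine ⟨w, s • w + u, t • w + v, ⟨hw, ?_, ?_, ?_, ?_⟩, ?_⟩
  · simp only [map_add, map_smul, LinearMap.add_apply, LinearMap.smul_apply, smul_eq_mul, hw, huw,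
      hwu, hu]
    ring
  · simp only [map_add, map_smul, LinearMap.add_apply, LinearMap.smul_apply, smul_eq_mul, hw, hvw,
      hwv, hv]
    ring
  · simp [hw, huw, hz, hs]
  · simp [hw, hvw, hz, ht]
  · rw [span_triple_smul_add, Submodule.span_insert, huv]
    simp only [Submodule.span_insert] at hspan ⊢
    rw [← sup_assoc, hspan, sup_assoc]

end AdaptedTriples

section Rigidity

variable {F : Type*} [Field F] {V : Type*} [AddCommGroup V] [Module F V]
variable {B : LinearMap.BilinForm F V} {H : Subgroup (V ≃ₗ[F] V)}
variable {ι I : Type*} {b : Basis ι F V} {L : ι → I} {i : I}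
variable {C E : Submodule F V} {r s w u v : V} {x y z : F}

variable (H) in
/-- The triple `w, u, v` is rigid in `C` if an element of `H` that preserves `C` and scales the
three vectors by the same factor is a scalar on `C`. -/
def IsRigid (C : Submodule F V) (w u v : V) : Prop :=
  ∀ g ∈ H, ∀ l : F, l ≠ 0 → (∀ t ∈ C, g t ∈ C) → g w = l • w → g u = l • u → g v = l • v →
    ∀ t ∈ C, g t = l • t

theorem apply_eq_smul_of_mem_span_triple {g : V ≃ₗ[F] V} {l : F} (hw : g w = l • w)
    (hu : g u = l • u) (hv : g v = l • v) :
    ∀ t ∈ Submodule.span F {w, u, v}, g t = l • t := by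
  intro t ht
  refine LinearMap.eqOn_span (f := (g : V →ₗ[F] V)) (g := l • LinearMap.id) ?_ ht
  rintro _ (rfl | rfl | rfl)
  exacts [hw, hu, hv]

theorem isRigid_span_triple : IsRigid H (Submodule.span F {w, u, v}) w u v :=
  fun _ _ _ _ _ hw hu hv => apply_eq_smul_of_mem_span_triple hw hu hv

theorem IsRoot.of_smul {l : F} (hl : l ≠ 0) (hv : IsRoot B H (l • v)) : IsRoot B H v := by
  refine ⟨fun hzero => hv.1 (by simp [hzero]), ?_⟩
  rw [← reflection_smul hl]
  exact hv.2

/-- `g` is `l` times the reflection in `r + s`, which maps `r` to `-(r + 2 s)`. -/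
theorem apply_eq_neg_smul_add_two_smul {g : V ≃ₗ[F] V} {l : F} (hrr : B r r ≠ 0) (hsr : B s r = 0)
    (hcc : B (r + s) (r + s) = B r r) (hgE : ∀ t ∈ E, g t = l • t) (hE : ∀ t ∈ E, B (r + s) t = 0)
    (hr : r ∈ Submodule.span F {r + s} ⊔ E) (hg : g (r + s) = (-l) • (r + s)) :
    g r = (-l) • (r + (2 : F) • s) := by
  obtain ⟨d, hd, e, he, hde⟩ := Submodule.mem_sup.mp hr
  obtain ⟨a, rfl⟩ := Submodule.mem_span_singleton.mp hd
  have ha : a = 1 := by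
    have happly := congrArg (B (r + s)) hde
    rw [map_add, map_smul, hcc, hE e he, map_add, LinearMap.add_apply, hsr, smul_eq_mul, add_zero,
      add_zero] at happly
    exact mul_right_cancel₀ hrr (by rw [happly, one_mul])
  rw [ha, one_smul] at hde
  have hes : e = -s := eq_neg_of_add_eq_zero_right (by rwa [add_assoc, add_eq_left] at hde)
  have hgs : g s = l • s := by
    have hge := hgE e he
    rwa [hes, map_neg, smul_neg, neg_inj] at hge
  have hgr : g r = g (r + s) - g s := by rw [map_add, add_sub_cancel_right]
  rw [hgr, hg, hgs]
  module

namespace IsRootBasis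

theorem eq_zero_of_mem_block (h : IsRootBasis B H b) (hv : v ∈ block b L i)
    (hperp : ∀ w ∈ block b L i, B v w = 0) : v = 0 := by
  refine h.eq_zero_of_forall_apply_basis fun j => ?_
  by_cases hj : L j = i
  · exact hperp _ (basis_mem_block hj)
  · exact h.mem_block_iff.mp hv j hj

theorem exists_apply_eq_smul_of_scalar (h : IsRootBasis B H b) {g : V ≃ₗ[F] V} {c : V} {l μ : F}
    (hμ : ∀ x y, B (g x) (g y) = μ * B x y) (hl : l ≠ 0)
    (hgC : ∀ t ∈ block b L i, g t ∈ block b L i)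
    (hE : ∀ t ∈ E, g t = l • t) (hc : B c c ≠ 0) (hcC : c ∈ block b L i) (hcE : ∀ t ∈ E, B c t = 0)
    (hC : block b L i ≤ Submodule.span F {c} ⊔ E) : ∃ κ : F, g c = κ • c := by
  refine ⟨B (g c) c / B c c, sub_eq_zero.mp ?_⟩
  refine h.eq_zero_of_mem_block (L := L) (i := i)
    (Submodule.sub_mem _ (hgC c hcC) (Submodule.smul_mem _ _ hcC)) fun t ht => ?_
  obtain ⟨d, hd, e, he, rfl⟩ := Submodule.mem_sup.mp (hC ht)
  obtain ⟨a, rfl⟩ := Submodule.mem_span_singleton.mp hd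
  have hge : B (g c) e = 0 := by
    have happly := hμ c e
    rw [hE e he, hcE e he, map_smul, mul_zero, smul_eq_mul] at happly
    exact (mul_eq_zero.mp happly).resolve_left hl
  simp only [map_sub, map_add, map_smul, LinearMap.sub_apply, LinearMap.smul_apply, smul_eq_mul,
    hge, hcE e he]
  field_simp
  ring

theorem isRigid_of_isotropic [NeZero (2 : F)] (h : IsRootBasis B H b) (hr : IsRoot B H r)
    (hrC : r ∈ block b L i) (hsC : s ∈ block b L i) (hs : B s s = 0) (hrs : B r s = 0) (hs0 : s ≠ 0)
    (hE : ∀ t ∈ E, B (r + s) t = 0) (hE' : ∃ t ∈ E, B t t ≠ 0)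
    (hC : block b L i ≤ Submodule.span F {r + s} ⊔ E) (hspan : E ≤ Submodule.span F {w, u, v}) :
    IsRigid H (block b L i) w u v := by
  intro g hg l hl hgC hgw hgu hgv
  obtain ⟨μ, -, hμ⟩ := h.similitude g hg
  have hsr : B s r = 0 := by rw [h.isSymm.eq, hrs]
  have hcc : B (r + s) (r + s) = B r r := by simp [hs, hrs, hsr]
  have hgE : ∀ t ∈ E, g t = l • t :=
    fun t ht => apply_eq_smul_of_mem_span_triple hgw hgu hgv t (hspan ht)
  obtain ⟨κ, hκ⟩ := h.exists_apply_eq_smul_of_scalar hμ hl hgC hgE (hcc ▸ hr.1)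
    (Submodule.add_mem _ hrC hsC) hE hC
  have hκl : κ ^ 2 = l ^ 2 := by
    obtain ⟨t, ht, htt⟩ := hE'
    have hμl : μ = l ^ 2 := by
      have happly := hμ t t
      rw [hgE t ht, map_smul, map_smul, LinearMap.smul_apply, smul_eq_mul, smul_eq_mul] at happly
      exact mul_right_cancel₀ htt (by linear_combination -happly)
    have happly := hμ (r + s) (r + s)
    rw [hκ, map_smul, map_smul, LinearMap.smul_apply, smul_eq_mul, smul_eq_mul, hcc, hμl] at happly
    exact mul_right_cancel₀ hr.1 (by linear_combination happly)
  intro t ht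
  obtain ⟨d, hd, e, he, rfl⟩ := Submodule.mem_sup.mp (hC ht)
  obtain ⟨a, rfl⟩ := Submodule.mem_span_singleton.mp hd
  obtain rfl | rfl := sq_eq_sq_iff_eq_or_eq_neg.mp hκl
  · rw [map_add, map_smul, hκ, hgE e he]
    module
  have hroot := h.isRoot_apply hg hr
  rw [apply_eq_neg_smul_add_two_smul hr.1 hsr hcc hgE hE (hC hrC) hκ] at hroot
  have hzero := h.eq_zero_of_isRoot_add r ((2 : F) • s) (by simp [hs]) (by simp [hrs]) hr
    (hroot.of_smul (neg_ne_zero.mpr hl))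
  exact absurd ((smul_eq_zero.mp hzero).resolve_left two_ne_zero) hs0

end IsRootBasis

theorem exists_isotropic_mem_span_triple [Finite F] [NeZero (2 : F)] {e f k : V}
    (hef : B e f = 0) (hfe : B f e = 0) (hek : B e k = 0) (hke : B k e = 0) (hfk : B f k = 0)
    (hkf : B k f = 0) (he : B e e ≠ 0) (hf : B f f ≠ 0) (hk : B k k ≠ 0) :
    ∃ s ∈ Submodule.span F {e, f, k}, B s s = 0 ∧ s ≠ 0 := by
  obtain ⟨a, c, hac⟩ := exists_mul_sq_add_mul_sq_eq he hf (-B k k)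
  refine ⟨a • e + c • f + k, Submodule.mem_span_triple.mpr ⟨a, c, 1, by rw [one_smul]⟩, ?_, ?_⟩
  · simp only [map_add, map_smul, LinearMap.add_apply, LinearMap.smul_apply, smul_eq_mul, hef, hfe,
      hek, hke, hfk, hkf]
    linear_combination hac
  · intro hzero
    have happly := congrArg (B k) hzero
    simp only [map_add, map_smul, hke, hkf, smul_zero, zero_add, map_zero] at happly
    exact hk happly

end Rigidity

section LocalTriples

variable {F : Type*} [Field F] {V : Type*} [AddCommGroup V] [Module F V]
variable {B : LinearMap.BilinForm F V} {H : Subgroup (V ≃ₗ[F] V)}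
variable {ι I : Type*} {b : Basis ι F V} {L : ι → I} {i : I} {r s : V} {x y z ν : F} {p : Prop}

theorem reflection_two_smul_add_apply [NeZero (2 : F)] (hr : B r r ≠ 0) (hs : B s s = 0)
    (hrs : B r s = 0) (hsr : B s r = 0) : reflection B ((2 : F) • r + s) r = -(r + s) := by
  have hcoeff : 2 / B ((2 : F) • r + s) ((2 : F) • r + s) * B ((2 : F) • r + s) r = 1 := by
    simp only [map_add, map_smul, LinearMap.add_apply, LinearMap.smul_apply, smul_eq_mul, hs, hrs,
      hsr]
    field_simp
    ring
  rw [reflection_apply, hcoeff]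
  module

theorem map_reflection_eq {X : Submodule F V} {d : V} (hd : d ∈ X) :
    X.map (reflection B d : V →ₗ[F] V) = X := by
  have hle : X.map (reflection B d : V →ₗ[F] V) ≤ X := by
    rintro _ ⟨t, ht, rfl⟩
    exact X.sub_mem ht (X.smul_mem _ hd)
  exact hle.antisymm fun t ht =>
    ⟨reflection B d t, hle ⟨t, ht, rfl⟩, reflection_apply_reflection_apply d t⟩

namespace IsRootBasis

theorem exists_reflection_apply_eq_neg_add [NeZero (2 : F)] [Finite F] (h : IsRootBasis B H b)
    {j₁ j₂ j₃ j₄ : ι} (h₁₂ : j₁ ≠ j₂) (h₁₃ : j₁ ≠ j₃) (h₁₄ : j₁ ≠ j₄) (h₂₃ : j₂ ≠ j₃)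
    (h₂₄ : j₂ ≠ j₄) (h₃₄ : j₃ ≠ j₄) :
    ∃ s ∈ Submodule.span F {b j₂, b j₃, b j₄}, B s s = 0 ∧ s ≠ 0 ∧
      reflection B ((2 : F) • b j₁ + s) (b j₁) = -(b j₁ + s) ∧
      ∀ t ∈ Submodule.span F {b j₂, b j₃, b j₄}, B (b j₁) t = 0 := by
  obtain ⟨s, hs, hss, hs0⟩ := exists_isotropic_mem_span_triple (h.orthogonal _ _ h₂₃)
    (h.orthogonal _ _ h₂₃.symm) (h.orthogonal _ _ h₂₄) (h.orthogonal _ _ h₂₄.symm)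
    (h.orthogonal _ _ h₃₄) (h.orthogonal _ _ h₃₄.symm) (h.apply_self_ne_zero j₂)
    (h.apply_self_ne_zero j₃) (h.apply_self_ne_zero j₄)
  have hperp : Submodule.span F {b j₂, b j₃, b j₄} ≤ LinearMap.ker (B (b j₁)) := by
    rw [Submodule.span_le]
    rintro _ (rfl | rfl | rfl)
    exacts [h.orthogonal _ _ h₁₂, h.orthogonal _ _ h₁₃, h.orthogonal _ _ h₁₄]
  exact ⟨s, hs, hss, hs0, reflection_two_smul_add_apply (h.apply_self_ne_zero j₁) hss (hperp hs)
    ((h.isSymm.eq _ _).trans (hperp hs)), fun t ht => hperp ht⟩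

theorem exists_isAdaptedTriple_of_fiber_eq_four [NeZero (2 : F)] [NeZero (3 : F)] [Finite F]
    (h : IsRootBasis B H b) {j₁ j₂ j₃ j₄ : ι} (h₁₂ : j₁ ≠ j₂) (h₁₃ : j₁ ≠ j₃) (h₁₄ : j₁ ≠ j₄)
    (h₂₃ : j₂ ≠ j₃) (h₂₄ : j₂ ≠ j₄) (h₃₄ : j₃ ≠ j₄) (hL : L ⁻¹' {i} = {j₁, j₂, j₃, j₄})
    (hx : x ≠ 0) (hz : z ≠ 0) (p : Prop) :
    ∃ w u v : V, IsAdaptedTriple B z x y p w u v ∧ {w, u, v} ⊆ (block b L i : Set V) ∧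
      IsRigid H (block b L i) w u v := by
  obtain ⟨s, hs, hss, hs0, hρ, hperp⟩ :=
    h.exists_reflection_apply_eq_neg_add h₁₂ h₁₃ h₁₄ h₂₃ h₂₄ h₃₄
  set ρ := reflection B ((2 : F) • b j₁ + s)
  have hρi : ∀ t t', B (ρ t) (ρ t') = B t t' := reflection_isometry h.isSymm _
  have hblock : block b L i = Submodule.span F {b j₁} ⊔ Submodule.span F {b j₂, b j₃, b j₄} := by
    rw [block, hL, ← Submodule.span_union, Set.image_insert_eq, Set.image_insert_eq, Set.image_pair,
      Set.singleton_union]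
  have hr : b j₁ ∈ block b L i := by
    rw [hblock]
    exact Submodule.mem_sup_left (Submodule.mem_span_singleton_self _)
  have hsub : Submodule.span F {b j₂, b j₃, b j₄} ≤ block b L i := hblock ▸ le_sup_right
  have hmap : (block b L i).map (ρ : V →ₗ[F] V) = block b L i :=
    map_reflection_eq (Submodule.add_mem _ (Submodule.smul_mem _ _ hr) (hsub hs))
  obtain ⟨w, u, v, ht, hspan⟩ := exists_isAdaptedTriple_span_triple (y := y) h.isSymm
    ((hρi _ _).trans (h.orthogonal _ _ h₂₃)) ((hρi _ _).trans (h.orthogonal _ _ h₂₄))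
    ((hρi _ _).trans (h.orthogonal _ _ h₃₄)) ((hρi _ _).trans_ne (h.apply_self_ne_zero j₂))
    ((hρi _ _).trans_ne (h.apply_self_ne_zero j₃)) ((hρi _ _).trans_ne (h.apply_self_ne_zero j₄))
    hx hz p
  have hE : Submodule.span F {w, u, v} =
      (Submodule.span F {b j₂, b j₃, b j₄}).map (ρ : V →ₗ[F] V) := by
    rw [hspan, Submodule.map_span, Set.image_insert_eq, Set.image_pair]
    rfl
  refine ⟨w, u, v, ht, ?_, h.isRigid_of_isotropic (E := Submodule.span F {w, u, v}) (h.isRoot j₁) hr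
    (hsub hs) hss (hperp s hs) hs0 ?_ ⟨w, Submodule.subset_span (Set.mem_insert w _), ?_⟩ ?_ le_rfl⟩
  · refine Submodule.subset_span.trans (SetLike.coe_subset_coe.mpr ?_)
    rw [hE, ← hmap]
    exact Submodule.map_mono hsub
  · rw [hE]
    rintro _ ⟨t, ht, rfl⟩
    rw [← neg_neg (b j₁ + s), ← hρ, map_neg, LinearMap.neg_apply, LinearEquiv.coe_coe, hρi,
      hperp t ht, neg_zero]
  · rw [ht.apply_fst]
    exact hz
  · rw [hE, ← hmap, hblock, Submodule.map_sup, Submodule.map_span, Set.image_singleton,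
      LinearEquiv.coe_coe, hρ, ← Set.neg_singleton,
      Submodule.span_neg]

theorem exists_isAdaptedTriple_of_fiber_eq_two [NeZero (2 : F)] [NeZero (3 : F)] [Finite F]
    (h : IsRootBasis B H b) {j₁ j₂ : ι} (h₁₂ : j₁ ≠ j₂) (hL : L ⁻¹' {i} = {j₁, j₂}) (hx : x ≠ 0)
    (hy : y ≠ 0) (hz : z ≠ 0) (hν : ∀ c, c ^ 2 ≠ ν) (hxy : x = ν * z ∨ y = ν * z) :
    ∃ w u v : V, IsAdaptedTriple B z x y False w u v ∧ {w, u, v} ⊆ (block b L i : Set V) ∧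
      IsRigid H (block b L i) w u v := by
  obtain ⟨w, u, v, ht, hspan⟩ := exists_isAdaptedTriple_span_pair h.isSymm (h.orthogonal _ _ h₁₂)
    (h.apply_self_ne_zero j₁) (h.apply_self_ne_zero j₂) hx hy hz hν hxy
  rw [block, hL, Set.image_pair, ← hspan]
  exact ⟨w, u, v, ht, Submodule.subset_span, isRigid_span_triple⟩

theorem exists_isAdaptedTriple_of_fiber_eq_three [NeZero (2 : F)] [NeZero (3 : F)] [Finite F]
    (h : IsRootBasis B H b) {j₁ j₂ j₃ : ι} (h₁₂ : j₁ ≠ j₂) (h₁₃ : j₁ ≠ j₃) (h₂₃ : j₂ ≠ j₃)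
    (hL : L ⁻¹' {i} = {j₁, j₂, j₃}) (hx : x ≠ 0) (hz : z ≠ 0) (p : Prop) :
    ∃ w u v : V, IsAdaptedTriple B z x y p w u v ∧ {w, u, v} ⊆ (block b L i : Set V) ∧
      IsRigid H (block b L i) w u v := by
  obtain ⟨w, u, v, ht, hspan⟩ := exists_isAdaptedTriple_span_triple h.isSymm
    (h.orthogonal _ _ h₁₂) (h.orthogonal _ _ h₁₃) (h.orthogonal _ _ h₂₃) (h.apply_self_ne_zero j₁)
    (h.apply_self_ne_zero j₂) (h.apply_self_ne_zero j₃) hx hz p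
  rw [block, hL, Set.image_insert_eq, Set.image_pair, ← hspan]
  exact ⟨w, u, v, ht, Submodule.subset_span, isRigid_span_triple⟩

theorem exists_isAdaptedTriple [NeZero (2 : F)] [NeZero (3 : F)] [Finite F] [Finite ι]
    (h : IsRootBasis B H b) (hlt : (L ⁻¹' {i}).Nontrivial) (hle : (L ⁻¹' {i}).ncard ≤ 4)
    (hx : x ≠ 0) (hy : y ≠ 0) (hz : z ≠ 0) (hν : ∀ c, c ^ 2 ≠ ν) (hxy : x = ν * z ∨ y = ν * z)
    (hp : p → 3 ≤ (L ⁻¹' {i}).ncard) :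
    ∃ w u v : V, IsAdaptedTriple B z x y p w u v ∧ {w, u, v} ⊆ (block b L i : Set V) ∧
      IsRigid H (block b L i) w u v := by
  have hge : 2 ≤ (L ⁻¹' {i}).ncard := (Set.one_lt_ncard (Set.toFinite _)).mpr hlt
  obtain hcard | hcard | hcard : (L ⁻¹' {i}).ncard = 2 ∨ (L ⁻¹' {i}).ncard = 3 ∨
      (L ⁻¹' {i}).ncard = 4 := by
    omega
  · obtain ⟨j₁, j₂, h₁₂, hL⟩ := Set.ncard_eq_two.mp hcard
    have hfalse : p ↔ False := iff_false_intro fun h' => by have := hp h'; omega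
    rw [propext hfalse]
    exact h.exists_isAdaptedTriple_of_fiber_eq_two h₁₂ hL hx hy hz hν hxy
  · obtain ⟨j₁, j₂, j₃, h₁₂, h₁₃, h₂₃, hL⟩ := Set.ncard_eq_three.mp hcard
    exact h.exists_isAdaptedTriple_of_fiber_eq_three h₁₂ h₁₃ h₂₃ hL hx hz p
  · obtain ⟨j₁, j₂, j₃, j₄, h₁₂, h₁₃, h₁₄, h₂₃, h₂₄, h₃₄, hL⟩ := Set.encard_eq_four.mp
      (((Set.toFinite _).cast_ncard_eq (s := L ⁻¹' {i})).symm.trans (by rw [hcard]; rfl))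
    exact h.exists_isAdaptedTriple_of_fiber_eq_four h₁₂ h₁₃ h₁₄ h₂₃ h₂₄ h₃₄ hL hx hz p

end IsRootBasis

end LocalTriples

section Weights

variable {F : Type*} [Field F] {I κ : Type*} [Fintype I] [DecidableEq κ] {J : I → κ} {free : Set I}

/-- Nonzero weights whose sum over each cluster of `J` is nonzero, where no cluster is a singleton
and none consists of two equal weights. -/
structure IsClusterWeight (J : I → κ) (X : I → F) : Prop where
  ne_zero : ∀ i, X i ≠ 0
  sum_ne_zero : ∀ i, ∑ i' with J i' = J i, X i' ≠ 0
  exists_ne : ∀ i, ∃ i₁, i₁ ≠ i ∧ J i₁ = J i ∧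
    (2 * X i ≠ ∑ i' with J i' = J i, X i' ∨ ∃ i₂, i₂ ≠ i ∧ i₂ ≠ i₁ ∧ J i₂ = J i)

theorem exists_notMem_of_card_lt {α : Type*} {s : Finset α} (hs : s.card < Nat.card α) :
    ∃ a, a ∉ s := by
  by_contra! hall
  rw [← Set.ncard_univ, ← Set.eq_univ_of_forall (s := (s : Set α)) hall, Set.ncard_coe_finset] at hs
  exact lt_irrefl _ hs

theorem isClusterWeight_of_free [DecidableEq I] {X : I → F} (hX : ∀ i, X i ≠ 0)
    (hfree : ∀ i, ∃ f ∈ free, J f = J i)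
    (hadd : ∀ f ∈ free, X f + ∑ i' ∈ ({i' | J i' = J f} : Finset I).erase f, X i' ≠ 0)
    (hsub : ∀ f ∈ free, X f ≠ ∑ i' ∈ ({i' | J i' = J f} : Finset I).erase f, X i')
    (hne : ∀ i, ∃ i₁, i₁ ≠ i ∧ J i₁ = J i) : IsClusterWeight J X := by
  have hsum : ∀ f, ∑ i' with J i' = J f, X i' =
      X f + ∑ i' ∈ ({i' | J i' = J f} : Finset I).erase f, X i' :=
    fun f => (Finset.add_sum_erase _ _ (by simp)).symm
  refine ⟨hX, fun i => ?_, fun i => ?_⟩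
  · obtain ⟨f, hf, hJ⟩ := hfree i
    rw [← hJ, hsum]
    exact hadd f hf
  · obtain ⟨i₁, hi₁, hJ₁⟩ := hne i
    refine ⟨i₁, hi₁, hJ₁, or_iff_not_imp_right.mpr fun hthird => ?_⟩
    obtain ⟨f, hf, hJ⟩ := hfree i
    have hpair : ∀ j, J j = J i → j = i ∨ j = i₁ := fun j hj => by
      by_contra! hcon
      exact hthird ⟨j, hcon.1, hcon.2, hj⟩
    rw [← hJ, hsum]
    obtain rfl | rfl := hpair f hJ
    · intro heq
      exact hsub f hf (by linear_combination heq)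
    · have herase : ({i' | J i' = J f} : Finset I).erase f = {i} := by
        ext j
        simp only [Finset.mem_erase, Finset.mem_filter, Finset.mem_univ, true_and,
          Finset.mem_singleton]
        refine ⟨fun hj => (hpair j (hj.2.trans hJ)).resolve_right hj.1, ?_⟩
        rintro rfl
        exact ⟨hi₁.symm, hJ.symm⟩
      have hf' := hsub f hf
      rw [herase, Finset.sum_singleton] at hf' ⊢
      intro heq
      exact hf' (by linear_combination -heq)

theorem exists_isClusterWeight (hF : 5 ≤ Nat.card F) (hfree : ∀ i, ∃ f ∈ free, J f = J i)
    (hinj : Set.InjOn J free) (hne : ∀ i, ∃ i₁, i₁ ≠ i ∧ J i₁ = J i) {c : I → F}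
    (hc : ∀ i, c i ≠ 0) : ∃ X : I → F, IsClusterWeight J X ∧ ∀ i ∉ free, X i = c i := by
  classical
  let rest (X : I → F) (f : I) : F := ∑ i' ∈ ({i' | J i' = J f} : Finset I).erase f, X i'
  have hexists : ∀ f, ∃ a : F, a ∉ ({0, rest c f, -rest c f} : Finset F) :=
    fun f => exists_notMem_of_card_lt (Finset.card_le_three.trans_lt (by omega))
  choose a ha using hexists
  simp only [Finset.mem_insert, Finset.mem_singleton, not_or] at ha
  let X : I → F := fun i => if i ∈ free then a i else c i
  have hX : ∀ i ∉ free, X i = c i := fun i hi => if_neg hi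
  have hXfree : ∀ f ∈ free, X f = a f := fun i hi => if_pos hi
  have hrest : ∀ f ∈ free, rest X f = rest c f := by
    refine fun f hf => Finset.sum_congr rfl fun i' hi' => hX i' fun hi'free => ?_
    rw [Finset.mem_erase, Finset.mem_filter] at hi'
    exact hi'.1 (hinj hi'free hf hi'.2.2)
  refine ⟨X, isClusterWeight_of_free (fun i => ?_) hfree (fun f hf => ?_) (fun f hf => ?_) hne, hX⟩
  · by_cases hi : i ∈ free
    · exact hXfree i hi ▸ (ha i).1
    · exact hX i hi ▸ hc i
  · change X f + rest X f ≠ 0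
    rw [hXfree f hf, hrest f hf]
    exact fun hzero => (ha f).2.2 (eq_neg_of_add_eq_zero_left hzero)
  · change X f ≠ rest X f
    rw [hXfree f hf, hrest f hf]
    exact (ha f).2.1

end Weights

section Labels

variable {F : Type*} [Field F] {m : ℕ}

/-- Labels grouping `0, 1, …, m + 1` as `{0, 1}, {2, 3}, …`, where the last group has three elements
if `m` is odd. -/
def evenLabel (i : Fin (m + 2)) : ℕ := min (i / 2) (m / 2)

/-- Labels grouping `0, 1, …, m + 1` as `{0, 1, 2}, {3, 4}, …`, where the last group has three
elements if `m` is even. Together with `evenLabel` they connect all indices. -/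
def oddLabel (i : Fin (m + 2)) : ℕ := max (min ((i + 1) / 2) ((m + 1) / 2)) 1

theorem perm_eq_one_of_preserves_labels {τ : Equiv.Perm (Fin (m + 2))} (h0 : τ 0 = 0)
    (hlast : τ (Fin.last (m + 1)) = Fin.last (m + 1))
    (heven : ∀ i i', evenLabel i' = evenLabel i → evenLabel (τ i') = evenLabel (τ i))
    (hodd : ∀ i i', oddLabel i' = oddLabel i → oddLabel (τ i') = oddLabel (τ i)) : τ = 1 := by
  refine Equiv.ext fun i => ?_
  obtain ⟨i, hi⟩ := i
  rw [Equiv.Perm.one_apply]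
  induction i using Nat.strong_induction_on with
  | _ i ih =>
    obtain rfl | hi0 := Nat.eq_zero_or_pos i
    · exact h0
    obtain rfl | hilast := eq_or_ne i (m + 1)
    · exact hlast
    have hge : i ≤ (τ ⟨i, hi⟩ : ℕ) := by
      by_contra! hlt
      exact hlt.ne (congrArg Fin.val (τ.injective (ih _ hlt (τ ⟨i, hi⟩).2)))
    have hne : (τ ⟨i, hi⟩ : ℕ) ≠ m + 1 := fun heq =>
      hilast (congrArg Fin.val (τ.injective ((Fin.ext heq).trans hlast.symm)))
    have hprev := ih (i - 1) (by omega) (by omega)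
    have hevenprev := heven ⟨i - 1, by omega⟩ ⟨i, hi⟩
    have hoddprev := hodd ⟨i - 1, by omega⟩ ⟨i, hi⟩
    rw [hprev] at hevenprev hoddprev
    have := (τ ⟨i, hi⟩).2
    refine Fin.ext ?_
    simp only [evenLabel, oddLabel] at hevenprev hoddprev ⊢
    obtain ⟨r, hr | hr⟩ := Nat.even_or_odd' i
    · have := hoddprev (by omega)
      omega
    · have := hevenprev (by omega)
      omega

theorem exists_isClusterWeight_evenLabel (hF : 5 ≤ Nat.card F) {c : Fin (m + 2) → F}
    (hc : ∀ i, c i ≠ 0) : ∃ X : Fin (m + 2) → F, IsClusterWeight evenLabel X ∧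
      ∀ i : Fin (m + 2), (i : ℕ) % 2 = 1 → X i = c i := by
  let free : Set (Fin (m + 2)) := {i | (i : ℕ) = 2 * evenLabel i}
  have hfree (i : Fin (m + 2)) : ∃ f ∈ free, evenLabel f = evenLabel i := by
    refine ⟨⟨2 * evenLabel i, ?_⟩, ?_, ?_⟩ <;>
      simp only [free, Set.mem_ofPred_eq, evenLabel] <;> omega
  have hinj : Set.InjOn evenLabel free := fun f hf f' hf' hJ => by
    simp only [free, Set.mem_ofPred_eq] at hf hf'
    exact Fin.ext (by omega)
  have hne (i : Fin (m + 2)) : ∃ i₁, i₁ ≠ i ∧ evenLabel i₁ = evenLabel i := by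
    by_cases hi : (i : ℕ) = 2 * evenLabel i
    · refine ⟨⟨2 * evenLabel i + 1, ?_⟩, ?_, ?_⟩ <;>
        simp only [evenLabel, ne_eq, Fin.ext_iff] at hi ⊢ <;> omega
    · refine ⟨⟨2 * evenLabel i, ?_⟩, ?_, ?_⟩ <;>
        simp only [evenLabel, ne_eq, Fin.ext_iff] at hi ⊢ <;> omega
  obtain ⟨X, hX, hXc⟩ := exists_isClusterWeight hF hfree hinj hne hc
  refine ⟨X, hX, fun i hi => hXc i fun hfree => ?_⟩
  simp only [free, Set.mem_ofPred_eq] at hfree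
  omega

theorem exists_isClusterWeight_oddLabel (hF : 5 ≤ Nat.card F) {c : Fin (m + 2) → F}
    (hc : ∀ i, c i ≠ 0) : ∃ X : Fin (m + 2) → F, IsClusterWeight oddLabel X ∧
      ∀ i : Fin (m + 2), (i : ℕ) % 2 = 0 → X i = c i := by
  let free : Set (Fin (m + 2)) := {i | (i : ℕ) + 1 = 2 * oddLabel i}
  have hfree (i : Fin (m + 2)) : ∃ f ∈ free, oddLabel f = oddLabel i := by
    refine ⟨⟨2 * oddLabel i - 1, ?_⟩, ?_, ?_⟩ <;>
      simp only [free, Set.mem_ofPred_eq, oddLabel] <;> omega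
  have hinj : Set.InjOn oddLabel free := fun f hf f' hf' hJ => by
    simp only [free, Set.mem_ofPred_eq] at hf hf'
    exact Fin.ext (by omega)
  have hne (i : Fin (m + 2)) : ∃ i₁, i₁ ≠ i ∧ oddLabel i₁ = oddLabel i := by
    by_cases hi : (i : ℕ) + 1 = 2 * oddLabel i
    · by_cases h1 : oddLabel i = 1
      · refine ⟨0, ?_, ?_⟩ <;>
          simp only [oddLabel, ne_eq, Fin.ext_iff, Fin.val_zero] at hi h1 ⊢ <;> omega
      · refine ⟨⟨2 * oddLabel i, ?_⟩, ?_, ?_⟩ <;>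
          simp only [oddLabel, ne_eq, Fin.ext_iff] at hi h1 ⊢ <;> omega
    · refine ⟨⟨2 * oddLabel i - 1, ?_⟩, ?_, ?_⟩ <;>
        simp only [oddLabel, ne_eq, Fin.ext_iff] at hi ⊢ <;> omega
  obtain ⟨X, hX, hXc⟩ := exists_isClusterWeight hF hfree hinj hne hc
  refine ⟨X, hX, fun i hi => hXc i fun hfree => ?_⟩
  simp only [free, Set.mem_ofPred_eq] at hfree
  omega

theorem exists_sum_ne_zero_and_isolated_ends (hF : 5 ≤ Nat.card F) (s : F) :
    ∃ Z : Fin (m + 2) → F, (∀ i, Z i ≠ 0) ∧ s + ∑ i, Z i ≠ 0 ∧ (∀ i, Z i = Z 0 → i = 0) ∧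
      ∀ i, Z i = Z (Fin.last (m + 1)) → i = Fin.last (m + 1) := by
  classical
  obtain ⟨a, ha⟩ := exists_notMem_of_card_lt (s := ({0, 1} : Finset F))
    (Finset.card_le_two.trans_lt (by omega))
  obtain ⟨c, hc⟩ := exists_notMem_of_card_lt (s := ({0, 1, a, -(s + (a + m))} : Finset F))
    (Finset.card_le_four.trans_lt (by omega))
  simp only [Finset.mem_insert, Finset.mem_singleton, not_or] at ha hc
  refine ⟨Fin.cons a (Fin.snoc (fun _ => 1) c), ?_, ?_, ?_, ?_⟩
  · refine Fin.cases (by simpa using ha.1) (Fin.lastCases ?_ fun i => ?_)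
    · simpa using hc.1
    · simp
  · rw [Fin.sum_cons, Fin.sum_snoc]
    intro hzero
    refine hc.2.2.2 ?_
    simp only [Finset.sum_const, Finset.card_univ, Fintype.card_fin, nsmul_eq_mul] at hzero
    linear_combination hzero
  · refine Fin.cases (fun _ => rfl) (Fin.lastCases ?_ fun i => ?_)
    · simpa using fun h => absurd h hc.2.2.1
    · simpa using fun h => absurd h.symm ha.2
  · rw [← Fin.succ_last]
    refine Fin.cases ?_ (Fin.lastCases (fun _ => rfl) fun i => ?_)
    · simpa using fun h => absurd h.symm hc.2.2.1
    · simpa using fun h => absurd h.symm hc.2.1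

end Labels

section ExceptionalVector

variable {V I : Type*}

/-- The family `u` of vectors in the proper blocks, extended by a vector `t` of the exceptional
block, whose index is `none`. -/
def withExceptional (t : V) (u : I → V) (o : Option I) : V := o.elim t u

@[simp]
theorem withExceptional_none (t : V) (u : I → V) : withExceptional t u none = t := rfl

@[simp]
theorem withExceptional_some (t : V) (u : I → V) (i : I) : withExceptional t u (some i) = u i := rfl

end ExceptionalVector

section Exceptional

variable {F : Type*} [Field F] {V : Type*} [AddCommGroup V] [Module F V]
variable {B : LinearMap.BilinForm F V} {H : Subgroup (V ≃ₗ[F] V)}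
variable {ι I κ : Type*} {b : Basis ι F V}

theorem IsRootBasis.exists_mem_block_apply_eq_zero (h : IsRootBasis B H b) {L : ι → I} {i : I}
    (hi : (L ⁻¹' {i}).Nontrivial) (u : V) : ∃ v ∈ block b L i, v ≠ 0 ∧ B v u = 0 := by
  obtain ⟨j, hj, j', hj', hne⟩ := hi
  have hbj : b j ∈ block b L i := basis_mem_block hj
  have hbj' : b j' ∈ block b L i := basis_mem_block hj'
  by_cases h0 : B (b j') u = 0
  · exact ⟨b j', hbj', (b.ne_zero j'), h0⟩
  · refine ⟨B (b j') u • b j - B (b j) u • b j',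
      Submodule.sub_mem _ (Submodule.smul_mem _ _ hbj) (Submodule.smul_mem _ _ hbj'), ?_, ?_⟩
    · intro hzero
      refine mul_ne_zero h0 (h.apply_self_ne_zero j) ?_
      simpa [h.orthogonal j' j hne.symm] using congrArg (B · (b j)) hzero
    · simp only [map_sub, map_smul, LinearMap.sub_apply, LinearMap.smul_apply, smul_eq_mul]
      ring

variable [Fintype I] [DecidableEq κ]

theorem clusterNorm_withExceptional_zero (J : I → κ) (u : I → V) (c : κ) :
    clusterNorm B (Option.map J) (withExceptional 0 u) (some c) =
      ∑ i with J i = c, B (u i) (u i) := by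
  simp [clusterNorm, Finset.sum_filter, Fintype.sum_option]

theorem IsClusterWeight.isClusterFamily {L : ι → Option I} {J : I → κ} {u : I → V}
    (hX : IsClusterWeight J fun i => B (u i) (u i)) (hu : ∀ i, u i ∈ block b L (some i)) :
    IsClusterFamily B b L (Option.map J) (withExceptional 0 u) := by
  have hu0 : ∀ i, u i ≠ 0 := fun i hi => hX.ne_zero i (by simp [hi])
  have hN : ∀ i, clusterNorm B (Option.map J) (withExceptional 0 u) (some (J i)) =
    ∑ i' with J i' = J i, B (u i') (u i') := fun i => clusterNorm_withExceptional_zero J u (J i)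
  refine ⟨?_, ?_, ?_, ?_⟩ <;> rintro (_ | i)
  · exact Submodule.zero_mem _
  · exact hu i
  · exact fun h0 => absurd rfl h0
  · exact fun _ => hX.ne_zero i
  · exact fun h0 => absurd rfl h0
  · exact fun _ => (hN i).trans_ne (hX.sum_ne_zero i)
  · exact fun h0 => absurd rfl h0
  · intro _
    obtain ⟨i₁, hne₁, hJ₁, hi₁⟩ := hX.exists_ne i
    refine ⟨some i₁, by simpa using hne₁, by simpa using hJ₁, hu0 i₁, ?_⟩
    rw [Option.map_some, hN]
    refine hi₁.imp_right ?_
    rintro ⟨i₂, hne₂, hne₂', hJ₂⟩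
    exact ⟨some i₂, by simpa using hne₂, by simpa using hne₂', by simpa using hJ₂, hu0 i₂⟩

theorem IsClusterFamily.exists_isConjugatePair {L : ι → Option I} {J : Option I → κ} {t : V}
    {u : I → V} (hc : IsClusterFamily B b L J (withExceptional t u)) (h : IsRootBasis B H b)
    (hL : ∀ i, (L ⁻¹' {some i}).Nontrivial)
    (hperm : ∀ g ∈ H, ∃ τ : Equiv.Perm I, PermutesBlocks b L τ.optionCongr g)
    (hu : ∀ i, u i ≠ 0) {g : V ≃ₗ[F] V} (hg : hc.clusterEquiv h * g * (hc.clusterEquiv h)⁻¹ ∈ H)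
    {μ : F} (hμ : μ ≠ 0) (hsim : ∀ x y, B (g x) (g y) = μ * B x y) {τ : Equiv.Perm I}
    (hτ : PermutesBlocks b L τ.optionCongr g) :
    ∃ τ', IsConjugatePair B b L J (withExceptional t u) g
      (hc.clusterEquiv h * g * (hc.clusterEquiv h)⁻¹) τ.optionCongr τ' μ := by
  obtain ⟨τ', hτ'⟩ := hperm _ hg
  have hsupport (σ : Equiv.Perm I) : ∀ o, withExceptional t u o ≠ 0 →
      withExceptional t u (σ.optionCongr o) ≠ 0 := by
    rintro (_ | i) hi
    · exact hi
    · exact hu _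
  refine ⟨τ'.optionCongr, hμ, hsim, fun v => ?_, hτ, hτ', hsupport τ, hsupport τ', ?_⟩
  · exact congrArg (fun v => clusterMap B J _ (g v)) ((hc.clusterEquiv h).symm_apply_apply v).symm
  · rintro (_ | i) -
    · exact Or.inl rfl
    · exact Or.inr (h.exists_mem_block_apply_eq_zero (hL i) _)

namespace IsConjugatePair

variable {L : ι → I} {U : I → V} {g g' : V ≃ₗ[F] V} {τ τ' : Equiv.Perm I} {μ l : F}

theorem apply_perm_eq_zero {J : I → κ} (a : IsConjugatePair B b L J U g g' τ τ' μ) {i : I}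
    (hi : U i = 0) : U (τ i) = 0 := by
  by_contra hne
  have hmaps : Set.MapsTo τ {i | U i ≠ 0} {i | U i ≠ 0} := a.support
  obtain ⟨i', hi', heq⟩ :=
    (((Set.toFinite _).injOn_iff_bijOn_of_mapsTo hmaps).1 τ.injective.injOn).surjOn hne
  exact hi' (τ.injective heq ▸ hi)

theorem exists_forall_apply_eq_smul [NeZero (2 : F)]
    (a : IsConjugatePair B b L (fun _ => ()) U g g' τ τ' μ)
    (hc : IsClusterFamily B b L (fun _ => ()) U) (h : IsRootBasis B H b) {i₀ : I} (hi₀ : U i₀ ≠ 0)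
    (hscalar : ∀ i, U i ≠ 0 → ∀ α β : F, g (U i) = α • U (τ i) → β ≠ 0 →
      g (U i₀) = β • U (τ i₀) → α = β) :
    ∃ l : F, l ≠ 0 ∧ ∀ i, g (U i) = l • U (τ i) := by
  obtain ⟨l, hl0, hl⟩ := a.exists_apply_eq_smul hc h hi₀
  refine ⟨l, hl0, fun i => ?_⟩
  by_cases hi : U i = 0
  · rw [a.apply_perm_eq_zero hi, hi, map_zero, smul_zero]
  · obtain ⟨α, -, hα⟩ := a.exists_apply_eq_smul hc h hi
    rw [← hscalar i hi α l hα hl0 hl, hα]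

theorem apply_self_perm_eq [NeZero (2 : F)]
    (a : IsConjugatePair B b L (fun _ => ()) U g g' τ τ' μ)
    (hc : IsClusterFamily B b L (fun _ => ()) U) (h : IsRootBasis B H b)
    (hthird : ∀ i i', ∃ i'', i'' ≠ i ∧ i'' ≠ i' ∧ U i'' ≠ 0) (i : I) :
    B (U (τ i)) (U (τ i)) = B (U i) (U i) := by
  obtain ⟨i₀, -, -, hi₀⟩ := hthird i i
  obtain ⟨l, hl0, hl⟩ := a.exists_forall_apply_eq_smul hc h hi₀ fun i hi α β hα _ hβ => by
    obtain ⟨i'', hne, hne', hi''⟩ := hthird i i₀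
    exact a.scalar_eq_of_exists_third hc h hi hi₀ hi'' hne hne' rfl rfl hα hβ
  have hsq : ∀ i, μ * B (U i) (U i) = l ^ 2 * B (U (τ i)) (U (τ i)) :=
    fun i => a.factor_mul_apply_self (hl i)
  have hN : ∑ i, B (U i) (U i) ≠ 0 := by
    simpa [clusterNorm] using hc.clusterNorm_ne_zero i₀ hi₀
  -- Summing over the whole cluster identifies the similitude factor.
  have hsum : μ * ∑ i, B (U i) (U i) = l ^ 2 * ∑ i, B (U i) (U i) := by
    rw [Finset.mul_sum, Finset.sum_congr rfl fun i _ => hsq i, ← Finset.mul_sum,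
      Equiv.sum_comp τ fun i => B (U i) (U i)]
  have hμ : μ = l ^ 2 := mul_right_cancel₀ hN hsum
  exact (mul_left_cancel₀ (pow_ne_zero 2 hl0) (hμ ▸ hsq i)).symm

end IsConjugatePair

end Exceptional

section Separating

variable {F : Type*} [Field F] {V : Type*} [AddCommGroup V] [Module F V]
variable {B : LinearMap.BilinForm F V} {H : Subgroup (V ≃ₗ[F] V)}
variable {ι : Type*} {b : Basis ι F V} {m : ℕ} {L : ι → Option (Fin (m + 2))} {t : V}
variable {w u v : Fin (m + 2) → V}

theorem exists_third_withExceptional_ne_zero (hw : ∀ i, w i ≠ 0) (ht : t ≠ 0 ∨ m ≠ 0)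
    (o o' : Option (Fin (m + 2))) :
    ∃ o'', o'' ≠ o ∧ o'' ≠ o' ∧ withExceptional t w o'' ≠ 0 := by
  have hcard : ∃ S : Finset (Option (Fin (m + 2))),
      2 < S.card ∧ ∀ o ∈ S, withExceptional t w o ≠ 0 := by
    obtain ht | hm := ht
    · refine ⟨Finset.univ, by simp, ?_⟩
      rintro (_ | i) -
      exacts [ht, hw i]
    · refine ⟨Finset.univ.map Function.Embedding.some, ?_, ?_⟩
      · rw [Finset.card_map, Finset.card_univ, Fintype.card_fin]
        omega
      · simpa using hw
  obtain ⟨S, hS, hne⟩ := hcard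
  obtain ⟨o'', ho'', hnotMem⟩ := Finset.exists_mem_notMem_of_card_lt_card
    (Finset.card_le_two.trans_lt hS : ({o, o'} : Finset _).card < S.card)
  rw [Finset.mem_insert, Finset.mem_singleton, not_or] at hnotMem
  exact ⟨o'', hnotMem.1, hnotMem.2, hne o'' ho''⟩

theorem isClusterFamily_withExceptional (ht : t ∈ block b L none)
    (ht0 : t ≠ 0 → B t t ≠ 0) (hw : ∀ i, w i ∈ block b L (some i)) (hw0 : ∀ i, B (w i) (w i) ≠ 0)
    (hsum : B t t + ∑ i, B (w i) (w i) ≠ 0)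
    (hzero : ∀ i, B (w i) (w i) = B (w 0) (w 0) → i = 0) :
    IsClusterFamily B b L (fun _ => ()) (withExceptional t w) := by
  have hN : clusterNorm B (fun _ => ()) (withExceptional t w) () =
      B t t + ∑ i, B (w i) (w i) := by simp [clusterNorm, Fintype.sum_option]
  have hne : ∀ i, w i ≠ 0 := fun i hi => hw0 i (by simp [hi])
  refine ⟨?_, ?_, fun _ _ => hN ▸ hsum, fun o ho => ?_⟩
  · rintro (_ | i)
    exacts [ht, hw i]
  · rintro (_ | i) hi
    exacts [ht0 hi, hw0 i]
  by_cases htm : t ≠ 0 ∨ m ≠ 0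
  · obtain ⟨o₁, hne₁, -, ho₁⟩ := exists_third_withExceptional_ne_zero hne htm o o
    obtain ⟨o₂, hne₂, hne₂', ho₂⟩ := exists_third_withExceptional_ne_zero hne htm o o₁
    exact ⟨o₁, hne₁, rfl, ho₁, Or.inr ⟨o₂, hne₂, hne₂', rfl, ho₂⟩⟩
  push Not at htm
  obtain ⟨rfl, rfl⟩ := htm
  have h01 : B (w 0) (w 0) ≠ B (w 1) (w 1) := fun heq => by simpa using hzero 1 heq.symm
  replace hN : clusterNorm B (fun _ => ()) (withExceptional 0 w) () =
      B (w 0) (w 0) + B (w 1) (w 1) :=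
    hN.trans (by rw [LinearMap.map_zero₂, zero_add]; exact Fin.sum_univ_two _)
  match o, ho with
  | none, ho => exact absurd rfl ho
  | some 0, _ =>
    refine ⟨some 1, by simp, rfl, hne 1, Or.inl ?_⟩
    rw [hN, withExceptional_some]
    exact fun heq => h01 (by linear_combination heq)
  | some 1, _ =>
    refine ⟨some 0, by simp, rfl, hne 0, Or.inl ?_⟩
    rw [hN, withExceptional_some]
    exact fun heq => h01 (by linear_combination -heq)

variable (B H b) in
/-- Vectors `w i`, `u i`, `v i` of the blocks and a vector `t` of the exceptional block for which
only scalars of `H` are conjugated into `H` by all three associated cluster involutions. The norms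
of `w 0` and `w (last)` single out the end blocks, and the clusters of the `u i` and of the `v i`
overlap like the links of a chain, which pins down the remaining blocks. -/
structure IsSeparating (L : ι → Option (Fin (m + 2))) (t : V) (w u v : Fin (m + 2) → V) : Prop where
  eq_of_exceptional : ∀ j, L j = none → b j = t
  fst : IsClusterFamily B b L (fun _ => ()) (withExceptional t w)
  snd : IsClusterFamily B b L (Option.map evenLabel) (withExceptional 0 u)
  trd : IsClusterFamily B b L (Option.map oddLabel) (withExceptional 0 v)
  fst_ne_zero : ∀ i, w i ≠ 0
  snd_ne_zero : ∀ i, u i ≠ 0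
  trd_ne_zero : ∀ i, v i ≠ 0
  eq_zero : ∀ i, B (w i) (w i) = B (w 0) (w 0) → i = 0
  eq_last : ∀ i, B (w i) (w i) = B (w (Fin.last _)) (w (Fin.last _)) → i = Fin.last _
  three_le_or : (t ≠ 0 ∨ m ≠ 0) ∨
    B (u 0) (w 0) = 0 ∧ B (u (Fin.last _)) (w (Fin.last _)) ≠ 0
  exists_snd_fst : ∀ i : Fin (m + 2), ∃ i', evenLabel i' = evenLabel i ∧ B (u i') (w i') ≠ 0
  trd_fst : ∀ i, B (v i) (w i) ≠ 0
  isRigid : ∀ i, IsRigid H (block b L (some i)) (w i) (u i) (v i)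

namespace IsSeparating

variable [NeZero (2 : F)] {g g₁ g₂ g₃ : V ≃ₗ[F] V} {τ : Equiv.Perm (Fin (m + 2))}
variable {τ₁ τ₂ τ₃ : Equiv.Perm (Option (Fin (m + 2)))} {μ : F}

theorem perm_zero_and_perm_last (s : IsSeparating B H b L t w u v) (h : IsRootBasis B H b)
    (a₁ : IsConjugatePair B b L (fun _ => ()) (withExceptional t w) g g₁ τ.optionCongr τ₁ μ)
    (a₂ : IsConjugatePair B b L (Option.map evenLabel) (withExceptional 0 u) g g₂
      τ.optionCongr τ₂ μ) :
    τ 0 = 0 ∧ τ (Fin.last _) = Fin.last _ := by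
  by_cases htm : t ≠ 0 ∨ m ≠ 0
  · have hnorm : ∀ i, B (w (τ i)) (w (τ i)) = B (w i) (w i) := fun i =>
      a₁.apply_self_perm_eq s.fst h
        (exists_third_withExceptional_ne_zero s.fst_ne_zero htm) (some i)
    exact ⟨s.eq_zero _ (hnorm 0), s.eq_last _ (hnorm _)⟩
  obtain ⟨h0, hlast⟩ := s.three_le_or.resolve_left htm
  push Not at htm
  obtain ⟨rfl, rfl⟩ := htm
  have hτ0 : τ 0 = 0 := by
    by_contra hne
    have hswap : τ 0 = Fin.last _ := by
      generalize τ 0 = i at hne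
      fin_cases i
      exacts [absurd rfl hne, rfl]
    obtain ⟨α, hα0, hα⟩ := a₂.exists_apply_eq_smul s.snd h (i := some 0) (s.snd_ne_zero 0)
    obtain ⟨β, hβ0, hβ⟩ := a₁.exists_apply_eq_smul s.fst h (i := some 0) (s.fst_ne_zero 0)
    simp only [Equiv.optionCongr_apply, Option.map_some, withExceptional_some, hswap] at hα hβ
    have hsim := a₁.similitude (u 0) (w 0)
    rw [hα, hβ, h0, mul_zero, map_smul, map_smul, LinearMap.smul_apply] at hsim
    exact smul_ne_zero hβ0 (smul_ne_zero hα0 hlast) hsim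
  refine ⟨hτ0, ?_⟩
  have hne : τ (Fin.last _) ≠ 0 := fun heq => by
    simpa using τ.injective (heq.trans hτ0.symm)
  generalize τ (Fin.last _) = i at hne
  fin_cases i
  exacts [absurd rfl hne, rfl]

theorem perm_eq_one (s : IsSeparating B H b L t w u v) (h : IsRootBasis B H b)
    (a₁ : IsConjugatePair B b L (fun _ => ()) (withExceptional t w) g g₁ τ.optionCongr τ₁ μ)
    (a₂ : IsConjugatePair B b L (Option.map evenLabel) (withExceptional 0 u) g g₂
      τ.optionCongr τ₂ μ)
    (a₃ : IsConjugatePair B b L (Option.map oddLabel) (withExceptional 0 v) g g₃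
      τ.optionCongr τ₃ μ) : τ = 1 := by
  obtain ⟨h0, hlast⟩ := s.perm_zero_and_perm_last h a₁ a₂
  refine perm_eq_one_of_preserves_labels h0 hlast (fun i i' hJ => ?_) fun i i' hJ => ?_
  · simpa using a₂.cluster_perm_eq s.snd h (i := some i) (i' := some i') (s.snd_ne_zero i)
      (s.snd_ne_zero i') (by simpa using hJ)
  · simpa using a₃.cluster_perm_eq s.trd h (i := some i) (i' := some i') (s.trd_ne_zero i)
      (s.trd_ne_zero i') (by simpa using hJ)

theorem apply_eq_smul (s : IsSeparating B H b L t w u v) (h : IsRootBasis B H b) (hg : g ∈ H)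
    (a₁ : IsConjugatePair B b L (fun _ => ()) (withExceptional t w) g g₁ 1 τ₁ μ)
    (a₂ : IsConjugatePair B b L (Option.map evenLabel) (withExceptional 0 u) g g₂ 1 τ₂ μ)
    (a₃ : IsConjugatePair B b L (Option.map oddLabel) (withExceptional 0 v) g g₃ 1 τ₃ μ) :
    ∃ c : F, ∀ x, g x = c • x := by
  obtain ⟨l, hl0, hl⟩ := a₁.exists_forall_apply_eq_smul s.fst h (i₀ := some 0) (s.fst_ne_zero 0)
    fun i hi α β hα hβ0 hβ =>
      a₁.scalar_eq s.fst h (i' := some 0) hi (s.fst_ne_zero 0) rfl rfl rfl hα hβ hβ0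
  have hw (i) : g (w i) = l • w i := hl (some i)
  have hμ : μ = l ^ 2 := mul_right_cancel₀ (s.fst.apply_self_ne_zero (some 0) (s.fst_ne_zero 0))
    (a₁.factor_mul_apply_self (hl (some 0)))
  have heigen {i : Fin (m + 2)} {x : V} {α : F} (hx : B x (w i) ≠ 0) (hα : g x = α • x) :
      α = l := by
    have hsim := a₁.similitude x (w i)
    rw [hα, hw, hμ, map_smul, map_smul, LinearMap.smul_apply, smul_eq_mul, smul_eq_mul] at hsim
    exact mul_right_cancel₀ (mul_ne_zero hl0 hx) (by linear_combination hsim)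
  have hu (i) : g (u i) = l • u i := by
    obtain ⟨i', hJ, hi'⟩ := s.exists_snd_fst i
    obtain ⟨α, -, hα⟩ := a₂.exists_apply_eq_smul s.snd h (i := some i) (s.snd_ne_zero i)
    obtain ⟨α', hα'0, hα'⟩ := a₂.exists_apply_eq_smul s.snd h (i := some i') (s.snd_ne_zero i')
    have hαα' : α = α' := a₂.scalar_eq s.snd h (i := some i) (i' := some i') (s.snd_ne_zero i)
      (s.snd_ne_zero i') (congrArg some hJ) rfl rfl hα hα' hα'0
    rwa [hαα', heigen hi' hα'] at hα
  have hv (i) : g (v i) = l • v i := by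
    obtain ⟨α, -, hα⟩ := a₃.exists_apply_eq_smul s.trd h (i := some i) (s.trd_ne_zero i)
    rwa [heigen (s.trd_fst i) hα] at hα
  have hb : (g : V →ₗ[F] V) = l • LinearMap.id := by
    refine b.ext fun j => ?_
    match hj : L j with
    | none => exact s.eq_of_exceptional j hj ▸ hl none
    | some i =>
      exact s.isRigid i g hg l hl0 (a₁.permutesBlocks (some i)) (hw i) (hu i) (hv i) (b j)
        (basis_mem_block hj)
  exact ⟨l, LinearMap.congr_fun hb⟩

theorem exists_forall_eq_smul (s : IsSeparating B H b L t w u v) (h : IsRootBasis B H b)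
    (hL : ∀ i, (L ⁻¹' {some i}).Nontrivial)
    (hperm : ∀ g ∈ H, ∃ τ : Equiv.Perm (Fin (m + 2)), PermutesBlocks b L τ.optionCongr g)
    (hg : g ∈ H) (hg₁ : s.fst.clusterEquiv h * g * (s.fst.clusterEquiv h)⁻¹ ∈ H)
    (hg₂ : s.snd.clusterEquiv h * g * (s.snd.clusterEquiv h)⁻¹ ∈ H)
    (hg₃ : s.trd.clusterEquiv h * g * (s.trd.clusterEquiv h)⁻¹ ∈ H) :
    ∃ c : F, ∀ x, g x = c • x := by
  obtain ⟨μ, hμ, hsim⟩ := h.similitude g hg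
  obtain ⟨τ, hτ⟩ := hperm g hg
  obtain ⟨τ₁, a₁⟩ := s.fst.exists_isConjugatePair h hL hperm s.fst_ne_zero hg₁ hμ hsim hτ
  obtain ⟨τ₂, a₂⟩ := s.snd.exists_isConjugatePair h hL hperm s.snd_ne_zero hg₂ hμ hsim hτ
  obtain ⟨τ₃, a₃⟩ := s.trd.exists_isConjugatePair h hL hperm s.trd_ne_zero hg₃ hμ hsim hτ
  obtain rfl := s.perm_eq_one h a₁ a₂ a₃
  rw [show (1 : Equiv.Perm (Fin (m + 2))).optionCongr = 1 from Equiv.optionCongr_refl] at a₁ a₂ a₃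
  exact s.apply_eq_smul h hg a₁ a₂ a₃

end IsSeparating

end Separating

section Existence

variable {F : Type*} [Field F] {V : Type*} [AddCommGroup V] [Module F V]
variable {B : LinearMap.BilinForm F V} {H : Subgroup (V ≃ₗ[F] V)}
variable {ι : Type*} {b : Basis ι F V}

theorem natCard_eq_ncard_preimage_none_add_sum [Finite ι] {k : ℕ} (L : ι → Option (Fin k)) :
    Nat.card ι = (L ⁻¹' {none}).ncard + ∑ i, (L ⁻¹' {some i}).ncard := by
  rw [Nat.card_congr (Equiv.sigmaFiberEquiv L).symm, Nat.card_sigma, Fintype.sum_option]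
  rfl

theorem ringChar_ne_of_natCast_ne_zero {r : ℕ} (hr : (r : F) ≠ 0) : ringChar F ≠ r :=
  fun heq => hr (heq ▸ ringChar.Nat.cast_ringChar)

theorem exists_forall_sq_ne [NeZero (2 : F)] [Finite F] : ∃ ν : F, ∀ c, c ^ 2 ≠ ν := by
  obtain ⟨ν, hν⟩ :=
    FiniteField.exists_nonsquare (ringChar_ne_of_natCast_ne_zero (NeZero.ne (2 : F)))
  exact ⟨ν, fun c hc => hν ⟨c, hc ▸ sq c⟩⟩

theorem five_le_natCard [NeZero (2 : F)] [NeZero (3 : F)] [Finite F] : 5 ≤ Nat.card F := by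
  have := Fintype.ofFinite F
  obtain ⟨n, hp, hcard⟩ := FiniteField.card F (ringChar F)
  have h2 : ringChar F ≠ 2 := ringChar_ne_of_natCast_ne_zero (NeZero.ne (2 : F))
  have h3 : ringChar F ≠ 3 := ringChar_ne_of_natCast_ne_zero (NeZero.ne (3 : F))
  have h4 : ringChar F ≠ 4 := fun heq => absurd (heq ▸ hp) (by norm_num)
  have htwo := hp.two_le
  calc 5 ≤ ringChar F := by omega
    _ ≤ ringChar F ^ (n : ℕ) := Nat.le_self_pow n.ne_zero _
    _ = Nat.card F := by rw [Nat.card_eq_fintype_card, hcard]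

theorem IsRootBasis.exists_exceptional {I : Type*} (h : IsRootBasis B H b) {L : ι → Option I}
    (hL : (L ⁻¹' {none}).Subsingleton) :
    ∃ t ∈ block b L none, (∀ j, L j = none → b j = t) ∧ (t ≠ 0 → B t t ≠ 0) ∧
      (t = 0 → L ⁻¹' {none} = ∅) := by
  obtain hempty | ⟨j, hj⟩ := (L ⁻¹' {none}).eq_empty_or_nonempty
  · exact ⟨0, Submodule.zero_mem _, fun j hj => (hempty.le hj).elim,
      fun h0 => absurd rfl h0, fun _ => hempty⟩
  · exact ⟨b j, basis_mem_block hj, fun j' hj' => congrArg b (hL hj' hj),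
      fun _ => h.apply_self_ne_zero j, fun h0 => absurd h0 (b.ne_zero j)⟩

theorem isSeparating_of_isAdaptedTriple {m : ℕ} {L : ι → Option (Fin (m + 2))} {t : V}
    {w u v : Fin (m + 2) → V} {X Y Z : Fin (m + 2) → F} (ht : t ∈ block b L none)
    (hteq : ∀ j, L j = none → b j = t) (ht0 : t ≠ 0 → B t t ≠ 0) (hZ : ∀ i, Z i ≠ 0)
    (hsum : B t t + ∑ i, Z i ≠ 0) (hzero : ∀ i, Z i = Z 0 → i = 0)
    (hlast : ∀ i, Z i = Z (Fin.last _) → i = Fin.last _) (hX : IsClusterWeight evenLabel X)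
    (hY : IsClusterWeight oddLabel Y)
    (htriple : ∀ i,
      IsAdaptedTriple B (Z i) (X i) (Y i) ((t = 0 ∧ m = 0) ∧ i = 0) (w i) (u i) (v i))
    (hmem : ∀ i, {w i, u i, v i} ⊆ (block b L (some i) : Set V))
    (hrigid : ∀ i, IsRigid H (block b L (some i)) (w i) (u i) (v i)) :
    IsSeparating B H b L t w u v := by
  obtain rfl : (fun i => B (w i) (w i)) = Z := funext fun i => (htriple i).apply_fst
  obtain rfl : (fun i => B (u i) (u i)) = X := funext fun i => (htriple i).apply_snd
  obtain rfl : (fun i => B (v i) (v i)) = Y := funext fun i => (htriple i).apply_trd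
  have hend : B (u (Fin.last _)) (w (Fin.last _)) ≠ 0 :=
    mt (htriple _).apply_snd_fst.mp fun hl => by simpa [Fin.ext_iff] using hl.2
  refine ⟨hteq, isClusterFamily_withExceptional ht ht0 (fun i => hmem i (by simp)) hZ hsum hzero,
    hX.isClusterFamily fun i => hmem i (by simp), hY.isClusterFamily fun i => hmem i (by simp),
    fun i hi => hZ i (by simp [hi]), fun i hi => hX.ne_zero i (by simp [hi]),
    fun i hi => hY.ne_zero i (by simp [hi]), hzero, hlast, ?_, fun i => ?_,
    fun i => (htriple i).apply_trd_fst, hrigid⟩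
  · rw [or_iff_not_imp_left, not_or, not_not, not_not]
    exact fun htm => ⟨(htriple 0).apply_snd_fst.mpr ⟨htm, rfl⟩, hend⟩
  · by_cases hi : (t = 0 ∧ m = 0) ∧ i = 0
    · obtain ⟨⟨-, rfl⟩, rfl⟩ := hi
      exact ⟨Fin.last 1, rfl, hend⟩
    · exact ⟨i, rfl, mt (htriple i).apply_snd_fst.mp hi⟩

theorem IsRootBasis.exists_isSeparating [NeZero (2 : F)] [NeZero (3 : F)] [Finite F] [Finite ι]
    (h : IsRootBasis B H b) {m : ℕ} {L : ι → Option (Fin (m + 2))}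
    (hL : ∀ i, (L ⁻¹' {some i}).Nontrivial) (hle : ∀ i, (L ⁻¹' {some i}).ncard ≤ 4)
    (hnone : (L ⁻¹' {none}).Subsingleton) (hι : 7 ≤ Nat.card ι) :
    ∃ t w u v, IsSeparating B H b L t w u v := by
  have hF : 5 ≤ Nat.card F := five_le_natCard
  obtain ⟨ν, hν⟩ := exists_forall_sq_ne (F := F)
  have hν0 : ν ≠ 0 := fun h0 => hν 0 (by rw [h0, zero_pow two_ne_zero])
  obtain ⟨t, ht, hteq, ht0, hempty⟩ := h.exists_exceptional hnone
  obtain ⟨Z, hZ, hsum, hzero, hlast⟩ :=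
    exists_sum_ne_zero_and_isolated_ends (m := m) hF (B t t)
  have hνZ : ∀ i, ν * Z i ≠ 0 := fun i => mul_ne_zero hν0 (hZ i)
  obtain ⟨X, hX, hXZ⟩ := exists_isClusterWeight_evenLabel hF hνZ
  obtain ⟨Y, hY, hYZ⟩ := exists_isClusterWeight_oddLabel hF hνZ
  -- With only two blocks and no exceptional vector, only the orthogonality of `u 0` and `w 0` can
  -- tell the blocks apart; this needs a third dimension, which the bound on `ι` provides.
  have hp (i : Fin (m + 2)) : (t = 0 ∧ m = 0) ∧ i = 0 → 3 ≤ (L ⁻¹' {some i}).ncard := by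
    rintro ⟨⟨rfl, rfl⟩, rfl⟩
    have hcount := natCard_eq_ncard_preimage_none_add_sum L
    rw [hempty rfl, Set.ncard_empty, Fin.sum_univ_two] at hcount
    have := hle 1
    omega
  have hxy (i : Fin (m + 2)) : X i = ν * Z i ∨ Y i = ν * Z i :=
    (Nat.mod_two_eq_zero_or_one i).symm.imp (hXZ i) (hYZ i)
  choose w u v htriple hmem hrigid using fun i => h.exists_isAdaptedTriple (hL i) (hle i)
    (hX.ne_zero i) (hY.ne_zero i) (hZ i) hν (hxy i) (hp i)
  exact ⟨t, w, u, v, isSeparating_of_isAdaptedTriple ht hteq ht0 hZ hsum hzero hlast hX hY htriple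
    hmem hrigid⟩

variable (B) in
/-- Isometries of `B` of order at most two. -/
structure IsIsometricInvolution (x : V ≃ₗ[F] V) : Prop where
  mul_self : x * x = 1
  isometry : ∀ v w, B (x v) (x w) = B v w

theorem IsClusterFamily.isIsometricInvolution_clusterEquiv {I κ : Type*} [Fintype I]
    [DecidableEq κ] {L : ι → I} {J : I → κ} {u : I → V} (hc : IsClusterFamily B b L J u)
    (h : IsRootBasis B H b) : IsIsometricInvolution B (hc.clusterEquiv h) :=
  ⟨hc.clusterEquiv_mul_self h, hc.clusterEquiv_isometry h⟩

theorem IsRootBasis.exists_isIsometricInvolution [NeZero (2 : F)] [NeZero (3 : F)] [Finite F]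
    [Finite ι] [Group.IsSolvable H] (h : IsRootBasis B H b) (hι : 7 ≤ Nat.card ι) (m : ι → ι)
    (hfix : {j | m j = j}.ncard ≤ 2) (hm : ∀ j, IsRoot B H (b j + b (m j))) :
    ∃ x y z : V ≃ₗ[F] V, IsIsometricInvolution B x ∧ IsIsometricInvolution B y ∧
      IsIsometricInvolution B z ∧ ∀ g ∈ H, x * g * x⁻¹ ∈ H → y * g * y⁻¹ ∈ H → z * g * z⁻¹ ∈ H →
        ∃ c : F, ∀ v, g v = c • v := by
  obtain ⟨k, L, hL, hle, hnone, hperm⟩ := h.exists_labelling m hfix hm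
  obtain ⟨k, rfl⟩ : ∃ k', k = k' + 2 := by
    have hnone1 := (Set.ncard_le_one (Set.toFinite _)).mpr hnone
    have hsome := Finset.sum_le_sum fun i (_ : i ∈ Finset.univ) => hle i
    have hcount := natCard_eq_ncard_preimage_none_add_sum L
    rw [Finset.sum_const, Finset.card_univ, Fintype.card_fin, smul_eq_mul] at hsome
    exact ⟨k - 2, by omega⟩
  obtain ⟨t, w, u, v, s⟩ := h.exists_isSeparating hL hle hnone hι
  exact ⟨s.fst.clusterEquiv h, s.snd.clusterEquiv h, s.trd.clusterEquiv h,
    s.fst.isIsometricInvolution_clusterEquiv h, s.snd.isIsometricInvolution_clusterEquiv h,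
    s.trd.isIsometricInvolution_clusterEquiv h,
    fun _ hg hg₁ hg₂ hg₃ => s.exists_forall_eq_smul h hL hperm hg hg₁ hg₂ hg₃⟩

end Existence

section Pairing

theorem exists_involutive_fixed_subsingleton (α : Type*) [Finite α] :
    ∃ m : α → α, m.Involutive ∧ {a | m a = a}.Subsingleton := by
  let β := (Fin (Nat.card α / 2) × Bool) ⊕ Fin (Nat.card α % 2)
  obtain ⟨e⟩ : Nonempty (α ≃ β) := Finite.card_eq.mp (by simp [β, Nat.div_add_mod'])
  let swap : β → β := Sum.map (Prod.map id not) id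
  have hswap : swap.Involutive := by rintro (⟨i, c⟩ | i) <;> simp [swap]
  refine ⟨e.symm ∘ swap ∘ e, fun a => by simp [hswap (e a)], fun a ha a' ha' => e.injective ?_⟩
  replace ha : swap (e a) = e a := (e.symm_apply_eq.mp ha)
  replace ha' : swap (e a') = e a' := (e.symm_apply_eq.mp ha')
  have hfix (y : β) (hy : swap y = y) : ∃ i, y = Sum.inr i := by
    rcases y with ⟨i, c⟩ | i
    · exact absurd (Prod.ext_iff.mp (Sum.inl_injective hy)).2 (Bool.not_ne_self c)
    · exact ⟨i, rfl⟩
  obtain ⟨i, hi⟩ := hfix _ ha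
  obtain ⟨i', hi'⟩ := hfix _ ha'
  have : Subsingleton (Fin (Nat.card α % 2)) := Fin.subsingleton_iff_le_one.mpr (by omega)
  rw [hi, hi', Subsingleton.elim i i']

theorem exists_involutive_forall_apply_eq {ι κ : Type*} [Finite ι] (col : ι → κ) :
    ∃ m : ι → ι, m.Involutive ∧ (∀ i, col (m i) = col i) ∧
      {i | m i = i}.ncard ≤ (Set.range col).ncard := by
  choose M hM hfix using fun c => exists_involutive_fixed_subsingleton {i // col i = c}
  let m (i : ι) : ι := M (col i) ⟨i, rfl⟩
  have hm {c : κ} (i : {i // col i = c}) : m i = M c i := by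
    obtain ⟨i, rfl⟩ := i
    rfl
  refine ⟨m, fun i => ?_, fun i => (M (col i) ⟨i, rfl⟩).2, ?_⟩
  · rw [hm, hM]
  · refine Set.ncard_le_ncard_of_injOn col (fun i _ => Set.mem_range_self i) ?_
    intro i hi i' hi' hcol
    have hMi : M (col i) ⟨i, rfl⟩ = ⟨i, rfl⟩ := Subtype.ext hi
    have hMi' : M (col i) ⟨i', hcol.symm⟩ = ⟨i', hcol.symm⟩ := Subtype.ext ((hm _).symm.trans hi')
    exact congrArg Subtype.val (hfix (col i) hMi hMi')

end Pairing

section SylowArgument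

theorem exists_forall_conj_mem_of_isPGroup {G : Type*} [Group G] {A H K : Subgroup G} {p : ℕ}
    [Fact p.Prime] (hKA : K ≤ A) (hK : IsPGroup p K) (hp : ¬ p ∣ H.relIndex A) :
    ∃ a ∈ A, ∀ x ∈ K, a⁻¹ * x * a ∈ H := by
  have hK' : IsPGroup p (K.subgroupOf A) := hK.of_equiv (Subgroup.subgroupOfEquivOfLe hKA).symm
  obtain ⟨c, hc⟩ := hK'.nonempty_fixed_point_of_prime_not_dvd_card (A ⧸ H.subgroupOf A) hp
  obtain ⟨a, rfl⟩ := QuotientGroup.mk_surjective c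
  refine ⟨a, a.2, fun x hx => ?_⟩
  have hfix : ((a : A) : A ⧸ H.subgroupOf A) = ((⟨x, hKA hx⟩ * a : A) : A ⧸ H.subgroupOf A) :=
    (hc ⟨⟨x, hKA hx⟩, hx⟩).symm
  simpa [Subgroup.mem_subgroupOf, mul_assoc] using QuotientGroup.eq.mp hfix

end SylowArgument

section SignedPermutations

variable {F : Type*} [Field F] {V : Type*} [AddCommGroup V] [Module F V]
variable {B : LinearMap.BilinForm F V} {ι : Type*} {m : ι → ι} {g g' : V ≃ₗ[F] V}

/-- `g` maps each `b j` to one of the four vectors `± b j`, `± b (m j)`. -/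
def IsSignedPermutation (b : ι → V) (m : ι → ι) (g : V ≃ₗ[F] V) : Prop :=
  ∀ j, ∃ s : ℤˣ, g (b j) = s • b j ∨ g (b j) = s • b (m j)

theorem map_intUnits_smul (g : V ≃ₗ[F] V) (s : ℤˣ) (v : V) : g (s • v) = s • g v := by
  simp only [Units.smul_def, map_zsmul]

theorem IsSignedPermutation.mul {b : ι → V} (hm : m.Involutive) (hg : IsSignedPermutation b m g)
    (hg' : IsSignedPermutation b m g') : IsSignedPermutation b m (g * g') := by
  intro j
  obtain ⟨s, h | h⟩ := hg' j
  · obtain ⟨s', h'⟩ := hg j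
    refine ⟨s * s', h'.imp ?_ ?_⟩ <;> intro h'' <;>
      rw [LinearEquiv.mul_apply, h, map_intUnits_smul, h'', smul_smul]
  · obtain ⟨s', h'⟩ := hg (m j)
    refine ⟨s * s', (h'.imp ?_ ?_).symm⟩ <;> intro h'' <;>
      rw [LinearEquiv.mul_apply, h, map_intUnits_smul, h'', smul_smul]
    rw [hm j]

theorem IsSignedPermutation.exists_apply_apply_eq_smul {b : ι → V} (hm : m.Involutive)
    (hg : IsSignedPermutation b m g) (j : ι) : ∃ s : ℤˣ, g (g (b j)) = s • b j := by
  obtain ⟨s, h | h⟩ := hg j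
  · exact ⟨s * s, by rw [h, map_intUnits_smul, h, smul_smul]⟩
  obtain ⟨s', h' | h'⟩ := hg (m j)
  · have hj : b j = (s * s') • b (m j) := g.injective <| by
      rw [map_intUnits_smul, h', smul_smul, mul_assoc, Int.units_mul_self, mul_one, h]
    exact ⟨1, by rw [h, map_intUnits_smul, h', smul_smul, one_smul, ← hj]⟩
  · exact ⟨s * s', by rw [h, map_intUnits_smul, h', smul_smul, hm j]⟩

theorem IsSignedPermutation.pow_four {b : Basis ι F V} (hm : m.Involutive)
    (hg : IsSignedPermutation b m g) : g ^ 4 = 1 := by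
  refine b.ext' fun j => ?_
  obtain ⟨s, hs⟩ := hg.exists_apply_apply_eq_smul hm j
  change g (g (g (g (b j)))) = b j
  rw [hs, map_intUnits_smul, map_intUnits_smul, hs, smul_smul, Int.units_mul_self, one_smul]

/-- The group of signed permutations of a basis that preserve each pair `{j, m j}`. -/
def signedPermutations (b : Basis ι F V) (hm : m.Involutive) : Subgroup (V ≃ₗ[F] V) where
  carrier := {g | IsSignedPermutation b m g}
  one_mem' j := ⟨1, Or.inl (one_smul ℤˣ (b j)).symm⟩
  mul_mem' hg hg' := hg.mul hm hg'
  inv_mem' {g} hg := by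
    have hinv : g⁻¹ = g * (g * g) := by
      rw [inv_eq_iff_mul_eq_one, ← hg.pow_four hm]
      simp only [pow_succ, pow_zero, one_mul, mul_assoc]
    rw [hinv]
    exact hg.mul hm (hg.mul hm hg)

theorem isPGroup_signedPermutations (b : Basis ι F V) (hm : m.Involutive) :
    IsPGroup 2 (signedPermutations b hm) :=
  fun g => ⟨2, Subtype.ext (g.2.pow_four hm)⟩

variable {b : Basis ι F V}

theorem reflection_mem_signedPermutations (hm : m.Involutive)
    (ho : ∀ i j, i ≠ j → B (b i) (b j) = 0) (hn : ∀ i, B (b i) (b i) ≠ 0) (j : ι) :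
    reflection B (b j) ∈ signedPermutations b hm := by
  intro i
  obtain rfl | hij := eq_or_ne i j
  · exact ⟨-1, Or.inl (by rw [reflection_apply_self (hn i), Units.neg_smul, one_smul])⟩
  · exact ⟨1, Or.inl (by rw [reflection_apply_of_apply_eq_zero (ho j i hij.symm), one_smul])⟩

theorem reflection_add_apply_left {u v : V} [NeZero (2 : F)] (hu : B u u ≠ 0) (huv : B u v = 0)
    (hvu : B v u = 0) (h : B v v = B u u) : reflection B (u + v) u = -v := by
  have hcoef : 2 / B (u + v) (u + v) * B (u + v) u = 1 := by
    simp only [map_add, LinearMap.add_apply, huv, hvu, h, add_zero, zero_add, ← two_mul]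
    field_simp [two_ne_zero (α := F)]
  rw [reflection_apply, hcoef]
  module

theorem reflection_add_mem_signedPermutations [NeZero (2 : F)] (hm : m.Involutive)
    (ho : ∀ i j, i ≠ j → B (b i) (b j) = 0) (hn : ∀ i, B (b i) (b i) ≠ 0)
    (hc : ∀ i, B (b (m i)) (b (m i)) = B (b i) (b i)) (j : ι) :
    reflection B (b j + b (m j)) ∈ signedPermutations b hm := by
  obtain hj | hj := eq_or_ne (m j) j
  · rw [hj, ← two_smul F, reflection_smul two_ne_zero]
    exact reflection_mem_signedPermutations hm ho hn j
  have h₁ := ho j (m j) hj.symm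
  have h₂ := ho (m j) j hj
  intro i
  obtain rfl | hij := eq_or_ne i j
  · refine ⟨-1, Or.inr ?_⟩
    rw [reflection_add_apply_left (hn i) h₁ h₂ (hc i), Units.neg_smul, one_smul]
  obtain rfl | hij' := eq_or_ne i (m j)
  · refine ⟨-1, Or.inr ?_⟩
    rw [add_comm, reflection_add_apply_left (hn _) h₂ h₁ (hc j).symm, hm j, Units.neg_smul,
      one_smul]
  · refine ⟨1, Or.inl ?_⟩
    rw [reflection_apply_of_apply_eq_zero, one_smul]
    rw [map_add, LinearMap.add_apply, ho j i hij.symm, ho (m j) i hij'.symm, add_zero]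

theorem apply_add_self_ne_zero [NeZero (2 : F)] (ho : ∀ i j, i ≠ j → B (b i) (b j) = 0)
    (hn : ∀ i, B (b i) (b i) ≠ 0) (hc : ∀ i, B (b (m i)) (b (m i)) = B (b i) (b i)) (j : ι) :
    B (b j + b (m j)) (b j + b (m j)) ≠ 0 := by
  obtain hj | hj := eq_or_ne (m j) j
  · simp [hj, ← two_smul F, two_ne_zero, hn j]
  · simp [ho j (m j) hj.symm, ho (m j) j hj, hc, ← two_mul, two_ne_zero, hn j]

end SignedPermutations

section RootBasis

variable {F : Type*} [Field F] {V : Type*} [AddCommGroup V] [Module F V]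
variable {B : LinearMap.BilinForm F V} {H : Subgroup (V ≃ₗ[F] V)}

variable (B) in
/-- The group of similitudes of the bilinear form `B`. -/
def similitudes : Subgroup (V ≃ₗ[F] V) where
  carrier := {g | ∃ μ : F, μ ≠ 0 ∧ ∀ x y, B (g x) (g y) = μ * B x y}
  one_mem' := ⟨1, one_ne_zero, fun _ _ => (one_mul _).symm⟩
  mul_mem' := by
    rintro g h ⟨μ, hμ, hg⟩ ⟨ν, hν, hh⟩
    refine ⟨μ * ν, mul_ne_zero hμ hν, fun x y => ?_⟩
    rw [LinearEquiv.mul_apply, LinearEquiv.mul_apply, hg, hh, mul_assoc]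
  inv_mem' := by
    rintro g ⟨μ, hμ, hg⟩
    refine ⟨μ⁻¹, inv_ne_zero hμ, fun x y => ?_⟩
    obtain ⟨x, rfl⟩ := g.surjective x
    obtain ⟨y, rfl⟩ := g.surjective y
    rw [hg, inv_mul_cancel_left₀ hμ]
    exact congrArg₂ (B · ·) (g.symm_apply_apply x) (g.symm_apply_apply y)

theorem mem_similitudes_of_isometry {g : V ≃ₗ[F] V} (hg : ∀ x y, B (g x) (g y) = B x y) :
    g ∈ similitudes B :=
  ⟨1, one_ne_zero, fun x y => by rw [hg, one_mul]⟩

theorem exists_nonsquare_forall_exists_sq_mul_eq [NeZero (2 : F)] [Finite F] :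
    ∃ ν : F, ∀ x : F, x ≠ 0 → ∃ a : Fˣ, a ^ 2 * x = 1 ∨ a ^ 2 * x = ν := by
  classical
  have := Fintype.ofFinite F
  obtain ⟨ν, hν⟩ :=
    FiniteField.exists_nonsquare (ringChar_ne_of_natCast_ne_zero (NeZero.ne (2 : F)))
  have hν0 : ν ≠ 0 := fun h => hν (h ▸ IsSquare.zero)
  refine ⟨ν, fun x hx => ?_⟩
  by_cases hxsq : IsSquare x
  · obtain ⟨r, rfl⟩ := hxsq
    have hr : r ≠ 0 := left_ne_zero_of_mul hx
    exact ⟨(Units.mk0 r hr)⁻¹, Or.inl (by rw [Units.val_inv_eq_inv_val, Units.val_mk0]; field_simp)⟩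
  · obtain ⟨r, hr⟩ : IsSquare (x * ν) := by
      rw [← quadraticChar_one_iff_isSquare (mul_ne_zero hx hν0), map_mul,
        quadraticChar_neg_one_iff_not_isSquare.mpr hxsq,
        quadraticChar_neg_one_iff_not_isSquare.mpr hν, neg_mul_neg, one_mul]
    have hr0 : r ≠ 0 := left_ne_zero_of_mul (hr ▸ mul_ne_zero hx hν0)
    refine ⟨Units.mk0 (ν / r) (div_ne_zero hν0 hr0), Or.inr ?_⟩
    rw [Units.val_mk0]
    field_simp
    rw [mul_comm, hr, sq]

theorem exists_orthogonal_basis_ncard_range_le_two [NeZero (2 : F)] [Finite F]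
    [FiniteDimensional F V] (hB : B.IsSymm) (hnd : B.SeparatingLeft) :
    ∃ b : Basis (Fin (finrank F V)) F V, (∀ i j, i ≠ j → B (b i) (b j) = 0) ∧
      (∀ i, B (b i) (b i) ≠ 0) ∧ (Set.range fun i => B (b i) (b i)).ncard ≤ 2 := by
  have : Invertible (2 : F) := invertibleOfNonzero two_ne_zero
  obtain ⟨e, he⟩ := LinearMap.BilinForm.exists_orthogonal_basis ⟨hB.eq⟩
  have hne := he.not_isOrtho_basis_self_of_separatingLeft hnd
  obtain ⟨ν, hsq⟩ := exists_nonsquare_forall_exists_sq_mul_eq (F := F)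
  choose a ha using fun i => hsq (B (e i) (e i)) (hne i)
  have hb (i j) : B (e.unitsSMul a i) (e.unitsSMul a j) = a j * (a i * B (e i) (e j)) := by
    simp [Basis.unitsSMul_apply, Units.smul_def]
  refine ⟨e.unitsSMul a, fun i j hij => ?_, fun i => ?_, ?_⟩
  · have : B (e i) (e j) = 0 := he hij
    rw [hb, this, mul_zero, mul_zero]
  · rw [hb]
    exact mul_ne_zero (a i).ne_zero (mul_ne_zero (a i).ne_zero (hne i))
  · refine (Set.ncard_le_ncard (t := {1, ν}) ?_).trans (Set.ncard_insert_le _ _ |>.trans (by simp))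
    rintro _ ⟨i, rfl⟩
    simpa only [hb, ← mul_assoc, ← sq, Set.mem_insert_iff, Set.mem_singleton_iff] using ha i

theorem exists_basis_forall_isRoot [NeZero (2 : F)] [Finite F] [FiniteDimensional F V]
    (hB : B.IsSymm) (hnd : B.SeparatingLeft) (h2 : ¬ 2 ∣ H.relIndex (similitudes B)) :
    ∃ (b : Basis (Fin (finrank F V)) F V) (m : Fin (finrank F V) → Fin (finrank F V)),
      (∀ i j, i ≠ j → B (b i) (b j) = 0) ∧ (∀ i, IsRoot B H (b i)) ∧
      (∀ i, IsRoot B H (b i + b (m i))) ∧ {j | m j = j}.ncard ≤ 2 := by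
  obtain ⟨b, ho, hn, hcard⟩ := exists_orthogonal_basis_ncard_range_le_two hB hnd
  obtain ⟨m, hm, hc, hfix⟩ := exists_involutive_forall_apply_eq fun i => B (b i) (b i)
  have hK : IsPGroup 2 (signedPermutations b hm ⊓ similitudes B : Subgroup (V ≃ₗ[F] V)) :=
    (isPGroup_signedPermutations b hm).to_le inf_le_left
  obtain ⟨a, ha, haK⟩ := exists_forall_conj_mem_of_isPGroup inf_le_right hK h2
  obtain ⟨μ, hμ, hsim⟩ := (similitudes B).inv_mem ha
  have hroot (u : V) (hu : B u u ≠ 0) (hr : reflection B u ∈ signedPermutations b hm) :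
      IsRoot B H (a⁻¹ u) := by
    refine ⟨by rw [hsim]; exact mul_ne_zero hμ hu, ?_⟩
    rw [← conj_reflection hμ hsim, inv_inv]
    exact haK _ ⟨hr, mem_similitudes_of_isometry (reflection_isometry hB u)⟩
  refine ⟨b.map a⁻¹, m, fun i j hij => ?_, fun i => ?_, fun i => ?_, hfix.trans hcard⟩
  · rw [Basis.map_apply, Basis.map_apply, hsim, ho i j hij, mul_zero]
  · exact hroot _ (hn i) (reflection_mem_signedPermutations hm ho hn i)
  · rw [Basis.map_apply, Basis.map_apply, ← map_add]
    exact hroot _ (apply_add_self_ne_zero ho hn hc i)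
      (reflection_add_mem_signedPermutations hm ho hn hc i)

theorem exists_isRoot_and_isIsometricInvolution [NeZero (2 : F)] [NeZero (3 : F)] [Finite F]
    [FiniteDimensional F V] (p : ℕ) [Fact p.Prime] [CharP F p] (hV : 7 ≤ finrank F V)
    (hB : B.IsSymm) (hnd : B.SeparatingLeft) [Group.IsSolvable H] (hH : H ≤ similitudes B)
    (h2 : ¬ 2 ∣ H.relIndex (similitudes B)) (hp : ∀ g ∈ H, g ^ p = 1 → g = 1) :
    (∃ u, IsRoot B H u) ∧ ∃ x y z : V ≃ₗ[F] V, IsIsometricInvolution B x ∧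
      IsIsometricInvolution B y ∧ IsIsometricInvolution B z ∧
      ∀ g ∈ H, x * g * x⁻¹ ∈ H → y * g * y⁻¹ ∈ H → z * g * z⁻¹ ∈ H →
        ∃ c : F, ∀ v, g v = c • v := by
  obtain ⟨b, m, ho, hroot, hroot', hfix⟩ := exists_basis_forall_isRoot hB hnd h2
  have hp2 : p ≠ 2 := by
    rintro rfl
    exact two_ne_zero (CharP.cast_eq_zero F 2)
  have hb : IsRootBasis B H b :=
    { isSymm := hB
      isRoot := hroot
      orthogonal := ho
      similitude := fun g hg => hH hg
      eq_zero_of_isRoot_add := fun u e he hue hu hue' =>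
        eq_zero_of_reflection_add_isotropic_mem p hp2 hB hp hu.1 he hue hu.2 hue'.2 }
  exact ⟨⟨_, hroot ⟨0, by omega⟩⟩,
    hb.exists_isIsometricInvolution (by simpa using hV) m hfix hroot'⟩

end RootBasis

section RowVectors

variable {F : Type*} [Field F] {n : ℕ} {M : GL (Fin n) F} {Q : QuadraticForm F (Fin n → F)}

/-- The action of matrices on row vectors, `M` acting as `v ↦ v ᵥ* M⁻¹` so that it becomes an
action on the left. -/
noncomputable def rowEquiv (n : ℕ) (F : Type*) [Field F] :
    GL (Fin n) F ≃* ((Fin n → F) ≃ₗ[F] (Fin n → F)) :=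
  let transpose : GL (Fin n) F ≃* (GL (Fin n) F)ᵐᵒᵖ :=
    (Units.mapEquiv (transposeRingEquiv (Fin n) F).toMulEquiv).trans Units.opEquiv
  ((MulEquiv.inv' (GL (Fin n) F)).trans transpose.symm).trans <|
    GeneralLinearGroup.toLin.trans (LinearMap.GeneralLinearGroup.generalLinearEquiv F (Fin n → F))

theorem toLinearMap_rowEquiv (M : GL (Fin n) F) :
    (rowEquiv n F M : (Fin n → F) →ₗ[F] (Fin n → F)) =
      toLin' (M⁻¹ : Matrix (Fin n) (Fin n) F)ᵀ := by
  rw [← coe_units_inv]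
  rfl

theorem rowEquiv_inv_apply (M : GL (Fin n) F) (v : Fin n → F) : rowEquiv n F M⁻¹ v = v ᵥ* M := by
  rw [← LinearEquiv.coe_coe, toLinearMap_rowEquiv, ← coe_units_inv, inv_inv, toLin'_apply,
    mulVec_transpose]

theorem det_rowEquiv (M : GL (Fin n) F) :
    LinearMap.det (rowEquiv n F M : (Fin n → F) →ₗ[F] (Fin n → F)) =
      (det (M : Matrix (Fin n) (Fin n) F))⁻¹ := by
  rw [toLinearMap_rowEquiv, LinearMap.det_toLin', det_transpose, det_nonsing_inv,
    Ring.inverse_eq_inv']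

theorem det_reflection {V : Type*} [AddCommGroup V] [Module F V] [FiniteDimensional F V]
    {B : LinearMap.BilinForm F V} {u : V} (hu : B u u ≠ 0) :
    LinearMap.det (reflection B u : V →ₗ[F] V) = -1 := by
  have h : (reflection B u : V →ₗ[F] V) = LinearMap.transvection (-((2 / B u u) • B u)) u := by
    ext x
    simp [reflection_apply, LinearMap.transvection.apply, sub_eq_add_neg]
  rw [h, LinearMap.transvection.det, LinearMap.neg_apply, LinearMap.smul_apply, smul_eq_mul,
    div_mul_cancel₀ _ hu]
  norm_num

theorem rowEquiv_mem_similitudes_polarBilin_iff [NeZero (2 : F)] :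
    rowEquiv n F M ∈ similitudes Q.polarBilin ↔ M ∈ qSimilitudeGroup Q := by
  rw [← inv_mem_iff, ← map_inv]
  constructor
  · rintro ⟨c, hc0, hc⟩
    refine ⟨Units.mk0 c hc0, fun v => mul_left_cancel₀ (two_ne_zero (α := F)) ?_⟩
    have hself := hc v v
    simp only [QuadraticMap.polarBilin_apply_apply, QuadraticMap.polar_self, nsmul_eq_mul,
      Nat.cast_ofNat, rowEquiv_inv_apply] at hself
    rw [hself, Units.val_mk0, mul_left_comm]
  · rintro ⟨c, hc⟩
    refine ⟨c, c.ne_zero, fun v w => ?_⟩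
    simp only [QuadraticMap.polarBilin_apply_apply, QuadraticMap.polar, rowEquiv_inv_apply,
      ← add_vecMul, hc, mul_sub]

theorem map_rowEquiv_qSimilitudeGroup [NeZero (2 : F)] (Q : QuadraticForm F (Fin n → F)) :
    (qSimilitudeGroup Q).map (rowEquiv n F).toMonoidHom = similitudes Q.polarBilin := by
  ext g
  obtain ⟨M, rfl⟩ := (rowEquiv n F).surjective g
  exact (Subgroup.mem_map_equiv.trans (by simp)).trans rowEquiv_mem_similitudes_polarBilin_iff.symm

theorem mem_conjBy_iff {G : Type*} [Group G] {H : Subgroup G} {x g : G} :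
    g ∈ conjBy H x ↔ x * g * x⁻¹ ∈ H :=
  Subgroup.mem_map_equiv.trans (by simp)

theorem mem_mul_inf_SLsub {H A : Subgroup (GL (Fin n) F)} {R x : GL (Fin n) F} (hR : R ∈ H)
    (hRA : R ∈ A) (hdet : det (R : Matrix (Fin n) (Fin n) F) = -1) (hRR : R * R = 1) (hx : x ∈ A)
    (hxx : x * x = 1) :
    x ∈ (H : Set (GL (Fin n) F)) * ((A ⊓ SLsub n F : Subgroup (GL (Fin n) F)) : Set _) := by
  have hsq : det (x : Matrix (Fin n) (Fin n) F) * det (x : Matrix (Fin n) (Fin n) F) = 1 := by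
    rw [← det_mul, ← Units.val_mul, hxx, Units.val_one, det_one]
  rcases mul_self_eq_one_iff.mp hsq with hone | hneg
  · exact ⟨1, H.one_mem, x, ⟨hx, hone⟩, one_mul x⟩
  · refine ⟨R, hR, R * x, ⟨A.mul_mem hRA hx, ?_⟩, ?_⟩
    · change det ((R * x : GL (Fin n) F) : Matrix (Fin n) (Fin n) F) = 1
      rw [Units.val_mul, det_mul, hdet, hneg, neg_mul_neg, one_mul]
    · change R * (R * x) = x
      rw [← mul_assoc, hRR, one_mul]

theorem exists_eq_smul_one_of_rowEquiv_inv {g : GL (Fin n) F}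
    (h : ∃ c : F, ∀ v, rowEquiv n F g⁻¹ v = c • v) :
    ∃ c : F, (g : Matrix (Fin n) (Fin n) F) = c • (1 : Matrix (Fin n) (Fin n) F) := by
  obtain ⟨c, hc⟩ := h
  refine ⟨c, Matrix.ext_iff_vecMul.mpr fun v => ?_⟩
  rw [← rowEquiv_inv_apply, hc, vecMul_smul, vecMul_one]

end RowVectors

section MatrixGroup

variable {F : Type*} [Field F] {n : ℕ} {Q : QuadraticForm F (Fin n → F)}
variable {H : Subgroup (GL (Fin n) F)}

theorem natCast_ne_zero_of_prime_ne {p ℓ : ℕ} [CharP F p] (hp : p.Prime) (hℓ : ℓ.Prime)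
    (h : p ≠ ℓ) : (ℓ : F) ≠ 0 := by
  rwa [Ne, CharP.cast_eq_zero_iff F p, Nat.prime_dvd_prime_iff_eq hp hℓ]

theorem eq_one_of_pow_prime_eq_one {G : Type*} [Group G] {H : Subgroup G} {p : ℕ} (hp : p.Prime)
    (hH : ¬ p ∣ Nat.card H) {g : G} (hg : g ∈ H) (h : g ^ p = 1) : g = 1 := by
  have := Fact.mk hp
  by_contra hne
  refine hH (orderOf_eq_prime h hne ▸ ?_)
  exact Subgroup.orderOf_mk g hg ▸ orderOf_dvd_natCard (⟨g, hg⟩ : H)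

theorem relIndex_map_rowEquiv [NeZero (2 : F)] (Q : QuadraticForm F (Fin n → F)) :
    (H.map (rowEquiv n F).toMonoidHom).relIndex (similitudes Q.polarBilin) =
      H.relIndex (qSimilitudeGroup Q) := by
  rw [← map_rowEquiv_qSimilitudeGroup]
  exact Subgroup.relIndex_map_map_of_injective _ _ (rowEquiv n F).injective

theorem exists_det_eq_neg_one_of_isRoot {u : Fin n → F}
    (hu : IsRoot Q.polarBilin (H.map (rowEquiv n F).toMonoidHom) u) :
    ∃ R ∈ H, det (R : Matrix (Fin n) (Fin n) F) = -1 ∧ R * R = 1 := by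
  obtain ⟨hu0, R, hR, hRu⟩ := hu
  replace hRu : rowEquiv n F R = reflection Q.polarBilin u := hRu
  refine ⟨R, hR, ?_, (rowEquiv n F).injective ?_⟩
  · rw [← _root_.inv_inj, ← det_rowEquiv, hRu, det_reflection hu0, inv_neg_one]
  · rw [map_mul, hRu, reflection_mul_self, map_one]

theorem mem_mul_inf_SLsub_of_isIsometricInvolution [NeZero (2 : F)] {R M : GL (Fin n) F}
    (hH : H ≤ qSimilitudeGroup Q) (hR : R ∈ H) (hdet : det (R : Matrix (Fin n) (Fin n) F) = -1)
    (hRR : R * R = 1) (hM : IsIsometricInvolution Q.polarBilin (rowEquiv n F M)) :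
    M ∈ (H : Set (GL (Fin n) F)) *
      ((qSimilitudeGroup Q ⊓ SLsub n F : Subgroup (GL (Fin n) F)) : Set (GL (Fin n) F)) := by
  refine mem_mul_inf_SLsub hR (hH hR) hdet hRR ?_ ((rowEquiv n F).injective ?_)
  · exact rowEquiv_mem_similitudes_polarBilin_iff.mp (mem_similitudes_of_isometry hM.isometry)
  · rw [map_mul, hM.mul_self, map_one]

theorem exists_isRoot_and_forall_mem_conjBy [Finite F] [NeZero (2 : F)] [NeZero (3 : F)] (p : ℕ)
    [Fact p.Prime] [CharP F p] (hn : 7 ≤ n) (hnd : Q.polarBilin.SeparatingLeft)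
    [Group.IsSolvable H] (hH : H ≤ qSimilitudeGroup Q)
    (h2 : ¬ 2 ∣ H.relIndex (qSimilitudeGroup Q)) (hp : ¬ p ∣ Nat.card H) :
    (∃ u, IsRoot Q.polarBilin (H.map (rowEquiv n F).toMonoidHom) u) ∧ ∃ x y z : GL (Fin n) F,
      IsIsometricInvolution Q.polarBilin (rowEquiv n F x) ∧
      IsIsometricInvolution Q.polarBilin (rowEquiv n F y) ∧
      IsIsometricInvolution Q.polarBilin (rowEquiv n F z) ∧
      ∀ g ∈ H ⊓ conjBy H x ⊓ conjBy H y ⊓ conjBy H z,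
        ∃ c : F, (g : Matrix (Fin n) (Fin n) F) = c • (1 : Matrix (Fin n) (Fin n) F) := by
  have hmem (g : GL (Fin n) F) : rowEquiv n F g ∈ H.map (rowEquiv n F).toMonoidHom ↔ g ∈ H :=
    Subgroup.mem_map_iff_mem (rowEquiv n F).injective
  have hsymm : LinearMap.BilinForm.IsSymm Q.polarBilin := ⟨fun v w => QuadraticMap.polar_comm Q v w⟩
  have hsolv : Group.IsSolvable (H.map (rowEquiv n F).toMonoidHom) :=
    Group.isSolvable_of_surjective ((rowEquiv n F).toMonoidHom.subgroupMap_surjective H)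
  have hp' : ∀ g ∈ H.map (rowEquiv n F).toMonoidHom, g ^ p = 1 → g = 1 := by
    rintro _ ⟨g, hg, rfl⟩ hgp
    have hg1 : g ^ p = 1 := (rowEquiv n F).injective (by rw [map_pow, map_one]; exact hgp)
    rw [eq_one_of_pow_prime_eq_one Fact.out hp hg hg1, map_one]
  obtain ⟨hroot, x, y, z, hx, hy, hz, hscalar⟩ :=
    exists_isRoot_and_isIsometricInvolution p (by rwa [finrank_fin_fun]) hsymm hnd
      (map_rowEquiv_qSimilitudeGroup Q ▸ Subgroup.map_mono hH)
      ((relIndex_map_rowEquiv Q).symm ▸ h2) hp'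
  obtain ⟨x, rfl⟩ := (rowEquiv n F).surjective x
  obtain ⟨y, rfl⟩ := (rowEquiv n F).surjective y
  obtain ⟨z, rfl⟩ := (rowEquiv n F).surjective z
  refine ⟨hroot, x, y, z, hx, hy, hz, fun g hg => exists_eq_smul_one_of_rowEquiv_inv ?_⟩
  obtain ⟨⟨⟨hgH, hgx⟩, hgy⟩, hgz⟩ := inv_mem hg
  refine hscalar _ ((hmem _).mpr hgH) ?_ ?_ ?_ <;>
    rw [← map_inv, ← map_mul, ← map_mul, hmem, ← mem_conjBy_iff] <;> assumption

end MatrixGroup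

end SimilitudeBase

open SimilitudeBase in
theorem stmt12_general {F : Type*} [Field F] [Finite F] (p : ℕ) [CharP F p] (hp2 : p ≠ 2)
    (hp3 : p ≠ 3) {n : ℕ} (hn : 7 ≤ n) (Q : QuadraticForm F (Fin n → F))
    (hnd : ∀ v : Fin n → F, (∀ w : Fin n → F, QuadraticMap.polar Q v w = 0) → v = 0)
    (H : Subgroup (GL (Fin n) F)) (hH : H ≤ qSimilitudeGroup Q)
    (hH2 : ¬ 2 ∣ H.relIndex (qSimilitudeGroup Q)) (hHp : ¬ p ∣ Nat.card H)
    (hsolv : Group.IsSolvable H) :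
    ∃ x y z : GL (Fin n) F,
      x ∈ (H : Set (GL (Fin n) F)) * ((qSimilitudeGroup Q ⊓ SLsub n F : Subgroup _) : Set _) ∧
      y ∈ (H : Set (GL (Fin n) F)) * ((qSimilitudeGroup Q ⊓ SLsub n F : Subgroup _) : Set _) ∧
      z ∈ (H : Set (GL (Fin n) F)) * ((qSimilitudeGroup Q ⊓ SLsub n F : Subgroup _) : Set _) ∧
      ∀ g ∈ H ⊓ conjBy H x ⊓ conjBy H y ⊓ conjBy H z,
        ∃ c : F, (g : Matrix (Fin n) (Fin n) F) = c • (1 : Matrix (Fin n) (Fin n) F) := by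
  have hp : p.Prime := CharP.char_is_prime F p
  have := Fact.mk hp
  have : NeZero (2 : F) := ⟨natCast_ne_zero_of_prime_ne hp Nat.prime_two hp2⟩
  have : NeZero (3 : F) := ⟨natCast_ne_zero_of_prime_ne hp Nat.prime_three hp3⟩
  obtain ⟨⟨u, hu⟩, x, y, z, hx, hy, hz, hscalar⟩ :=
    exists_isRoot_and_forall_mem_conjBy p hn hnd hH hH2 hHp
  obtain ⟨R, hR, hdet, hRR⟩ := exists_det_eq_neg_one_of_isRoot hu
  have hmem {M : GL (Fin n) F} := mem_mul_inf_SLsub_of_isIsometricInvolution (M := M) hH hR hdet hRR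
  exact ⟨x, y, z, hmem hx, hmem hy, hmem hz, hscalar⟩

theorem stmt12 (p f q n : ℕ) (hp : p.Prime) (hpodd : p ≠ 2) (hf : 1 ≤ f) (hq : q = p ^ f)
    (F : Type) [Field F] [Fintype F] (hcard : Fintype.card F = q)
    (hn : 7 ≤ n)
    (Q : QuadraticForm F (Fin n → F))
    (hnd : ∀ v : Fin n → F, (∀ w : Fin n → F, QuadraticMap.polar (⇑Q) v w = 0) → v = 0)
    (hnonsolv : ¬ IsSolvable ↥(qSimilitudeGroup (⇑Q : (Fin n → F) → F)))
    (π : Set ℕ) (hπ : ∀ r ∈ π, r.Prime) (h2pi : 2 ∈ π) (h3pi : 3 ∈ π) (hppi : p ∉ π)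
    (H : Subgroup (GL (Fin n) F))
    (hH : IsHallSubgroupIn π (qSimilitudeGroup (⇑Q : (Fin n → F) → F)) H)
    (hsolv : IsSolvable ↥H)
    :
    ∃ x y z : GL (Fin n) F,
      x ∈ (H : Set (GL (Fin n) F)) * ((qSimilitudeGroup (⇑Q : (Fin n → F) → F) ⊓ SLsub n F : Subgroup (GL (Fin n) F)) : Set (GL (Fin n) F)) ∧
      y ∈ (H : Set (GL (Fin n) F)) * ((qSimilitudeGroup (⇑Q : (Fin n → F) → F) ⊓ SLsub n F : Subgroup (GL (Fin n) F)) : Set (GL (Fin n) F)) ∧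
      z ∈ (H : Set (GL (Fin n) F)) * ((qSimilitudeGroup (⇑Q : (Fin n → F) → F) ⊓ SLsub n F : Subgroup (GL (Fin n) F)) : Set (GL (Fin n) F)) ∧
    ∀ g ∈ H ⊓ conjBy H x ⊓ conjBy H y ⊓ conjBy H z,
      ∃ c : F, (g : Matrix (Fin n) (Fin n) F) = c • (1 : Matrix (Fin n) (Fin n) F) := by
  subst hq
  have := Fact.mk hp
  have := charP_of_card_eq_prime_pow hcard
  exact stmt12_general p hpodd (by rintro rfl; exact hppi h3pi) hn Q hnd H hH.1
    (hH.2.2 2 h2pi) (fun h => hppi (hH.2.1 p hp h)) hsolv
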